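/- arXiv:q-alg/9605002 — 5 statements merged into one kernel-verified Lean document; each statement's English description precedes it below -/
import Mathlib

section
/- There exists exactly one sequence of functions (G_n)_{n≥0}, each G_n : (0,∞) → (0,∞), such that: (0) G_0(z) = z for all z > 0; and for every n ≥ 1: (1) G_n(z+1) = G_{n−1}(z)·G_n(z) for all z > 0; (2) G_n(1) = 1; (3) log G_n is infinitely differentiable on (0,∞) and the (n+1)-st derivative of z ↦ log G_n(z+1) is ≥ 0 for all z ≥ 0. (This hierarchy is the Vignéras multiple gamma functions; G_1 = Γ is the gamma function and G_2 = G is the Barnes G-function.) -/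
open scoped BigOperators

/-- The defining conditions for the Vignéras hierarchy of multiple gamma functions:
a sequence of functions `G n : (0,∞) → (0,∞)` with `G 0 z = z`, satisfying the recursion
`G n (z+1) = G (n-1) z * G n z`, normalization `G n 1 = 1`, and the generalized
Bohr–Mollerup condition: `log (G n)` is infinitely differentiable on `(0,∞)` and the
`(n+1)`-st derivative of `z ↦ log (G n (z+1))` is nonnegative for `z ≥ 0`. -/
def VignerasHierarchy (G : ℕ → ℝ → ℝ) : Prop :=
  (∀ n : ℕ, ∀ z : ℝ, 0 < z → 0 < G n z) ∧
  (∀ z : ℝ, 0 < z → G 0 z = z) ∧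
  (∀ n : ℕ, 1 ≤ n →
    (∀ z : ℝ, 0 < z → G n (z + 1) = G (n - 1) z * G n z) ∧
    G n 1 = 1 ∧
    ContDiffOn ℝ (⊤ : ℕ∞) (fun z => Real.log (G n z)) (Set.Ioi (0:ℝ)) ∧
    (∀ z : ℝ, 0 ≤ z → 0 ≤ iteratedDeriv (n + 1) (fun z => Real.log (G n (z + 1))) z))

/-!
Taking logarithms turns the hierarchy into a tower of difference equations `Δ Lₙ₊₁ = Lₙ` on
`(0, ∞)` with `L₀ = log`. The induction hypothesis that makes it solvable is that `h = Lₙ⁽ⁿ⁺¹⁾` is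
completely monotone and vanishes at infinity: comparing with a telescoping sum, the series
`S z = ∑ₖ -h' (z + k)` converges, has the same two properties, and satisfies `Δ S = h'`.
Integrating `S` back `n + 2` times, with the constants of integration chosen to keep the difference
equation, gives `Lₙ₊₁`; its `(n + 2)`-nd derivative is `S` itself because both vanish at infinity.

For uniqueness, two solutions differ by a function of period one, and the derivative of order
`n + 2` of the difference is nonnegative, as one sees by moving to infinity, where that of `Lₙ₊₁`
vanishes. A periodic function with a nonnegative derivative of some positive order is constant.
-/

open Set Filter Topology fwdDiff
open scoped ContDiff

section IteratedDeriv

variable {𝕜 E : Type*} [NontriviallyNormedField 𝕜] [NormedAddCommGroup E] [NormedSpace 𝕜 E]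

theorem contDiffAt_nat_of_contDiffOn_infty {f : 𝕜 → E} {s : Set 𝕜} (hs : IsOpen s)
    (hf : ContDiffOn 𝕜 ∞ f s) (j : ℕ) {z : 𝕜} (hz : z ∈ s) : ContDiffAt 𝕜 j f z :=
  (hf.contDiffAt (hs.mem_nhds hz)).of_le (mod_cast le_top)

theorem contDiffOn_infty_iteratedDeriv_of_isOpen {f : 𝕜 → E} {s : Set 𝕜} (hs : IsOpen s)
    (hf : ContDiffOn 𝕜 ∞ f s) (j : ℕ) : ContDiffOn 𝕜 ∞ (iteratedDeriv j f) s := by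
  induction j with
  | zero => simpa using hf
  | succ j ih =>
    rw [iteratedDeriv_succ]
    exact ((contDiffOn_infty_iff_deriv_of_isOpen hs).1 ih).2

theorem iteratedDeriv_fwdDiff {f : 𝕜 → E} {h z : 𝕜} {j : ℕ} (hz : ContDiffAt 𝕜 j f z)
    (hzh : ContDiffAt 𝕜 j f (z + h)) :
    iteratedDeriv j (Δ_[h] f) z = Δ_[h] (iteratedDeriv j f) z := by
  have hshift : ContDiffAt 𝕜 j (fun x ↦ f (x + h)) z :=
    hzh.comp z (contDiffAt_id.add contDiffAt_const)
  exact (iteratedDeriv_fun_sub hshift hz).trans <| by rw [iteratedDeriv_comp_add_const, fwdDiff]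

end IteratedDeriv

section ForwardDifference

variable {f g F H : ℝ → ℝ}

theorem eqOn_fwdDiff_iteratedDeriv (hF : ContDiffOn ℝ ∞ F (Ioi 0))
    (h : EqOn (Δ_[1] F) f (Ioi 0)) (j : ℕ) :
    EqOn (Δ_[1] (iteratedDeriv j F)) (iteratedDeriv j f) (Ioi 0) := by
  have hF_at : ∀ z : ℝ, 0 < z → ContDiffAt ℝ j F z := fun _ hz ↦
    contDiffAt_nat_of_contDiffOn_infty isOpen_Ioi hF j hz
  intro z (hz : 0 < z)
  rw [← iteratedDeriv_fwdDiff (hF_at z hz) (hF_at (z + 1) (by linarith))]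
  exact h.iteratedDeriv_of_isOpen isOpen_Ioi j hz

theorem add_natCast_eq_of_fwdDiff_eq_zero (h : EqOn (Δ_[1] f) 0 (Ioi 0)) {z : ℝ} (hz : 0 < z)
    (k : ℕ) : f (z + k) = f z := by
  induction k with
  | zero => simp
  | succ k ih =>
    have hk : f (z + k + 1) = f (z + k) := sub_eq_zero.1 (h (show 0 < z + k by positivity))
    rw [← ih, ← hk, Nat.cast_succ, add_assoc]

theorem exists_deriv_eq_fwdDiff_one (hf : DifferentiableOn ℝ f (Ioi 0)) {z : ℝ} (hz : 0 < z) :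
    ∃ c ∈ Ioo z (z + 1), deriv f c = Δ_[1] f z := by
  have hsub : Icc z (z + 1) ⊆ Ioi 0 := fun x hx ↦ hz.trans_le hx.1
  obtain ⟨c, hc, hfc⟩ := exists_deriv_eq_slope f (lt_add_one z) (hf.continuousOn.mono hsub)
    (hf.mono (Ioo_subset_Icc_self.trans hsub))
  exact ⟨c, hc, by rw [hfc, fwdDiff, add_sub_cancel_left, div_one]⟩

theorem tendsto_fwdDiff_one_atTop {l : ℝ} (hf : DifferentiableOn ℝ f (Ioi 0))
    (hl : Tendsto (deriv f) atTop (𝓝 l)) : Tendsto (Δ_[1] f) atTop (𝓝 l) := by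
  have hmean : ∀ z : ℝ, 0 < z → ∃ c ∈ Ioo z (z + 1), deriv f c = Δ_[1] f z := fun _ hz ↦
    exists_deriv_eq_fwdDiff_one hf hz
  choose! c hzc hfc using hmean
  have hc : Tendsto c atTop atTop := tendsto_atTop_mono' atTop
    ((eventually_gt_atTop 0).mono fun z hz ↦ (hzc z hz).1.le) tendsto_id
  exact (hl.comp hc).congr' ((eventually_gt_atTop 0).mono hfc)

theorem exists_fwdDiff_eqOn_of_eqOn_deriv (hf : DifferentiableOn ℝ f (Ioi 0))
    (hg : ContDiffOn ℝ ∞ g (Ioi 0)) (h : EqOn (Δ_[1] g) (deriv f) (Ioi 0)) :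
    ∃ F, ContDiffOn ℝ ∞ F (Ioi 0) ∧ F 1 = 0 ∧ EqOn (Δ_[1] F) f (Ioi 0) ∧
      ∃ c, EqOn (deriv F) (fun z ↦ g z - c) (Ioi 0) := by
  have hg_int : ∀ z : ℝ, 0 < z → IntervalIntegrable g MeasureTheory.volume 1 z := fun z hz ↦
    (hg.continuousOn.mono fun x hx ↦ (lt_min one_pos hz).trans_le hx.1).intervalIntegrable
  -- the constant for which `Δ F = f` holds at `z = 1`
  set c : ℝ := (∫ t in (1 : ℝ)..1 + 1, g t) - f 1
  set F : ℝ → ℝ := fun z ↦ (∫ t in (1 : ℝ)..z, g t) - c * (z - 1)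
  have hF : ∀ z : ℝ, 0 < z → HasDerivAt F (g z - c) z := fun z hz ↦ by
    have hint : HasDerivAt (fun z ↦ ∫ t in (1 : ℝ)..z, g t) (g z) z :=
      intervalIntegral.integral_hasDerivAt_right (hg_int z hz)
        (hg.continuousOn.stronglyMeasurableAtFilter isOpen_Ioi z hz)
        (hg.continuousOn.continuousAt (Ioi_mem_nhds hz))
    exact (hint.sub (((hasDerivAt_id z).sub_const 1).const_mul c)).congr_deriv (by rw [mul_one])
  have hF_deriv : EqOn (deriv F) (fun z ↦ g z - c) (Ioi 0) := fun z hz ↦ (hF z hz).deriv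
  have hΔF : ∀ z : ℝ, 0 < z → HasDerivAt (Δ_[1] F) (Δ_[1] g z) z := fun z hz ↦
    (((hF (z + 1) (by linarith)).comp_add_const z 1).sub (hF z hz)).congr_deriv
      (by rw [fwdDiff]; ring)
  refine ⟨F, ?_, by simp [F], ?_, c, hF_deriv⟩
  · rw [contDiffOn_infty_iff_deriv_of_isOpen isOpen_Ioi]
    exact ⟨fun z hz ↦ (hF z hz).differentiableAt.differentiableWithinAt,
      (hg.sub contDiffOn_const).congr hF_deriv⟩
  · exact isOpen_Ioi.eqOn_of_deriv_eq isPreconnected_Ioi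
      (fun z hz ↦ (hΔF z hz).differentiableAt.differentiableWithinAt) hf
      (fun z hz ↦ (hΔF z hz).deriv.trans (h hz)) (mem_Ioi.2 one_pos)
      (by simp [F, c, fwdDiff])

theorem exists_fwdDiff_eqOn_of_eqOn_iteratedDeriv (m : ℕ) (hf : ContDiffOn ℝ ∞ f (Ioi 0))
    (hg : ContDiffOn ℝ ∞ g (Ioi 0)) (h : EqOn (Δ_[1] g) (iteratedDeriv (m + 1) f) (Ioi 0)) :
    ∃ F, ContDiffOn ℝ ∞ F (Ioi 0) ∧ F 1 = 0 ∧ EqOn (Δ_[1] F) f (Ioi 0) ∧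
      ∃ c, EqOn (iteratedDeriv (m + 1) F) (fun z ↦ g z - c) (Ioi 0) := by
  induction m generalizing g with
  | zero =>
    simp only [zero_add, iteratedDeriv_one] at h ⊢
    exact exists_fwdDiff_eqOn_of_eqOn_deriv (hf.differentiableOn (by simp)) hg h
  | succ m ih =>
    rw [iteratedDeriv_succ] at h
    obtain ⟨G, hG, -, hΔG, c, hGc⟩ := exists_fwdDiff_eqOn_of_eqOn_deriv
      ((contDiffOn_infty_iteratedDeriv_of_isOpen isOpen_Ioi hf (m + 1)).differentiableOn
        (by simp)) hg h
    obtain ⟨F, hF, hF_one, hΔF, d, hFd⟩ := ih hG hΔG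
    refine ⟨F, hF, hF_one, hΔF, c, fun z hz ↦ ?_⟩
    rw [iteratedDeriv_succ, (hFd.eventuallyEq_of_mem (Ioi_mem_nhds hz)).deriv_eq, deriv_sub_const,
      hGc hz]

theorem eq_of_monotoneOn_of_fwdDiff_eq_zero (hf : MonotoneOn f (Ioi 0))
    (hΔ : EqOn (Δ_[1] f) 0 (Ioi 0)) {x y : ℝ} (hx : 0 < x) (hy : 0 < y) : f x = f y := by
  have le_of_pos : ∀ {x y : ℝ}, 0 < x → 0 < y → f x ≤ f y := fun {x y} hx hy ↦ by
    obtain ⟨k, hk⟩ := exists_nat_ge x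
    rw [← add_natCast_eq_of_fwdDiff_eq_zero hΔ hy k]
    exact hf hx (show 0 < y + k by positivity) (by linarith)
  exact (le_of_pos hx hy).antisymm (le_of_pos hy hx)

theorem deriv_eq_zero_of_fwdDiff_eq_zero_of_iteratedDeriv_nonneg (m : ℕ)
    (hf : ContDiffOn ℝ ∞ f (Ioi 0)) (hΔ : EqOn (Δ_[1] f) 0 (Ioi 0))
    (hnonneg : ∀ z, 0 < z → 0 ≤ iteratedDeriv (m + 1) f z) :
    EqOn (deriv f) 0 (Ioi 0) := by
  induction m generalizing f with
  | zero =>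
    have hmono : MonotoneOn f (Ioi 0) := monotoneOn_of_deriv_nonneg (convex_Ioi 0) hf.continuousOn
      ((hf.differentiableOn (by simp)).mono interior_subset)
      (fun z hz ↦ by simpa using hnonneg z (interior_subset hz))
    intro z hz
    have hconst : f =ᶠ[𝓝 z] fun _ ↦ f z := eventually_of_mem (Ioi_mem_nhds hz)
      fun x hx ↦ eq_of_monotoneOn_of_fwdDiff_eq_zero hmono hΔ hx hz
    rw [hconst.deriv_eq, deriv_const, Pi.zero_apply]
  | succ m ih =>
    obtain ⟨hdiff, hderiv⟩ := (contDiffOn_infty_iff_deriv_of_isOpen isOpen_Ioi).1 hf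
    have hΔderiv : EqOn (Δ_[1] (deriv f)) 0 (Ioi 0) := fun z hz ↦ by
      simpa using eqOn_fwdDiff_iteratedDeriv hf hΔ 1 hz
    have hderiv_two : EqOn (deriv (deriv f)) 0 (Ioi 0) :=
      ih hderiv hΔderiv fun z hz ↦ by simpa only [iteratedDeriv_succ'] using hnonneg z hz
    -- `deriv f` is constant, and its value is the limit of `Δ f = 0` at infinity
    intro z hz
    have hconst : deriv f =ᶠ[atTop] fun _ ↦ deriv f z := (eventually_gt_atTop 0).mono fun x hx ↦
      isOpen_Ioi.is_const_of_deriv_eq_zero isPreconnected_Ioi (hderiv.differentiableOn (by simp))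
        hderiv_two hx hz
    exact tendsto_nhds_unique
      (tendsto_fwdDiff_one_atTop hdiff (tendsto_const_nhds.congr' hconst.symm))
      (tendsto_const_nhds.congr' ((eventually_gt_atTop 0).mono fun x hx ↦ (hΔ hx).symm))

theorem eqOn_of_fwdDiff_eqOn (n : ℕ) (hF : ContDiffOn ℝ ∞ F (Ioi 0))
    (hF_lim : Tendsto (iteratedDeriv (n + 1) F) atTop (𝓝 0)) (hH : ContDiffOn ℝ ∞ H (Ioi 0))
    (hH_nonneg : ∀ᶠ z in atTop, 0 ≤ iteratedDeriv (n + 1) H z)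
    (hΔ : EqOn (Δ_[1] H) (Δ_[1] F) (Ioi 0)) (hone : H 1 = F 1) : EqOn H F (Ioi 0) := by
  have hd : ContDiffOn ℝ ∞ (H - F) (Ioi 0) := hH.sub hF
  have hΔd : EqOn (Δ_[1] (H - F)) 0 (Ioi 0) := fun z hz ↦ by
    have := hΔ hz
    simp only [fwdDiff, Pi.sub_apply, Pi.zero_apply] at this ⊢
    linarith
  have hΔd_deriv : EqOn (Δ_[1] (iteratedDeriv (n + 1) (H - F))) 0 (Ioi 0) := fun z hz ↦ by
    simpa using eqOn_fwdDiff_iteratedDeriv hd hΔd (n + 1) hz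
  have hd_nonneg : ∀ z, 0 < z → 0 ≤ iteratedDeriv (n + 1) (H - F) z := by
    intro z hz
    have hz_lim : Tendsto (fun k : ℕ ↦ z + k) atTop atTop :=
      tendsto_atTop_add_const_left atTop z tendsto_natCast_atTop_atTop
    have hlim : Tendsto (fun k : ℕ ↦ -iteratedDeriv (n + 1) F (z + k)) atTop (𝓝 0) := by
      simpa using (hF_lim.comp hz_lim).neg
    refine le_of_tendsto hlim ((hz_lim.eventually hH_nonneg).mono fun k hk ↦ ?_)
    have hzk : 0 < z + k := by positivity
    rw [← add_natCast_eq_of_fwdDiff_eq_zero hΔd_deriv hz k,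
      iteratedDeriv_sub (contDiffAt_nat_of_contDiffOn_infty isOpen_Ioi hH _ hzk)
        (contDiffAt_nat_of_contDiffOn_infty isOpen_Ioi hF _ hzk)]
    linarith
  intro z hz
  have hconst := isOpen_Ioi.is_const_of_deriv_eq_zero isPreconnected_Ioi
    (hd.differentiableOn (by simp))
    (deriv_eq_zero_of_fwdDiff_eq_zero_of_iteratedDeriv_nonneg n hd hΔd hd_nonneg)
    hz (mem_Ioi.2 one_pos)
  rwa [Pi.sub_apply, Pi.sub_apply, hone, sub_self, sub_eq_zero] at hconst

end ForwardDifference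

/-- Complete monotonicity on `(0, ∞)`: the function is smooth there and its successive derivatives
alternate in sign, starting with a nonnegative function. -/
structure IsCompletelyMonotone (f : ℝ → ℝ) : Prop where
  contDiffOn : ContDiffOn ℝ ∞ f (Ioi 0)
  iteratedDeriv_nonneg (j : ℕ) {z : ℝ} (hz : 0 < z) : 0 ≤ (-1) ^ j * iteratedDeriv j f z

/-- The sum `∑ₖ f (z + k)` over `k : ℕ`; it is the decaying solution `S` of `Δ_[1] S = -f`. It has
the junk value `0` where the series diverges. -/
noncomputable def shiftSum (f : ℝ → ℝ) (z : ℝ) : ℝ := ∑' k : ℕ, f (z + k)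

theorem fwdDiff_shiftSum {f : ℝ → ℝ} {z : ℝ} (hf : Summable fun k : ℕ ↦ f (z + k)) :
    Δ_[1] (shiftSum f) z = -f z := by
  have hshift : shiftSum f (z + 1) = ∑' k : ℕ, f (z + (k + 1 : ℕ)) :=
    tsum_congr fun k ↦ by rw [Nat.cast_succ, add_right_comm, add_assoc]
  have hsum : shiftSum f z = f z + shiftSum f (z + 1) := by
    rw [hshift, shiftSum, hf.tsum_eq_zero_add, Nat.cast_zero, add_zero]
  rw [fwdDiff, hsum]
  ring

namespace IsCompletelyMonotone

variable {f : ℝ → ℝ}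

theorem of_forall_exists_hasDerivAt_neg {P : (ℝ → ℝ) → Prop}
    (hP_nonneg : ∀ f, P f → ∀ z, 0 < z → 0 ≤ f z)
    (hP_deriv : ∀ f, P f → ∃ g, P g ∧ ∀ z, 0 < z → HasDerivAt f (-g z) z) (hf : P f) :
    IsCompletelyMonotone f where
  contDiffOn := by
    rw [contDiffOn_infty]
    intro m
    induction m generalizing f with
    | zero =>
      obtain ⟨g, -, hfg⟩ := hP_deriv f hf
      exact contDiffOn_zero.2 fun z hz ↦ (hfg z hz).continuousAt.continuousWithinAt
    | succ m ih =>
      obtain ⟨g, hg, hfg⟩ := hP_deriv f hf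
      rw [Nat.cast_succ, contDiffOn_succ_iff_deriv_of_isOpen isOpen_Ioi]
      exact ⟨fun z hz ↦ (hfg z hz).differentiableAt.differentiableWithinAt, by simp,
        (ih hg).neg.congr fun z hz ↦ (hfg z hz).deriv⟩
  iteratedDeriv_nonneg j := by
    induction j generalizing f with
    | zero => exact fun hz ↦ by simpa using hP_nonneg f hf _ hz
    | succ j ih =>
      obtain ⟨g, hg, hfg⟩ := hP_deriv f hf
      intro z hz
      have hderiv : EqOn (deriv f) (-g) (Ioi 0) := fun x hx ↦ (hfg x hx).deriv
      rw [iteratedDeriv_succ', hderiv.iteratedDeriv_of_isOpen isOpen_Ioi j hz, iteratedDeriv_neg,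
        pow_succ, mul_neg_one, neg_mul_neg]
      exact ih hg hz

protected theorem congr {g : ℝ → ℝ} (hg : IsCompletelyMonotone g) (h : EqOn f g (Ioi 0)) :
    IsCompletelyMonotone f where
  contDiffOn := hg.contDiffOn.congr h
  iteratedDeriv_nonneg j z hz := by
    rw [h.iteratedDeriv_of_isOpen isOpen_Ioi j hz]
    exact hg.iteratedDeriv_nonneg j hz

protected theorem inv : IsCompletelyMonotone (fun z ↦ z⁻¹) where
  contDiffOn := contDiffOn_inv ℝ |>.mono fun _ hz ↦ ne_of_gt hz
  iteratedDeriv_nonneg j z hz := by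
    rw [iteratedDeriv_eq_iterate, iter_deriv_inv, ← mul_assoc, ← mul_assoc, ← mul_pow]
    simp only [neg_mul_neg, one_mul, one_pow]
    positivity

theorem nonneg (hf : IsCompletelyMonotone f) {z : ℝ} (hz : 0 < z) : 0 ≤ f z := by
  simpa using hf.iteratedDeriv_nonneg 0 hz

theorem differentiableOn (hf : IsCompletelyMonotone f) : DifferentiableOn ℝ f (Ioi 0) :=
  hf.contDiffOn.differentiableOn (by simp)

theorem hasDerivAt (hf : IsCompletelyMonotone f) {z : ℝ} (hz : 0 < z) :
    HasDerivAt f (deriv f z) z :=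
  (hf.differentiableOn.differentiableAt (Ioi_mem_nhds hz)).hasDerivAt

theorem neg_deriv (hf : IsCompletelyMonotone f) : IsCompletelyMonotone (-deriv f) where
  contDiffOn := ((contDiffOn_infty_iff_deriv_of_isOpen isOpen_Ioi).1 hf.contDiffOn).2.neg
  iteratedDeriv_nonneg j z hz := by
    have := hf.iteratedDeriv_nonneg (j + 1) hz
    rwa [iteratedDeriv_succ', pow_succ, mul_neg_one, neg_mul_comm, ← iteratedDeriv_neg] at this

theorem antitoneOn (hf : IsCompletelyMonotone f) : AntitoneOn f (Ioi 0) :=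
  antitoneOn_of_deriv_nonpos (convex_Ioi 0) hf.contDiffOn.continuousOn
    (hf.differentiableOn.mono interior_subset)
    (fun _ hz ↦ neg_nonneg.1 (hf.neg_deriv.nonneg (interior_subset hz)))

theorem neg_deriv_add_one_le (hf : IsCompletelyMonotone f) {z : ℝ} (hz : 0 < z) :
    -deriv f (z + 1) ≤ f z - f (z + 1) := by
  obtain ⟨c, hc, hfc⟩ := exists_deriv_eq_fwdDiff_one hf.differentiableOn hz
  calc -deriv f (z + 1) ≤ -deriv f c :=
        hf.neg_deriv.antitoneOn (hz.trans hc.1) (hz.trans (lt_add_one z)) hc.2.le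
    _ = f z - f (z + 1) := by rw [hfc, fwdDiff, neg_sub]

theorem sum_neg_deriv_le (hf : IsCompletelyMonotone f) {z : ℝ} (hz : 0 < z) (n : ℕ) :
    ∑ k ∈ Finset.range n, -deriv f (z + 1 + k) ≤ f z :=
  calc ∑ k ∈ Finset.range n, -deriv f (z + 1 + k)
      ≤ ∑ k ∈ Finset.range n, (f (z + k) - f (z + (k + 1 : ℕ))) := by
        refine Finset.sum_le_sum fun k _ ↦ ?_
        simpa only [Nat.cast_succ, add_right_comm z 1, add_assoc z k] using
          hf.neg_deriv_add_one_le (show 0 < z + k by positivity)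
    _ = f z - f (z + n) := by
        rw [Finset.sum_range_sub' fun k : ℕ ↦ f (z + k), Nat.cast_zero, add_zero]
    _ ≤ f z := sub_le_self _ (hf.nonneg (by positivity))

theorem summable_neg_deriv (hf : IsCompletelyMonotone f) {z : ℝ} (hz : 0 < z) :
    Summable fun k : ℕ ↦ (-deriv f) (z + k) := by
  rw [← summable_nat_add_iff 1]
  refine (summable_of_sum_range_le (fun k ↦ hf.neg_deriv.nonneg (by positivity))
    (hf.sum_neg_deriv_le hz)).congr fun k ↦ ?_
  rw [Nat.cast_succ, add_right_comm, add_assoc]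

theorem shiftSum_nonneg (hf : IsCompletelyMonotone f) {z : ℝ} (hz : 0 < z) : 0 ≤ shiftSum f z :=
  tsum_nonneg fun k ↦ hf.nonneg (by positivity)

theorem shiftSum_neg_deriv_le (hf : IsCompletelyMonotone f) {z : ℝ} (hz : 0 < z) :
    shiftSum (-deriv f) (z + 1) ≤ f z :=
  Real.tsum_le_of_sum_range_le (fun k ↦ hf.neg_deriv.nonneg (by positivity))
    (hf.sum_neg_deriv_le hz)

theorem hasDerivAt_shiftSum (hf : IsCompletelyMonotone f)
    (hsum : ∀ z : ℝ, 0 < z → Summable fun k : ℕ ↦ f (z + k)) {z : ℝ} (hz : 0 < z) :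
    HasDerivAt (shiftSum f) (-shiftSum (-deriv f) z) z := by
  have hpos : ∀ (k : ℕ) {y : ℝ}, y ∈ Ioi (z / 2) → 0 < y + k := fun k y hy ↦
    add_pos_of_pos_of_nonneg ((half_pos hz).trans hy) k.cast_nonneg
  have hz_mem : z ∈ Ioi (z / 2) := half_lt_self hz
  have hbound : ∀ (k : ℕ) (y : ℝ), y ∈ Ioi (z / 2) →
      ‖deriv f (y + k)‖ ≤ (-deriv f) (z / 2 + k) := fun k y hy ↦ by
    rw [← norm_neg, ← Pi.neg_apply, Real.norm_of_nonneg (hf.neg_deriv.nonneg (hpos k hy))]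
    exact hf.neg_deriv.antitoneOn (show 0 < z / 2 + k by positivity) (hpos k hy)
      (by grw [hy.out])
  have htsum := hasDerivAt_tsum_of_isPreconnected (hf.summable_neg_deriv (half_pos hz)) isOpen_Ioi
    isPreconnected_Ioi (fun k y hy ↦ (hf.hasDerivAt (hpos k hy)).comp_add_const y k) hbound
    hz_mem (hsum z hz) hz_mem
  refine htsum.congr_deriv ?_
  simp only [shiftSum, Pi.neg_apply, tsum_neg, neg_neg]

protected theorem shiftSum (hf : IsCompletelyMonotone f)
    (hsum : ∀ z : ℝ, 0 < z → Summable fun k : ℕ ↦ f (z + k)) :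
    IsCompletelyMonotone (shiftSum f) := by
  refine of_forall_exists_hasDerivAt_neg (P := fun φ ↦ ∃ g, IsCompletelyMonotone g ∧
    (∀ z : ℝ, 0 < z → Summable fun k : ℕ ↦ g (z + k)) ∧ φ = shiftSum g) ?_ ?_
    ⟨f, hf, hsum, rfl⟩
  · rintro _ ⟨g, hg, -, rfl⟩ z hz
    exact hg.shiftSum_nonneg hz
  · rintro _ ⟨g, hg, hg_sum, rfl⟩
    exact ⟨shiftSum (-deriv g),
      ⟨_, hg.neg_deriv, fun z hz ↦ hg.summable_neg_deriv hz, rfl⟩,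
      fun z hz ↦ hg.hasDerivAt_shiftSum hg_sum hz⟩

theorem tendsto_shiftSum_neg_deriv (hf : IsCompletelyMonotone f) (hlim : Tendsto f atTop (𝓝 0)) :
    Tendsto (shiftSum (-deriv f)) atTop (𝓝 0) := by
  have hlim_shift : Tendsto (fun z ↦ f (z - 1)) atTop (𝓝 0) :=
    hlim.comp (tendsto_atTop_add_const_right atTop (-1) tendsto_id)
  refine squeeze_zero' ?_ ?_ hlim_shift
  · filter_upwards [eventually_gt_atTop 0] with z hz using hf.neg_deriv.shiftSum_nonneg hz
  · filter_upwards [eventually_gt_atTop 1] with z hz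
    simpa using hf.shiftSum_neg_deriv_le (sub_pos.2 hz)

end IsCompletelyMonotone

/-- The class of functions containing the logarithm of the `n`-th multiple gamma function in which
the difference equation is solved: smooth functions on `(0, ∞)` whose derivative of order `n + 1`
is completely monotone and vanishes at infinity. -/
structure IsLogGammaType (n : ℕ) (f : ℝ → ℝ) : Prop where
  contDiffOn : ContDiffOn ℝ ∞ f (Ioi 0)
  isCompletelyMonotone : IsCompletelyMonotone (iteratedDeriv (n + 1) f)
  tendsto_zero : Tendsto (iteratedDeriv (n + 1) f) atTop (𝓝 0)

theorem isLogGammaType_log : IsLogGammaType 0 Real.log where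
  contDiffOn := Real.contDiffOn_log.mono fun _ hz ↦ ne_of_gt hz
  isCompletelyMonotone := by
    simpa only [zero_add, iteratedDeriv_one, Real.deriv_log'] using IsCompletelyMonotone.inv
  tendsto_zero := by
    simpa only [zero_add, iteratedDeriv_one, Real.deriv_log'] using tendsto_inv_atTop_zero

theorem IsLogGammaType.exists_fwdDiff_eqOn {n : ℕ} {f : ℝ → ℝ} (hf : IsLogGammaType n f) :
    ∃ F, IsLogGammaType (n + 1) F ∧ EqOn (Δ_[1] F) f (Ioi 0) ∧ F 1 = 0 := by
  set h : ℝ → ℝ := iteratedDeriv (n + 1) f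
  have hh : IsCompletelyMonotone h := hf.isCompletelyMonotone
  set S : ℝ → ℝ := shiftSum (-deriv h)
  have hS : IsCompletelyMonotone S := hh.neg_deriv.shiftSum fun z hz ↦ hh.summable_neg_deriv hz
  have hS_lim : Tendsto S atTop (𝓝 0) := hh.tendsto_shiftSum_neg_deriv hf.tendsto_zero
  have hΔS : EqOn (Δ_[1] S) (iteratedDeriv (n + 1 + 1) f) (Ioi 0) := fun z hz ↦ by
    rw [fwdDiff_shiftSum (hh.summable_neg_deriv hz), iteratedDeriv_succ, Pi.neg_apply, neg_neg]
  obtain ⟨F, hF, hF_one, hΔF, c, hFc⟩ :=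
    exists_fwdDiff_eqOn_of_eqOn_iteratedDeriv (n + 1) hf.contDiffOn hS.contDiffOn hΔS
  have hF_lim : Tendsto (iteratedDeriv (n + 1 + 1) F) atTop (𝓝 (0 - c)) :=
    (hS_lim.sub_const c).congr' ((eventually_gt_atTop 0).mono fun z hz ↦ (hFc hz).symm)
  have hc : 0 - c = 0 := by
    have hdiff := (contDiffOn_infty_iteratedDeriv_of_isOpen isOpen_Ioi hF (n + 1)).differentiableOn
      (by simp)
    have hΔ_lim : Tendsto (Δ_[1] (iteratedDeriv (n + 1) F)) atTop (𝓝 0) :=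
      hf.tendsto_zero.congr' <| (eventually_gt_atTop 0).mono fun z hz ↦
        (eqOn_fwdDiff_iteratedDeriv hF hΔF (n + 1) hz).symm
    rw [iteratedDeriv_succ] at hF_lim
    exact tendsto_nhds_unique (tendsto_fwdDiff_one_atTop hdiff hF_lim) hΔ_lim
  have hFS : EqOn (iteratedDeriv (n + 1 + 1) F) S (Ioi 0) := fun z hz ↦ by
    rw [hFc hz]
    linarith
  exact ⟨F, ⟨hF, hS.congr hFS, hc ▸ hF_lim⟩, hΔF, hF_one⟩

/-- The logarithmic form of the Vignéras hierarchy: `L n` plays the role of `log (G n)`, with the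
Bohr–Mollerup condition strengthened to `IsLogGammaType`. -/
structure IsLogVignerasHierarchy (L : ℕ → ℝ → ℝ) : Prop where
  zero : L 0 = Real.log
  isLogGammaType (n : ℕ) : IsLogGammaType n (L n)
  fwdDiff_succ (n : ℕ) : EqOn (Δ_[1] (L (n + 1))) (L n) (Ioi 0)
  succ_one (n : ℕ) : L (n + 1) 1 = 0

theorem exists_isLogVignerasHierarchy : ∃ L, IsLogVignerasHierarchy L := by
  have hstep : ∀ n f, IsLogGammaType n f →
      ∃ F, IsLogGammaType (n + 1) F ∧ EqOn (Δ_[1] F) f (Ioi 0) ∧ F 1 = 0 :=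
    fun _ _ hf ↦ hf.exists_fwdDiff_eqOn
  choose! next hnext_type hnext_fwdDiff hnext_one using hstep
  let L : ℕ → ℝ → ℝ := fun n ↦ Nat.rec Real.log next n
  have hL : ∀ n, IsLogGammaType n (L n) := fun n ↦ by
    induction n with
    | zero => exact isLogGammaType_log
    | succ n ih => exact hnext_type n (L n) ih
  exact ⟨L, rfl, hL, fun n ↦ hnext_fwdDiff n (L n) (hL n), fun n ↦ hnext_one n (L n) (hL n)⟩

theorem IsLogVignerasHierarchy.vignerasHierarchy_exp {L : ℕ → ℝ → ℝ}
    (hL : IsLogVignerasHierarchy L) : VignerasHierarchy fun n z ↦ Real.exp (L n z) := by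
  refine ⟨fun _ _ _ ↦ Real.exp_pos _, fun z hz ↦ by simp only [hL.zero, Real.exp_log hz],
    fun n hn ↦ ?_⟩
  obtain ⟨n, rfl⟩ := Nat.exists_eq_add_of_le' hn
  simp only [Real.log_exp, Nat.add_sub_cancel]
  refine ⟨fun z hz ↦ ?_, by rw [hL.succ_one, Real.exp_zero], (hL.isLogGammaType _).contDiffOn,
    fun z hz ↦ ?_⟩
  · rw [← Real.exp_add, ← hL.fwdDiff_succ n hz, fwdDiff, sub_add_cancel]
  · rw [iteratedDeriv_comp_add_const]
    exact (hL.isLogGammaType _).isCompletelyMonotone.nonneg (by linarith)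

theorem VignerasHierarchy.log_eqOn {H L : ℕ → ℝ → ℝ} (hH : VignerasHierarchy H)
    (hL : IsLogVignerasHierarchy L) (n : ℕ) :
    EqOn (fun z ↦ Real.log (H n z)) (L n) (Ioi 0) := by
  obtain ⟨hpos, hzero, hsucc⟩ := hH
  induction n with
  | zero => exact fun z hz ↦ by simp only [hzero z hz, hL.zero]
  | succ n ih =>
    obtain ⟨hrec, hone, hsmooth, hnonneg⟩ := hsucc (n + 1) n.succ_pos
    have hLn := hL.isLogGammaType (n + 1)
    refine eqOn_of_fwdDiff_eqOn (n + 1) hLn.contDiffOn hLn.tendsto_zero hsmooth ?_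
      (fun z hz ↦ ?_) ?_
    · filter_upwards [eventually_ge_atTop 1] with z hz
      have := hnonneg (z - 1) (sub_nonneg.2 hz)
      simpa only [iteratedDeriv_comp_add_const (f := fun z ↦ Real.log (H (n + 1) z)),
        sub_add_cancel] using this
    · rw [hL.fwdDiff_succ n hz, ← ih hz, fwdDiff, hrec z hz,
        Real.log_mul (hpos _ z hz).ne' (hpos _ z hz).ne', add_sub_cancel_right, Nat.add_sub_cancel]
    · simp only [hone, Real.log_one, hL.succ_one]

/-- There exists exactly one hierarchy of functions `(G_n)` on `(0,∞)` satisfying the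
generalized Bohr–Mollerup conditions (the Vignéras multiple gamma functions). -/
theorem vigneras_multiple_gamma_exists_unique :
    ∃ G : ℕ → ℝ → ℝ, VignerasHierarchy G ∧
      ∀ H : ℕ → ℝ → ℝ, VignerasHierarchy H →
        ∀ n : ℕ, ∀ z : ℝ, 0 < z → H n z = G n z := by
  obtain ⟨L, hL⟩ := exists_isLogVignerasHierarchy
  refine ⟨fun n z ↦ Real.exp (L n z), hL.vignerasHierarchy_exp, fun H hH n z hz ↦ ?_⟩
  simp only [← hH.log_eqOn hL n hz, Real.exp_log (hH.1 n z hz)]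
end

section
/- Fix q with 0 < q < 1. There exists exactly one sequence of functions (G_n(·;q))_{n≥0}, each G_n(·;q) : (0,∞) → (0,∞), such that: (0) G_0(z;q) = (1−q^z)/(1−q) for all z > 0; and for every n ≥ 1: (1) G_n(z+1;q) = G_{n−1}(z;q)·G_n(z;q) for all z > 0; (2) G_n(1;q) = 1; (3) log G_n(·;q) is infinitely differentiable on (0,∞) and the (n+1)-st derivative of z ↦ log G_n(z+1;q) is ≥ 0 for all z ≥ 0. (This hierarchy is the multiple q-gamma functions, a q-analogue of the generalized Bohr–Mollerup theorem.) -/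
open scoped BigOperators

/-- The defining conditions for the multiple `q`-gamma hierarchy (for fixed `0 < q < 1`):
a sequence of functions `G n : (0,∞) → (0,∞)` with `G 0 z = [z]_q = (1−q^z)/(1−q)`,
satisfying the recursion `G n (z+1) = G (n-1) z * G n z`, normalization `G n 1 = 1`, and a
`q`-analogue of the generalized Bohr–Mollerup condition: `log (G n)` is infinitely
differentiable on `(0,∞)` and the `(n+1)`-st derivative of `z ↦ log (G n (z+1))` is
nonnegative for `z ≥ 0`. -/
def QVignerasHierarchy (q : ℝ) (G : ℕ → ℝ → ℝ) : Prop :=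
  (∀ n : ℕ, ∀ z : ℝ, 0 < z → 0 < G n z) ∧
  (∀ z : ℝ, 0 < z → G 0 z = (1 - q ^ z) / (1 - q)) ∧
  (∀ n : ℕ, 1 ≤ n →
    (∀ z : ℝ, 0 < z → G n (z + 1) = G (n - 1) z * G n z) ∧
    G n 1 = 1 ∧
    ContDiffOn ℝ (⊤ : ℕ∞) (fun z => Real.log (G n z)) (Set.Ioi (0:ℝ)) ∧
    (∀ z : ℝ, 0 ≤ z → 0 ≤ iteratedDeriv (n + 1) (fun z => Real.log (G n (z + 1))) z))

/-!
Taking logarithms turns the recursion into the difference equation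
`f (n+1) (z+1) - f (n+1) z = f n z`. The exponential series
`S n z = -∑_{m ≥ 1} q^(mz) / (m (q^m - 1)^n)` solves it, and subtracting the Newton polynomial
`∑_{i + k = n} S i 1 * choose (z - 1) k` makes the solution vanish at `1` without affecting the
`(n+1)`-st derivative, which is a series with nonnegative terms tending to `0` at infinity. For
`n = 0` the result is `log (1 - q^z) - log (1 - q)`.

For uniqueness, the difference of two solutions that agree at level `n` is `1`-periodic at level
`n + 1`. Its `(n+2)`-nd derivative is periodic, and comparison with the decaying derivative of the
explicit solution far out shows that it is nonnegative. A periodic function with a nonnegative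
iterated derivative is constant.
-/

open Set Filter Topology Asymptotics Polynomial
open scoped ContDiff

/-! ### Functions periodic on a ray -/

section PeriodicOnRay

variable {a T : ℝ} {d : ℝ → ℝ}

lemma add_natCast_mul_eq_of_add_period_eq (hT : 0 ≤ T) (hd : ∀ z, a < z → d (z + T) = d z)
    (N : ℕ) {z : ℝ} (hz : a < z) : d (z + N * T) = d z := by
  induction N with
  | zero => simp
  | succ N ih =>
    have hzN : a < z + N * T := hz.trans_le (le_add_of_nonneg_right (by positivity))
    rw [Nat.cast_succ, add_one_mul, ← add_assoc, hd _ hzN, ih]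

lemma iteratedDeriv_add_period_eq (hd : ∀ z, a < z → d (z + T) = d z) (k : ℕ) {z : ℝ}
    (hz : a < z) : iteratedDeriv k d (z + T) = iteratedDeriv k d z := by
  rw [← congrFun (iteratedDeriv_comp_add_const k d T) z]
  refine EventuallyEq.iteratedDeriv_eq k ?_
  filter_upwards [Ioi_mem_nhds hz] with y hy using hd y hy

lemma le_of_tendsto_of_add_period_eq (hT : 0 < T) (hd : ∀ z, a < z → d (z + T) = d z)
    {g : ℝ → ℝ} {c : ℝ} (hg : Tendsto g atTop (𝓝 c)) (hgd : ∀ᶠ z in atTop, g z ≤ d z)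
    {z : ℝ} (hz : a < z) : c ≤ d z := by
  have htranslates : Tendsto (fun N : ℕ => z + N * T) atTop atTop :=
    tendsto_atTop_add_const_left _ z (tendsto_natCast_atTop_atTop.atTop_mul_const hT)
  refine le_of_tendsto (hg.comp htranslates) ?_
  filter_upwards [htranslates.eventually hgd] with N hN
  rwa [add_natCast_mul_eq_of_add_period_eq hT.le hd N hz] at hN

lemma eq_of_monotoneOn_of_add_period_eq (hT : 0 < T) (hd : ∀ z, a < z → d (z + T) = d z)
    (hmono : MonotoneOn d (Ioi a)) {x y : ℝ} (hx : a < x) (hy : a < y) : d x = d y := by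
  have hle {x y : ℝ} (hx : a < x) (hy : a < y) : d x ≤ d y := by
    obtain ⟨N, hN⟩ := Archimedean.arch (x - y) hT
    rw [nsmul_eq_mul] at hN
    have hxy : x ≤ y + N * T := by linarith
    exact (hmono hx (hx.trans_le hxy) hxy).trans_eq
      (add_natCast_mul_eq_of_add_period_eq hT.le hd N hy)
  exact (hle hx hy).antisymm (hle hy hx)

lemma eq_of_deriv_eq_const_of_add_period_eq (hT : 0 < T) (hd : ∀ z, a < z → d (z + T) = d z)
    (hdiff : DifferentiableOn ℝ d (Ioi a)) {c : ℝ} (hc : ∀ z, a < z → deriv d z = c)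
    {x y : ℝ} (hx : a < x) (hy : a < y) : d x = d y := by
  have hc_zero : c = 0 := by
    have hsub : Icc x (x + T) ⊆ Ioi a := fun w hw => hx.trans_le hw.1
    obtain ⟨w, hw, hslope⟩ := exists_deriv_eq_slope d (lt_add_of_pos_right x hT)
      (hdiff.continuousOn.mono hsub) (hdiff.mono (Ioo_subset_Icc_self.trans hsub))
    rwa [hc w (hx.trans hw.1), hd x hx, sub_self, zero_div] at hslope
  exact isOpen_Ioi.is_const_of_deriv_eq_zero isPreconnected_Ioi hdiff
    (fun z hz => (hc z hz).trans hc_zero) hx hy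

theorem eq_of_iteratedDeriv_nonneg_of_add_period_eq (hT : 0 < T) {k : ℕ}
    (hd : ∀ z, a < z → d (z + T) = d z) (hsmooth : ContDiffOn ℝ (k + 1) d (Ioi a))
    (hnonneg : ∀ z, a < z → 0 ≤ iteratedDeriv (k + 1) d z)
    {x y : ℝ} (hx : a < x) (hy : a < y) : d x = d y := by
  induction k generalizing d x y with
  | zero =>
    refine eq_of_monotoneOn_of_add_period_eq hT hd ?_ hx hy
    refine monotoneOn_of_deriv_nonneg (convex_Ioi a) hsmooth.continuousOn ?_ ?_
    · exact (hsmooth.differentiableOn (by simp)).mono interior_subset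
    · intro z hz
      simpa only [zero_add, iteratedDeriv_one] using hnonneg z (interior_subset hz)
  | succ k ih =>
    obtain ⟨hdiff, -, hderiv_smooth⟩ :=
      (contDiffOn_succ_iff_deriv_of_isOpen isOpen_Ioi).mp hsmooth
    have hderiv_periodic : ∀ z, a < z → deriv d (z + T) = deriv d z := fun z hz => by
      simpa only [iteratedDeriv_one] using iteratedDeriv_add_period_eq hd 1 hz
    have hderiv_const : ∀ z, a < z → deriv d z = deriv d x := fun z hz =>
      ih hderiv_periodic (by exact_mod_cast hderiv_smooth)
        (fun w hw => by simpa only [← iteratedDeriv_succ'] using hnonneg w hw) hz hx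
    exact eq_of_deriv_eq_const_of_add_period_eq hT hd hdiff hderiv_const hx hy

theorem sub_eq_sub_of_iteratedDeriv_nonneg_of_tendsto_zero {f g : ℝ → ℝ} {k : ℕ} (hT : 0 < T)
    (hf : ContDiffOn ℝ (k + 1) f (Ioi a)) (hg : ContDiffOn ℝ (k + 1) g (Ioi a))
    (hfg : ∀ z, a < z → f (z + T) - g (z + T) = f z - g z)
    (hf_nonneg : ∀ᶠ z in atTop, 0 ≤ iteratedDeriv (k + 1) f z)
    (hg_lim : Tendsto (iteratedDeriv (k + 1) g) atTop (𝓝 0))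
    {x y : ℝ} (hx : a < x) (hy : a < y) : f x - g x = f y - g y := by
  refine eq_of_iteratedDeriv_nonneg_of_add_period_eq (d := fun z => f z - g z) hT hfg
    (hf.sub hg) (fun z hz => ?_) hx hy
  refine le_of_tendsto_of_add_period_eq hT
    (fun w hw => iteratedDeriv_add_period_eq hfg (k + 1) hw) (by simpa using hg_lim.neg) ?_ hz
  filter_upwards [hf_nonneg, eventually_gt_atTop a] with w hw_nonneg hw
  have hmem := Ioi_mem_nhds hw
  rw [iteratedDeriv_fun_sub (by exact_mod_cast hf.contDiffAt hmem)
    (by exact_mod_cast hg.contDiffAt hmem)]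
  linarith

end PeriodicOnRay

/-! ### Hierarchies of difference equations -/

section DifferenceHierarchy

/-- The additive form, on `(0, ∞)`, of the recursion of a hierarchy: `f (n + 1)` is an
antidifference of `f n`. It is satisfied by the logarithms of a multiplicative hierarchy. -/
def IsDifferenceHierarchy (f : ℕ → ℝ → ℝ) : Prop :=
  ∀ n z, 0 < z → f (n + 1) (z + 1) = f n z + f (n + 1) z

theorem IsDifferenceHierarchy.eqOn {f g : ℕ → ℝ → ℝ} (hf : IsDifferenceHierarchy f)
    (hg : IsDifferenceHierarchy g) (h_zero : EqOn (f 0) (g 0) (Ioi 0))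
    (h_one : ∀ n, f (n + 1) 1 = g (n + 1) 1)
    (hf_smooth : ∀ n, ContDiffOn ℝ ∞ (f (n + 1)) (Ioi 0))
    (hg_smooth : ∀ n, ContDiffOn ℝ ∞ (g (n + 1)) (Ioi 0))
    (hf_nonneg : ∀ n, ∀ᶠ z in atTop, 0 ≤ iteratedDeriv (n + 2) (f (n + 1)) z)
    (hg_lim : ∀ n, Tendsto (iteratedDeriv (n + 2) (g (n + 1))) atTop (𝓝 0)) (n : ℕ) :
    EqOn (f n) (g n) (Ioi 0) := by
  induction n with
  | zero => exact h_zero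
  | succ n ih =>
    intro z hz
    have hperiodic : ∀ w, 0 < w →
        f (n + 1) (w + 1) - g (n + 1) (w + 1) = f (n + 1) w - g (n + 1) w := fun w hw => by
      rw [hf n w hw, hg n w hw, ih hw, add_sub_add_left_eq_sub]
    have hconst := sub_eq_sub_of_iteratedDeriv_nonneg_of_tendsto_zero (k := n + 1) one_pos
      ((hf_smooth n).of_le (by exact_mod_cast le_top))
      ((hg_smooth n).of_le (by exact_mod_cast le_top))
      hperiodic (hf_nonneg n) (hg_lim n) hz one_pos
    rwa [h_one n, sub_self, sub_eq_zero] at hconst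

end DifferenceHierarchy

/-! ### Newton sums of binomial coefficients -/

section NewtonSum

variable {R : Type*} [CommRing R] [BinomialRing R]

/-- The polynomial function `x ↦ ∑_{i + k = n} s i * choose x k` of degree at most `n`: the
solution of the difference equations with constant initial function `s 0` whose value at `0` on
level `n` is `s n`. -/
noncomputable def newtonSum (s : ℕ → R) (n : ℕ) (x : R) : R :=
  ∑ p ∈ Finset.HasAntidiagonal.antidiagonal n, s p.1 * Ring.choose x p.2

lemma newtonSum_succ_add_one (s : ℕ → R) (n : ℕ) (x : R) :
    newtonSum s (n + 1) (x + 1) = newtonSum s n x + newtonSum s (n + 1) x := by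
  simp only [newtonSum, Finset.Nat.sum_antidiagonal_succ', Ring.choose_succ_succ,
    Ring.choose_zero_right, mul_add, Finset.sum_add_distrib]
  ring

lemma newtonSum_apply_zero (s : ℕ → R) (n : ℕ) : newtonSum s n 0 = s n := by
  cases n with
  | zero => simp [newtonSum]
  | succ n => simp [newtonSum, Finset.Nat.sum_antidiagonal_succ', Ring.choose_zero_succ]

lemma iteratedDeriv_aeval {A 𝕜 : Type*} [CommSemiring A] [NontriviallyNormedField 𝕜]
    [Algebra A 𝕜] (p : A[X]) (k : ℕ) :
    iteratedDeriv k (fun x : 𝕜 => aeval x p) = fun x => aeval x (derivative^[k] p) := by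
  induction k generalizing p with
  | zero => simp
  | succ k ih =>
    have hderiv : deriv (fun x : 𝕜 => aeval x p) = fun x => aeval x (derivative p) :=
      funext fun _ => p.deriv_aeval
    rw [iteratedDeriv_succ', hderiv, ih, Function.iterate_succ_apply]

lemma ring_choose_eq_inv_factorial_mul_aeval (x : ℝ) (k : ℕ) :
    Ring.choose x k = (k.factorial : ℝ)⁻¹ * aeval x (descPochhammer ℤ k) := by
  rw [Ring.choose_eq_smul, smul_eq_mul, aeval_eq_smeval]

lemma contDiff_ring_choose {m : WithTop ℕ∞} (k : ℕ) :
    ContDiff ℝ m (fun x : ℝ => Ring.choose x k) := by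
  simp only [ring_choose_eq_inv_factorial_mul_aeval]
  exact contDiff_const.mul (contDiff_aeval _ _)

lemma iteratedDeriv_ring_choose_of_lt {j k : ℕ} (hkj : k < j) (x : ℝ) :
    iteratedDeriv j (fun x : ℝ => Ring.choose x k) x = 0 := by
  have hdegree : (descPochhammer ℤ k).natDegree < j := by rwa [descPochhammer_natDegree]
  simp only [ring_choose_eq_inv_factorial_mul_aeval]
  rw [iteratedDeriv_const_mul_field, iteratedDeriv_aeval,
    iterate_derivative_eq_zero hdegree]
  simp only [map_zero, mul_zero]

lemma contDiff_newtonSum {m : WithTop ℕ∞} (s : ℕ → ℝ) (n : ℕ) : ContDiff ℝ m (newtonSum s n) :=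
  ContDiff.sum fun p _ => contDiff_const.mul (contDiff_ring_choose p.2)

lemma iteratedDeriv_newtonSum_of_lt (s : ℕ → ℝ) {j n : ℕ} (hnj : n < j) (x : ℝ) :
    iteratedDeriv j (newtonSum s n) x = 0 := by
  unfold newtonSum
  rw [iteratedDeriv_fun_sum fun p _ => (contDiff_const.mul (contDiff_ring_choose p.2)).contDiffAt]
  refine Finset.sum_eq_zero fun p hp => ?_
  have hpj : p.2 < j := (Finset.HasAntidiagonal.antidiagonal.snd_le hp).trans_lt hnj
  rw [iteratedDeriv_const_mul_field, iteratedDeriv_ring_choose_of_lt hpj, mul_zero]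

end NewtonSum

section NewtonNormalize

variable {S : ℕ → ℝ → ℝ}

/-- The modification of a difference hierarchy `S` by a Newton sum that makes every level vanish
at `1`. -/
noncomputable def newtonNormalize (S : ℕ → ℝ → ℝ) (n : ℕ) (z : ℝ) : ℝ :=
  S n z - newtonSum (fun i => S i 1) n (z - 1)

lemma IsDifferenceHierarchy.newtonNormalize (hS : IsDifferenceHierarchy S) :
    IsDifferenceHierarchy (newtonNormalize S) := fun n z hz => by
  have hshift : z + 1 - 1 = z - 1 + 1 := by ring
  simp only [_root_.newtonNormalize, hS n z hz, hshift, newtonSum_succ_add_one]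
  ring

lemma newtonNormalize_apply_one (S : ℕ → ℝ → ℝ) (n : ℕ) : newtonNormalize S n 1 = 0 := by
  rw [newtonNormalize, sub_self, newtonSum_apply_zero, sub_self]

lemma newtonNormalize_zero (S : ℕ → ℝ → ℝ) (z : ℝ) : newtonNormalize S 0 z = S 0 z - S 0 1 := by
  simp [newtonNormalize, newtonSum]

lemma contDiffOn_newtonNormalize {m : WithTop ℕ∞} {n : ℕ} {s : Set ℝ}
    (hS : ContDiffOn ℝ m (S n) s) : ContDiffOn ℝ m (newtonNormalize S n) s :=
  hS.sub ((contDiff_newtonSum _ n).comp (contDiff_id.sub contDiff_const)).contDiffOn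

lemma iteratedDeriv_newtonNormalize_of_lt {j n : ℕ} {z : ℝ} (hnj : n < j)
    (hS : ContDiffAt ℝ j (S n) z) :
    iteratedDeriv j (newtonNormalize S n) z = iteratedDeriv j (S n) z := by
  have hnewton : ContDiff ℝ j fun z => newtonSum (fun i => S i 1) n (z - 1) :=
    (contDiff_newtonSum _ n).comp (contDiff_id.sub contDiff_const)
  unfold newtonNormalize
  rw [iteratedDeriv_fun_sub hS hnewton.contDiffAt, iteratedDeriv_comp_sub_const]
  simp only [iteratedDeriv_newtonSum_of_lt _ hnj, sub_zero]

end NewtonNormalize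

/-! ### Power series in `q ^ z` -/

section QExpSeries

/-- The exponential series `∑_{m ≥ 0} a m * q^(mz)`, that is, the power series with coefficients
`a` evaluated at `q ^ z`. -/
noncomputable def qExpSeries (q : ℝ) (a : ℕ → ℝ) (z : ℝ) : ℝ :=
  ∑' m : ℕ, a m * (q ^ z) ^ m

variable {q z : ℝ} {a b : ℕ → ℝ} {k : ℕ}

lemma summable_norm_qExpSeries (hq0 : 0 < q) (hq1 : q < 1)
    (ha : a =O[atTop] fun m => (m : ℝ) ^ k) (hz : 0 < z) :
    Summable fun m : ℕ => ‖a m * (q ^ z) ^ m‖ := by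
  refine summable_norm_mul_geometric_of_norm_lt_one' (k := k) ?_ (by exact_mod_cast ha)
  rw [Real.norm_of_nonneg (by positivity)]
  exact Real.rpow_lt_one hq0.le hq1 hz

lemma qExpSeries_nonneg (hq0 : 0 ≤ q) (ha : ∀ m, 0 ≤ a m) (z : ℝ) : 0 ≤ qExpSeries q a z :=
  tsum_nonneg fun m => mul_nonneg (ha m) (by positivity)

lemma qExpSeries_add_one (hq0 : 0 < q) (a : ℕ → ℝ) (z : ℝ) :
    qExpSeries q a (z + 1) = qExpSeries q (fun m => a m * q ^ m) z := by
  refine tsum_congr fun m => ?_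
  rw [Real.rpow_add hq0, Real.rpow_one]
  ring

lemma qExpSeries_add (hq0 : 0 < q) (hq1 : q < 1) {l : ℕ}
    (ha : a =O[atTop] fun m => (m : ℝ) ^ k) (hb : b =O[atTop] fun m => (m : ℝ) ^ l)
    (hz : 0 < z) : qExpSeries q (fun m => a m + b m) z = qExpSeries q a z + qExpSeries q b z := by
  simp only [qExpSeries, add_mul]
  exact (summable_norm_qExpSeries hq0 hq1 ha hz).of_norm.tsum_add
    (summable_norm_qExpSeries hq0 hq1 hb hz).of_norm

lemma norm_mul_rpow_pow_le_of_le (hq0 : 0 < q) (hq1 : q ≤ 1) {x y : ℝ} (hxy : x ≤ y) (c : ℝ)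
    (m : ℕ) : ‖c * (q ^ y) ^ m‖ ≤ ‖c * (q ^ x) ^ m‖ := by
  have hpow : q ^ y ≤ q ^ x := Real.rpow_le_rpow_of_exponent_ge hq0 hq1 hxy
  rw [norm_mul, norm_mul, Real.norm_of_nonneg (by positivity : 0 ≤ (q ^ y) ^ m),
    Real.norm_of_nonneg (by positivity : 0 ≤ (q ^ x) ^ m)]
  gcongr

lemma tendsto_qExpSeries_atTop (hq0 : 0 < q) (hq1 : q < 1)
    (ha : a =O[atTop] fun m => (m : ℝ) ^ k) :
    Tendsto (qExpSeries q a) atTop (𝓝 (a 0)) := by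
  have hlim : ∀ m : ℕ, Tendsto (fun z : ℝ => a m * (q ^ z) ^ m) atTop (𝓝 (a m * 0 ^ m)) :=
    fun m => ((tendsto_rpow_atTop_of_base_lt_one q (by linarith) hq1).pow m).const_mul (a m)
  have hsum : ∑' m, a m * 0 ^ m = a 0 := by
    rw [tsum_eq_single 0 fun m hm => by rw [zero_pow hm, mul_zero], pow_zero, mul_one]
  rw [← hsum]
  refine tendsto_tsum_of_dominated_convergence
    (summable_norm_qExpSeries hq0 hq1 ha one_pos) hlim ?_
  filter_upwards [eventually_ge_atTop 1] with z hz m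
  exact norm_mul_rpow_pow_le_of_le hq0 hq1.le hz (a m) m

lemma isBigO_mul_log_pow_mul (ha : a =O[atTop] fun m => (m : ℝ) ^ k) (q : ℝ) (j : ℕ) :
    (fun m : ℕ => (m * Real.log q) ^ j * a m) =O[atTop] fun m => (m : ℝ) ^ (j + k) := by
  simp only [pow_add, mul_pow]
  refine IsBigO.mul ?_ ha
  simpa only [mul_comm] using (isBigO_refl _ _).const_mul_left (Real.log q ^ j)

lemma hasDerivAt_qExpSeries (hq0 : 0 < q) (hq1 : q < 1)
    (ha : a =O[atTop] fun m => (m : ℝ) ^ k) (hz : 0 < z) :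
    HasDerivAt (qExpSeries q a) (qExpSeries q (fun m => m * Real.log q * a m) z) z := by
  have hterm : ∀ (m : ℕ) (y : ℝ), HasDerivAt (fun y => a m * (q ^ y) ^ m)
      (m * Real.log q * a m * (q ^ y) ^ m) y := fun m y => by
    have hpow := ((hasDerivAt_id y).mul_const (m : ℝ)).const_rpow hq0
    simp only [id, one_mul, Real.rpow_mul_natCast hq0.le] at hpow
    exact (hpow.const_mul (a m)).congr_deriv (by ring)
  have hbound : Summable fun m : ℕ => ‖m * Real.log q * a m * (q ^ (z / 2)) ^ m‖ :=
    summable_norm_qExpSeries hq0 hq1 (by simpa using isBigO_mul_log_pow_mul ha q 1) (half_pos hz)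
  exact hasDerivAt_tsum_of_isPreconnected hbound isOpen_Ioi isPreconnected_Ioi
    (fun m y _ => hterm m y)
    (fun m y hy => norm_mul_rpow_pow_le_of_le hq0 hq1.le (mem_Ioi.mp hy).le _ m)
    (half_lt_self hz) (summable_norm_qExpSeries hq0 hq1 ha hz).of_norm (half_lt_self hz)

lemma iteratedDeriv_qExpSeries (hq0 : 0 < q) (hq1 : q < 1)
    (ha : a =O[atTop] fun m => (m : ℝ) ^ k) (j : ℕ) (hz : 0 < z) :
    iteratedDeriv j (qExpSeries q a) z = qExpSeries q (fun m => (m * Real.log q) ^ j * a m) z := by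
  induction j generalizing z with
  | zero => simp
  | succ j ih =>
    have hlocal : iteratedDeriv j (qExpSeries q a) =ᶠ[𝓝 z]
        qExpSeries q (fun m => (m * Real.log q) ^ j * a m) := by
      filter_upwards [Ioi_mem_nhds hz] with y hy using ih hy
    rw [iteratedDeriv_succ, hlocal.deriv_eq,
      (hasDerivAt_qExpSeries hq0 hq1 (isBigO_mul_log_pow_mul ha q j) hz).deriv]
    simp only [pow_succ', mul_assoc]

lemma contDiffOn_qExpSeries (hq0 : 0 < q) (hq1 : q < 1)
    (ha : a =O[atTop] fun m => (m : ℝ) ^ k) : ContDiffOn ℝ ∞ (qExpSeries q a) (Ioi 0) := by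
  refine contDiffOn_of_differentiableOn_deriv fun j _ => ?_
  have hderiv : DifferentiableOn ℝ (qExpSeries q fun m => (m * Real.log q) ^ j * a m) (Ioi 0) :=
    fun z hz => (hasDerivAt_qExpSeries hq0 hq1
      (isBigO_mul_log_pow_mul ha q j) hz).differentiableAt.differentiableWithinAt
  exact hderiv.congr fun z hz => (iteratedDerivWithin_of_isOpen isOpen_Ioi hz).trans
    (iteratedDeriv_qExpSeries hq0 hq1 ha j hz)

end QExpSeries

/-! ### The multiple `q`-gamma functions -/

section MultipleQGamma

variable {q z : ℝ}

/-- The coefficient of `q^(mz)` in the unnormalized logarithm of the `n`-th multiple `q`-gamma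
function. It is `0` for `m = 0`, because `0⁻¹ = 0`. -/
noncomputable def qGammaCoeff (q : ℝ) (n m : ℕ) : ℝ := -(m * (q ^ m - 1) ^ n : ℝ)⁻¹

lemma isBigO_qGammaCoeff (hq0 : 0 ≤ q) (hq1 : q < 1) (n : ℕ) :
    qGammaCoeff q n =O[atTop] fun m => (m : ℝ) ^ 0 := by
  have hpow : Tendsto (fun m : ℕ => (q ^ m - 1) ^ n) atTop (𝓝 ((0 - 1) ^ n)) :=
    ((tendsto_pow_atTop_nhds_zero_of_lt_one hq0 hq1).sub_const 1).pow n
  have hlim : Tendsto (qGammaCoeff q n) atTop (𝓝 (-(0 * ((0 - 1) ^ n)⁻¹))) := by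
    unfold qGammaCoeff
    simp only [mul_inv]
    exact (tendsto_inv_atTop_nhds_zero_nat.mul (hpow.inv₀ (by simp))).neg
  simpa only [pow_zero] using hlim.isBigO_one ℝ

lemma qGammaCoeff_succ_mul_pow (hq0 : 0 ≤ q) (hq1 : q < 1) (n m : ℕ) :
    qGammaCoeff q (n + 1) m * q ^ m = qGammaCoeff q n m + qGammaCoeff q (n + 1) m := by
  rcases eq_or_ne m 0 with rfl | hm
  · simp [qGammaCoeff]
  · have hpow : q ^ m - 1 ≠ 0 := (sub_neg.mpr (pow_lt_one₀ hq0 hq1 hm)).ne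
    have hm' : (m : ℝ) ≠ 0 := Nat.cast_ne_zero.mpr hm
    rw [qGammaCoeff, qGammaCoeff, pow_succ]
    generalize q ^ m = w at *
    field_simp
    ring

lemma pow_mul_qGammaCoeff_nonneg (hq0 : 0 ≤ q) (hq1 : q ≤ 1) (n m : ℕ) :
    0 ≤ (m * Real.log q) ^ (n + 1) * qGammaCoeff q n m := by
  have hlog : Real.log q ≤ 0 := Real.log_nonpos hq0 hq1
  have hpow : q ^ m - 1 ≤ 0 := sub_nonpos.mpr (pow_le_one₀ hq0 hq1)
  have hquot : 0 ≤ m * Real.log q / (q ^ m - 1) :=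
    div_nonneg_of_nonpos (mul_nonpos_of_nonneg_of_nonpos m.cast_nonneg hlog) hpow
  have hfactor : (m * Real.log q) ^ (n + 1) * qGammaCoeff q n m =
      m / m * -Real.log q * (m * Real.log q / (q ^ m - 1)) ^ n := by
    rw [qGammaCoeff, div_pow]
    ring
  rw [hfactor]
  have := neg_nonneg.mpr hlog
  positivity

/-- The unnormalized logarithm of the `n`-th multiple `q`-gamma function. -/
noncomputable def qGammaSeries (q : ℝ) (n : ℕ) : ℝ → ℝ := qExpSeries q (qGammaCoeff q n)

lemma qGammaSeries_zero (hq0 : 0 < q) (hq1 : q < 1) (hz : 0 < z) :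
    qGammaSeries q 0 z = Real.log (1 - q ^ z) := by
  have hnorm : |q ^ z| < 1 := by
    rw [abs_of_nonneg (by positivity)]
    exact Real.rpow_lt_one hq0.le hq1 hz
  have hsum := (Real.hasSum_pow_div_log_of_abs_lt_one hnorm).neg
  rw [neg_neg] at hsum
  rw [← hsum.tsum_eq, qGammaSeries, qExpSeries, Summable.tsum_eq_zero_add
    (summable_norm_qExpSeries hq0 hq1 (isBigO_qGammaCoeff hq0.le hq1 0) hz).of_norm]
  simp [qGammaCoeff, div_eq_inv_mul]

lemma isDifferenceHierarchy_qGammaSeries (hq0 : 0 < q) (hq1 : q < 1) :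
    IsDifferenceHierarchy (qGammaSeries q) := fun n z hz => by
  unfold qGammaSeries
  rw [qExpSeries_add_one hq0, ← qExpSeries_add hq0 hq1 (isBigO_qGammaCoeff hq0.le hq1 n)
    (isBigO_qGammaCoeff hq0.le hq1 (n + 1)) hz]
  simp only [qGammaCoeff_succ_mul_pow hq0.le hq1]

/-- The logarithm of the `n`-th multiple `q`-gamma function. -/
noncomputable def logMultipleQGamma (q : ℝ) : ℕ → ℝ → ℝ := newtonNormalize (qGammaSeries q)

lemma isDifferenceHierarchy_logMultipleQGamma (hq0 : 0 < q) (hq1 : q < 1) :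
    IsDifferenceHierarchy (logMultipleQGamma q) :=
  (isDifferenceHierarchy_qGammaSeries hq0 hq1).newtonNormalize

lemma logMultipleQGamma_apply_one (q : ℝ) (n : ℕ) : logMultipleQGamma q n 1 = 0 :=
  newtonNormalize_apply_one _ n

lemma logMultipleQGamma_zero (hq0 : 0 < q) (hq1 : q < 1) (hz : 0 < z) :
    logMultipleQGamma q 0 z = Real.log ((1 - q ^ z) / (1 - q)) := by
  have hqz : q ^ z < 1 := Real.rpow_lt_one hq0.le hq1 hz
  rw [logMultipleQGamma, newtonNormalize_zero, qGammaSeries_zero hq0 hq1 hz,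
    qGammaSeries_zero hq0 hq1 one_pos, Real.rpow_one,
    Real.log_div (sub_pos.mpr hqz).ne' (sub_pos.mpr hq1).ne']

lemma contDiffOn_logMultipleQGamma (hq0 : 0 < q) (hq1 : q < 1) (n : ℕ) :
    ContDiffOn ℝ ∞ (logMultipleQGamma q n) (Ioi 0) :=
  contDiffOn_newtonNormalize (contDiffOn_qExpSeries hq0 hq1 (isBigO_qGammaCoeff hq0.le hq1 n))

lemma iteratedDeriv_logMultipleQGamma (hq0 : 0 < q) (hq1 : q < 1) (n : ℕ) (hz : 0 < z) :
    iteratedDeriv (n + 1) (logMultipleQGamma q n) z =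
      qExpSeries q (fun m => (m * Real.log q) ^ (n + 1) * qGammaCoeff q n m) z := by
  have hbound := isBigO_qGammaCoeff hq0.le hq1 n
  have hsmooth : ContDiffAt ℝ ∞ (qGammaSeries q n) z :=
    (contDiffOn_qExpSeries hq0 hq1 hbound).contDiffAt (Ioi_mem_nhds hz)
  rw [logMultipleQGamma, iteratedDeriv_newtonNormalize_of_lt n.lt_succ_self
    (hsmooth.of_le (by exact_mod_cast le_top))]
  exact iteratedDeriv_qExpSeries hq0 hq1 hbound (n + 1) hz

lemma iteratedDeriv_logMultipleQGamma_nonneg (hq0 : 0 < q) (hq1 : q < 1) (n : ℕ) (hz : 0 < z) :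
    0 ≤ iteratedDeriv (n + 1) (logMultipleQGamma q n) z := by
  rw [iteratedDeriv_logMultipleQGamma hq0 hq1 n hz]
  exact qExpSeries_nonneg hq0.le (pow_mul_qGammaCoeff_nonneg hq0.le hq1.le n) z

lemma tendsto_iteratedDeriv_logMultipleQGamma (hq0 : 0 < q) (hq1 : q < 1) (n : ℕ) :
    Tendsto (iteratedDeriv (n + 1) (logMultipleQGamma q n)) atTop (𝓝 0) := by
  have hlim := tendsto_qExpSeries_atTop hq0 hq1
    (isBigO_mul_log_pow_mul (isBigO_qGammaCoeff hq0.le hq1 n) q (n + 1))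
  simp only [Nat.cast_zero, zero_mul, zero_pow n.succ_ne_zero] at hlim
  refine hlim.congr' ?_
  filter_upwards [eventually_gt_atTop 0] with z hz
  exact (iteratedDeriv_logMultipleQGamma hq0 hq1 n hz).symm

/-- The multiple `q`-gamma functions `G n (z; q)`. -/
noncomputable def multipleQGamma (q : ℝ) (n : ℕ) (z : ℝ) : ℝ := Real.exp (logMultipleQGamma q n z)

theorem qVignerasHierarchy_multipleQGamma (hq0 : 0 < q) (hq1 : q < 1) :
    QVignerasHierarchy q (multipleQGamma q) := by
  refine ⟨fun n z _ => Real.exp_pos _, fun z hz => ?_, fun n hn => ?_⟩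
  · have hqz : q ^ z < 1 := Real.rpow_lt_one hq0.le hq1 hz
    rw [multipleQGamma, logMultipleQGamma_zero hq0 hq1 hz,
      Real.exp_log (div_pos (sub_pos.mpr hqz) (sub_pos.mpr hq1))]
  · obtain ⟨n, rfl⟩ := Nat.exists_eq_add_of_le' hn
    simp only [multipleQGamma, Real.log_exp, Nat.add_sub_cancel]
    refine ⟨fun z hz => ?_, ?_, contDiffOn_logMultipleQGamma hq0 hq1 _, fun z hz => ?_⟩
    · rw [isDifferenceHierarchy_logMultipleQGamma hq0 hq1 n z hz, Real.exp_add]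
    · rw [logMultipleQGamma_apply_one, Real.exp_zero]
    · rw [iteratedDeriv_comp_add_const]
      exact iteratedDeriv_logMultipleQGamma_nonneg hq0 hq1 (n + 1) (by linarith)

end MultipleQGamma

namespace QVignerasHierarchy

variable {q : ℝ} {G : ℕ → ℝ → ℝ}

lemma isDifferenceHierarchy_log (hG : QVignerasHierarchy q G) :
    IsDifferenceHierarchy fun n z => Real.log (G n z) := fun n z hz => by
  simp only [(hG.2.2 (n + 1) n.succ_pos).1 z hz, Nat.add_sub_cancel]
  exact Real.log_mul (hG.1 n z hz).ne' (hG.1 (n + 1) z hz).ne'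

lemma iteratedDeriv_log_nonneg (hG : QVignerasHierarchy q G) (n : ℕ) {z : ℝ} (hz : 1 ≤ z) :
    0 ≤ iteratedDeriv (n + 2) (fun z => Real.log (G (n + 1) z)) z := by
  have hnonneg := (hG.2.2 (n + 1) n.succ_pos).2.2.2 (z - 1) (sub_nonneg.mpr hz)
  rw [iteratedDeriv_comp_add_const (n + 2) (fun z => Real.log (G (n + 1) z))] at hnonneg
  simpa only [sub_add_cancel] using hnonneg

theorem eq_multipleQGamma (hG : QVignerasHierarchy q G) (hq0 : 0 < q) (hq1 : q < 1) (n : ℕ)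
    {z : ℝ} (hz : 0 < z) : G n z = multipleQGamma q n z := by
  have h_zero : EqOn (fun z => Real.log (G 0 z)) (logMultipleQGamma q 0) (Ioi 0) :=
    fun w hw => by simp only [hG.2.1 w hw, logMultipleQGamma_zero hq0 hq1 hw]
  have h_one (n : ℕ) : Real.log (G (n + 1) 1) = logMultipleQGamma q (n + 1) 1 := by
    rw [(hG.2.2 (n + 1) n.succ_pos).2.1, Real.log_one, logMultipleQGamma_apply_one]
  have hlog : Real.log (G n z) = logMultipleQGamma q n z :=
    hG.isDifferenceHierarchy_log.eqOn (isDifferenceHierarchy_logMultipleQGamma hq0 hq1)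
      h_zero h_one (fun n => (hG.2.2 (n + 1) n.succ_pos).2.2.1)
      (fun n => contDiffOn_logMultipleQGamma hq0 hq1 (n + 1))
      (fun n => (eventually_ge_atTop 1).mono fun _ => hG.iteratedDeriv_log_nonneg n)
      (fun n => tendsto_iteratedDeriv_logMultipleQGamma hq0 hq1 (n + 1)) n hz
  rw [multipleQGamma, ← hlog, Real.exp_log (hG.1 n z hz)]

end QVignerasHierarchy

/-- For each fixed `0 < q < 1` there exists exactly one hierarchy of functions `(G_n(·;q))`
on `(0,∞)` satisfying the `q`-analogue of the generalized Bohr–Mollerup conditions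
(the multiple `q`-gamma functions). -/
theorem multiple_q_gamma_exists_unique (q : ℝ) (hq0 : 0 < q) (hq1 : q < 1) :
    ∃ G : ℕ → ℝ → ℝ, QVignerasHierarchy q G ∧
      ∀ H : ℕ → ℝ → ℝ, QVignerasHierarchy q H →
        ∀ n : ℕ, ∀ z : ℝ, 0 < z → H n z = G n z := by
  exact ⟨multipleQGamma q, qVignerasHierarchy_multipleQGamma hq0 hq1,
    fun _ hH n _ hz => hH.eq_multipleQGamma hq0 hq1 n hz⟩
end

section
/- Let j ≥ 0 and n ≥ j+1 be integers, and define C_j := −Σ_{r=1}^{n+1} (B_r/r!)·[(d/dt)^{r−1}(t^j log t)] evaluated at t = 1 + ((−1)^n/(n+1)!)·∫_1^∞ B̄_{n+1}(t)·(d/dt)^{n+1}(t^j log t) dt. Then C_j = −ζ'(−j) − 1/(j+1)². In particular C_j does not depend on n. -/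
open scoped BigOperators

noncomputable section

/-- Bernoulli polynomial `B_m(t)` evaluated at a real number. -/
def BPR (m : ℕ) (t : ℝ) : ℝ := Polynomial.aeval t (Polynomial.bernoulli m)

/-- Periodized Bernoulli polynomial `B̄_m(t) = B_m(t − ⌊t⌋)`. -/
def BBar (m : ℕ) (t : ℝ) : ℝ := BPR m (t - ⌊t⌋)

/-- The constant `C_j` (defined using an auxiliary integer `n ≥ j+1`):
`C_j = −Σ_{r=1}^{n+1} (B_r/r!)·[(d/dt)^{r−1}(t^j log t)]_{t=1}
 + ((−1)^n/(n+1)!)·∫_1^∞ B̄_{n+1}(t)·(d/dt)^{n+1}(t^j log t) dt`. -/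
def Cclassical (n j : ℕ) : ℝ :=
  -(∑ r ∈ Finset.Icc 1 (n+1), ((bernoulli r : ℚ) : ℝ) / r.factorial *
      iteratedDeriv (r-1) (fun t : ℝ => t^j * Real.log t) 1)
  + ((-1:ℝ)^n / (n+1).factorial) *
      ∫ t in Set.Ioi (1:ℝ), BBar (n+1) t *
        iteratedDeriv (n+1) (fun t : ℝ => t^j * Real.log t) t

/-!
For a decaying `f`, Euler–Maclaurin summation on `[1, ∞)` gives `∑ k ≥ 1, f k = ∫ f + EM_m(f)`,
where `EM_m(f)` collects the boundary terms at `1` and the remainder of order `m`. For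
`f t = t ^ (-s)` with `1 < re s` this reads `ζ(s) = 1 / (s - 1) + EM_m(t ^ (-s))`. The `m`-th
derivative of `t ^ (-s)` is `O(t ^ (-re s - m))`, so `EM_m(t ^ (-s))` is holomorphic on
`1 - m < re s` and the identity persists there. Differentiating in `s` inserts a factor `-log t`,
and `C_j = EM_{n+1}(t ^ j log t)` is the case `s = -j`, `m = n + 1`.
-/

open MeasureTheory Set Filter Topology

section PeriodizedBernoulli

lemma BBar_eq_bernoulliFun_fract (m : ℕ) (t : ℝ) : BBar m t = bernoulliFun m (Int.fract t) := by
  simp [BBar, BPR, bernoulliFun, Polynomial.eval_map_algebraMap]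

lemma BBar_apply_one (m : ℕ) : BBar m 1 = bernoulli m := by
  simp [BBar_eq_bernoulliFun_fract, bernoulliFun_eval_zero]

lemma measurable_BBar (m : ℕ) : Measurable (BBar m) := by
  simp only [funext (BBar_eq_bernoulliFun_fract m)]
  exact (continuous_bernoulliFun m).measurable.comp measurable_fract

lemma exists_norm_BBar_le (m : ℕ) : ∃ C : ℝ, ∀ t, ‖BBar m t‖ ≤ C := by
  obtain ⟨C, hC⟩ := (isCompact_Icc (a := (0 : ℝ)) (b := 1)).exists_bound_of_continuousOn
    (continuous_bernoulliFun m).continuousOn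
  refine ⟨C, fun t => ?_⟩
  rw [BBar_eq_bernoulliFun_fract]
  exact hC _ ⟨Int.fract_nonneg t, (Int.fract_lt_one t).le⟩

lemma continuous_BBar {m : ℕ} (hm : m ≠ 1) : Continuous (BBar m) := by
  simp only [funext (BBar_eq_bernoulliFun_fract m)]
  exact (continuous_bernoulliFun m).continuousOn.comp_fract''
    (bernoulliFun_endpoints_eq_of_ne_one hm).symm

lemma BBar_eqOn_Ico (m : ℕ) (k : ℤ) :
    EqOn (BBar m) (fun t => bernoulliFun m (t - k)) (Ico k (k + 1)) := fun t ht => by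
  rw [BBar_eq_bernoulliFun_fract, Int.fract, Int.floor_eq_iff.2 ht]

lemma hasDerivAt_BBar_succ (m : ℕ) {t : ℝ} (ht : t ∉ range ((↑) : ℤ → ℝ)) :
    HasDerivAt (BBar (m + 1)) ((m + 1) * BBar m t) t := by
  have hlt : (⌊t⌋ : ℝ) < t := (Int.floor_le t).lt_of_ne fun h => ht ⟨_, h⟩
  have hnhds : Ico (⌊t⌋ : ℝ) (⌊t⌋ + 1) ∈ 𝓝 t := Ico_mem_nhds hlt (Int.lt_floor_add_one t)
  have hshift := (hasDerivAt_bernoulliFun (m + 1) (t - ⌊t⌋)).comp_sub_const t (⌊t⌋ : ℝ)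
  refine (hshift.congr_of_eventuallyEq ((BBar_eqOn_Ico _ _).eventuallyEq_of_mem hnhds)).congr_deriv
    ?_
  simp [BBar_eq_bernoulliFun_fract]

variable {E : Type*} [NormedAddCommGroup E] [NormedSpace ℝ E] {f : ℝ → E}

lemma integrableOn_BBar_smul (m : ℕ) {s : Set ℝ} (hf : IntegrableOn f s) :
    IntegrableOn (fun t => BBar m t • f t) s := by
  obtain ⟨C, hC⟩ := exists_norm_BBar_le m
  exact hf.bdd_smul C (measurable_BBar m).aestronglyMeasurable (Eventually.of_forall hC)

lemma tendsto_BBar_smul_zero (m : ℕ) {l : Filter ℝ} (hf : Tendsto f l (𝓝 0)) :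
    Tendsto (fun t => BBar m t • f t) l (𝓝 0) := by
  obtain ⟨C, hC⟩ := exists_norm_BBar_le m
  refine squeeze_zero_norm (fun t => ?_) (by simpa using hf.norm.const_mul C)
  rw [norm_smul]
  gcongr
  exact hC t

end PeriodizedBernoulli

section IntegrationByParts

variable {E : Type*} [NormedAddCommGroup E] [NormedSpace ℝ E] [CompleteSpace E] {f f' : ℝ → E}
  {a : ℝ}

lemma integral_Ioi_of_hasDerivAt_off_countable_of_tendsto {l : E} {s : Set ℝ} (hs : s.Countable)
    (hcont : ContinuousOn f (Ici a)) (hderiv : ∀ t ∈ Ioi a \ s, HasDerivAt f (f' t) t)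
    (hf' : IntegrableOn f' (Ioi a)) (hlim : Tendsto f atTop (𝓝 l)) :
    ∫ t in Ioi a, f' t = l - f a := by
  refine tendsto_nhds_unique (intervalIntegral_tendsto_integral_Ioi a hf' tendsto_id)
    ((hlim.sub_const (f a)).congr' ?_)
  filter_upwards [eventually_ge_atTop a] with x hx
  refine (integral_eq_of_hasDerivAt_off_countable_of_le f f' hx hs
    (hcont.mono Icc_subset_Ici_self) (fun t ht => hderiv t ⟨ht.1.1, ht.2⟩) ?_).symm
  rw [intervalIntegrable_iff_integrableOn_Ioc_of_le hx]
  exact hf'.mono_set Ioc_subset_Ioi_self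

lemma integral_Ioi_BBar_succ_smul_deriv {m : ℕ} (hm : m ≠ 0)
    (hderiv : ∀ t ∈ Ici a, HasDerivAt f (f' t) t)
    (hf : IntegrableOn f (Ioi a)) (hf' : IntegrableOn f' (Ioi a)) :
    ∫ t in Ioi a, BBar (m + 1) t • f' t =
      -(BBar (m + 1) a • f a) - ((m : ℝ) + 1) • ∫ t in Ioi a, BBar m t • f t := by
  have hf'_int := integrableOn_BBar_smul (m + 1) hf'
  have hf_int : IntegrableOn (fun t => ((m : ℝ) + 1) • BBar m t • f t) (Ioi a) :=
    (integrableOn_BBar_smul m hf).smul _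
  have hparts := integral_Ioi_of_hasDerivAt_off_countable_of_tendsto
    (f := fun t => BBar (m + 1) t • f t) (countable_range ((↑) : ℤ → ℝ))
    ((continuous_BBar (by simpa using hm)).continuousOn.smul
      fun t ht => (hderiv t ht).continuousAt.continuousWithinAt)
    (fun t ht => (hasDerivAt_BBar_succ m ht.2).smul (hderiv t (Ioi_subset_Ici_self ht.1)))
    (by simpa only [mul_smul] using! hf'_int.add hf_int)
    (tendsto_BBar_smul_zero _ (tendsto_zero_of_hasDerivAt_of_integrableOn_Ioi
      (fun t ht => hderiv t (Ioi_subset_Ici_self ht)) hf' hf))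
  simp only [mul_smul] at hparts
  rw [integral_add hf'_int hf_int, integral_smul, zero_sub] at hparts
  exact eq_sub_of_add_eq hparts

lemma intervalIntegral_BBar_one_smul_deriv (k : ℤ)
    (hderiv : ∀ t ∈ Icc (k : ℝ) (k + 1), HasDerivAt f (f' t) t)
    (hf' : IntervalIntegrable f' volume k (k + 1)) :
    ∫ t in (k : ℝ)..(k + 1), BBar 1 t • f' t =
      (2⁻¹ : ℝ) • (f k + f (k + 1)) - ∫ t in (k : ℝ)..(k + 1), f t := by
  have hk : (k : ℝ) ≤ k + 1 := by linarith
  have hsaw : ∫ t in (k : ℝ)..(k + 1), BBar 1 t • f' t =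
      ∫ t in (k : ℝ)..(k + 1), (t - k - 2⁻¹) • f' t := by
    refine intervalIntegral.integral_congr_ae ?_
    filter_upwards [compl_mem_ae_iff.2 (measure_singleton ((k : ℝ) + 1))] with t hne ht
    rw [uIoc_of_le hk] at ht
    simp [BBar_eqOn_Ico 1 k ⟨ht.1.le, ht.2.lt_of_ne hne⟩, bernoulliFun_one]
  rw [hsaw, intervalIntegral.integral_smul_deriv_eq_deriv_smul (u := fun t => t - k - 2⁻¹)
    (u' := fun _ => 1) (fun t _ => ((hasDerivAt_id t).sub_const _).sub_const _)
    (by rwa [uIcc_of_le hk]) intervalIntegrable_const hf']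
  simp only [one_smul]
  module

lemma intervalIntegral_one_BBar_one_smul_deriv
    (hderiv : ∀ t ∈ Ici (1 : ℝ), HasDerivAt f (f' t) t) (hf' : IntegrableOn f' (Ioi 1)) (N : ℕ) :
    ∫ t in (1 : ℝ)..(N + 1 : ℕ), BBar 1 t • f' t =
      ∑ k ∈ Finset.range (N + 1), f (k + 1) - (2⁻¹ : ℝ) • (f 1 + f (N + 1 : ℕ)) -
        ∫ t in (1 : ℝ)..(N + 1 : ℕ), f t := by
  have hint {g : ℝ → E} (hg : IntegrableOn g (Ioi 1)) {x y : ℝ} (hx : 1 ≤ x) (hxy : x ≤ y) :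
      IntervalIntegrable g volume x y :=
    (intervalIntegrable_iff_integrableOn_Ioc_of_le hxy).2
      (hg.mono_set (Ioc_subset_Ioi_self.trans (Ioi_subset_Ioi hx)))
  induction N with
  | zero =>
    simp only [zero_add, Nat.cast_one, Nat.cast_zero, intervalIntegral.integral_same,
      Finset.range_one, Finset.sum_singleton]
    module
  | succ N ih =>
    have hle : (1 : ℝ) ≤ (N + 1 : ℕ) := by simp
    have hle' : ((N + 1 : ℕ) : ℝ) ≤ (N + 1 + 1 : ℕ) := by simp
    have hf_cont : ContinuousOn f (Ici 1) := fun t ht =>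
      (hderiv t ht).continuousAt.continuousWithinAt
    have hf_int {x y : ℝ} (hx : 1 ≤ x) (hxy : x ≤ y) : IntervalIntegrable f volume x y :=
      (hf_cont.mono fun t ht => hx.trans (uIcc_of_le hxy ▸ ht).1).intervalIntegrable
    have hstep := intervalIntegral_BBar_one_smul_deriv (N + 1 : ℕ)
      (fun t ht => hderiv t (hle.trans (by simpa using ht.1)))
      (hint hf' (by simp) (by linarith))
    push_cast at ih hstep hle hle' ⊢
    rw [← intervalIntegral.integral_add_adjacent_intervals
        (hint (integrableOn_BBar_smul 1 hf') le_rfl hle)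
        (hint (integrableOn_BBar_smul 1 hf') hle hle'),
      ← intervalIntegral.integral_add_adjacent_intervals (hf_int le_rfl hle) (hf_int hle hle'),
      ih, hstep, Finset.sum_range_succ _ (N + 1)]
    push_cast
    module

end IntegrationByParts

section EulerMaclaurin

variable {E : Type*} [NormedAddCommGroup E] [NormedSpace ℝ E]

/-- The constant term of the Euler–Maclaurin formula of order `m` for `f` on `[1, ∞)`, so that
`∑ k ≥ 1, f k = ∫ t in 1..∞, f t + eulerMaclaurinConst m f` for decaying `f` and `1 ≤ m`. -/
def eulerMaclaurinConst (m : ℕ) (f : ℝ → E) : E :=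
  -∑ r ∈ Finset.Icc 1 m, ((bernoulli r : ℝ) / r.factorial) • iteratedDeriv (r - 1) f 1
    + ((-1 : ℝ) ^ (m + 1) / m.factorial) • ∫ t in Ioi (1 : ℝ), BBar m t • iteratedDeriv m f t

lemma eulerMaclaurinConst_one (f : ℝ → E) :
    eulerMaclaurinConst 1 f = (2⁻¹ : ℝ) • f 1 + ∫ t in Ioi (1 : ℝ), BBar 1 t • deriv f t := by
  simp [eulerMaclaurinConst, bernoulli_one, neg_div]

variable [CompleteSpace E] {f : ℝ → E} {m : ℕ}

lemma eulerMaclaurinConst_succ (hm : m ≠ 0)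
    (hdiff : ∀ t ∈ Ici (1 : ℝ), DifferentiableAt ℝ (iteratedDeriv m f) t)
    (hint : IntegrableOn (iteratedDeriv m f) (Ioi 1))
    (hint' : IntegrableOn (iteratedDeriv (m + 1) f) (Ioi 1)) :
    eulerMaclaurinConst (m + 1) f = eulerMaclaurinConst m f := by
  have hsign : (-1 : ℝ) ^ (m + 1) * bernoulli (m + 1) = bernoulli (m + 1) := by
    rcases Nat.even_or_odd (m + 1) with heven | hodd
    · rw [heven.neg_one_pow, one_mul]
    · simp [bernoulli_eq_zero_of_odd hodd (by lia)]
  have hparts := integral_Ioi_BBar_succ_smul_deriv hm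
    (fun t ht => iteratedDeriv_succ (f := f) ▸ (hdiff t ht).hasDerivAt) hint hint'
  rw [BBar_apply_one] at hparts
  rw [eulerMaclaurinConst, eulerMaclaurinConst, hparts, Finset.sum_Icc_succ_top (by lia),
    Nat.add_sub_cancel, Nat.factorial_succ]
  push_cast
  have hm0 : (m.factorial : ℝ) ≠ 0 := by positivity
  have hm1 : (m : ℝ) + 1 ≠ 0 := by positivity
  match_scalars
  · simp
  · field_simp
    linear_combination hsign
  · field_simp
    ring

lemma eulerMaclaurinConst_eq_eulerMaclaurinConst_one (hm : m ≠ 0)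
    (hdiff : ∀ k < m, ∀ t ∈ Ici (1 : ℝ), DifferentiableAt ℝ (iteratedDeriv k f) t)
    (hint : ∀ k ≤ m, IntegrableOn (iteratedDeriv k f) (Ioi 1)) :
    eulerMaclaurinConst m f = eulerMaclaurinConst 1 f := by
  induction m, Nat.one_le_iff_ne_zero.2 hm using Nat.le_induction with
  | base => rfl
  | succ m hm1 ih =>
    have hm0 : m ≠ 0 := by lia
    rw [eulerMaclaurinConst_succ hm0 (hdiff m m.lt_succ_self) (hint m m.le_succ) (hint _ le_rfl),
      ih hm0 (fun k hk => hdiff k (by lia)) (fun k hk => hint k (by lia))]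

lemma tendsto_sum_range_integral_add_eulerMaclaurinConst (hm : m ≠ 0)
    (hdiff : ∀ k < m, ∀ t ∈ Ici (1 : ℝ), DifferentiableAt ℝ (iteratedDeriv k f) t)
    (hint : ∀ k ≤ m, IntegrableOn (iteratedDeriv k f) (Ioi 1)) :
    Tendsto (fun N : ℕ => ∑ k ∈ Finset.range N, f (k + 1)) atTop
      (𝓝 ((∫ t in Ioi (1 : ℝ), f t) + eulerMaclaurinConst m f)) := by
  have hderiv : ∀ t ∈ Ici (1 : ℝ), HasDerivAt f (deriv f t) t := fun t ht =>
    (by simpa using hdiff 0 (by lia) t ht : DifferentiableAt ℝ f t).hasDerivAt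
  have hf : IntegrableOn f (Ioi 1) := by simpa using hint 0 m.zero_le
  have hf' : IntegrableOn (deriv f) (Ioi 1) := by simpa using hint 1 (by lia)
  have hN : Tendsto (fun N : ℕ => ((N + 1 : ℕ) : ℝ)) atTop atTop :=
    tendsto_natCast_atTop_atTop.comp (tendsto_add_atTop_nat 1)
  have hzero : Tendsto (fun N : ℕ => f (N + 1 : ℕ)) atTop (𝓝 0) :=
    (tendsto_zero_of_hasDerivAt_of_integrableOn_Ioi
      (fun t ht => hderiv t (Ioi_subset_Ici_self ht)) hf' hf).comp hN
  have hlim := ((intervalIntegral_tendsto_integral_Ioi 1 hf hN).add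
    ((hzero.const_add (f 1)).const_smul (2⁻¹ : ℝ))).add
    (intervalIntegral_tendsto_integral_Ioi 1 (integrableOn_BBar_smul 1 hf') hN)
  rw [eulerMaclaurinConst_eq_eulerMaclaurinConst_one hm hdiff hint, eulerMaclaurinConst_one,
    ← add_assoc, ← tendsto_add_atTop_iff_nat 1]
  rw [add_zero] at hlim
  refine hlim.congr fun N => ?_
  rw [intervalIntegral_one_BBar_one_smul_deriv hderiv hf' N]
  module

end EulerMaclaurin

section CpowFamily

open Polynomial

lemma hasDerivAt_log_add_mul_ofReal_cpow (a b z : ℂ) {t : ℝ} (ht : 0 < t) :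
    HasDerivAt (fun t : ℝ => (a * Real.log t + b) * (t : ℂ) ^ z)
      ((a * z * Real.log t + (a + b * z)) * (t : ℂ) ^ (z - 1)) t := by
  have ht0 : (t : ℂ) ≠ 0 := by exact_mod_cast ht.ne'
  have hlog : HasDerivAt (fun t : ℝ => (Real.log t : ℂ)) ((t⁻¹ : ℝ) : ℂ) t :=
    (Real.hasDerivAt_log ht.ne').ofReal_comp
  have hpow : HasDerivAt (fun t : ℝ => (t : ℂ) ^ z) (z * (t : ℂ) ^ (z - 1)) t := by
    simpa using! ((hasDerivAt_id (t : ℂ)).cpow_const (c := z) (.inl ht)).comp_ofReal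
  refine (((hlog.const_mul a).add_const b).mul hpow).congr_deriv ?_
  have hz : (t : ℂ) ^ z = (t : ℂ) ^ (z - 1) * t := by
    rw [Complex.cpow_sub _ _ ht0, Complex.cpow_one, div_mul_cancel₀ _ ht0]
  rw [hz]
  push_cast
  field_simp
  ring

lemma iteratedDeriv_log_add_mul_ofReal_cpow (a b z : ℂ) (k : ℕ) {t : ℝ} (ht : 0 < t) :
    iteratedDeriv k (fun t : ℝ => (a * Real.log t + b) * (t : ℂ) ^ z) t =
      (a * (descPochhammer ℂ k).eval z * Real.log t +
        (a * (derivative (descPochhammer ℂ k)).eval z + b * (descPochhammer ℂ k).eval z)) *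
          (t : ℂ) ^ (z - k) := by
  induction k generalizing t with
  | zero => simp
  | succ k ih =>
    have hev := eventuallyEq_of_mem (Ioi_mem_nhds ht) fun x (hx : 0 < x) => ih hx
    rw [iteratedDeriv_succ, hev.deriv_eq, (hasDerivAt_log_add_mul_ofReal_cpow _ _ _ ht).deriv,
      descPochhammer_succ_right]
    simp only [derivative_mul, derivative_sub, derivative_X, derivative_natCast, eval_mul,
      eval_add, eval_sub, eval_X, eval_natCast, eval_one, eval_zero]
    rw [Nat.cast_succ, ← sub_sub]
    ring

lemma iteratedDeriv_ofReal_cpow (z : ℂ) (k : ℕ) {t : ℝ} (ht : 0 < t) :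
    iteratedDeriv k (fun t : ℝ => (t : ℂ) ^ z) t =
      (descPochhammer ℂ k).eval z * (t : ℂ) ^ (z - k) := by
  simpa using iteratedDeriv_log_add_mul_ofReal_cpow 0 1 z k ht

lemma iteratedDeriv_log_mul_ofReal_cpow (z : ℂ) (k : ℕ) {t : ℝ} (ht : 0 < t) :
    iteratedDeriv k (fun t : ℝ => (Real.log t : ℂ) * (t : ℂ) ^ z) t =
      ((descPochhammer ℂ k).eval z * Real.log t + (derivative (descPochhammer ℂ k)).eval z) *
        (t : ℂ) ^ (z - k) := by
  simpa using iteratedDeriv_log_add_mul_ofReal_cpow 1 0 z k ht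

lemma differentiableAt_iteratedDeriv_ofReal_cpow (z : ℂ) (k : ℕ) {t : ℝ} (ht : 0 < t) :
    DifferentiableAt ℝ (iteratedDeriv k fun t : ℝ => (t : ℂ) ^ z) t := by
  have hev := eventuallyEq_of_mem (Ioi_mem_nhds ht) fun x (hx : 0 < x) =>
    iteratedDeriv_ofReal_cpow z k hx
  have hd := hasDerivAt_log_add_mul_ofReal_cpow 0 ((descPochhammer ℂ k).eval z) (z - k) ht
  simp only [zero_mul, zero_add] at hd
  exact hd.differentiableAt.congr_of_eventuallyEq hev

lemma integrableOn_iteratedDeriv_ofReal_cpow {z : ℂ} {k : ℕ} (hz : z.re < k - 1) :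
    IntegrableOn (iteratedDeriv k fun t : ℝ => (t : ℂ) ^ z) (Ioi 1) := by
  have hre : (z - k).re < -1 := by
    simp only [Complex.sub_re, Complex.natCast_re]
    linarith
  have hint : IntegrableOn (fun t : ℝ => (descPochhammer ℂ k).eval z * (t : ℂ) ^ (z - k)) (Ioi 1) :=
    (integrableOn_Ioi_cpow_of_lt hre one_pos).const_mul _
  exact hint.congr_fun (fun t ht => (iteratedDeriv_ofReal_cpow z k (one_pos.trans ht)).symm)
    measurableSet_Ioi

end CpowFamily

section ParametricIntegral

variable {E : Type*} [NormedAddCommGroup E] [NormedSpace ℂ E] {f : ℝ → E}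

lemma mellin_indicator_Ioi_one (f : ℝ → E) (s : ℂ) :
    mellin ((Ioi 1).indicator f) s = ∫ t in Ioi (1 : ℝ), (t : ℂ) ^ (s - 1) • f t := by
  simp only [mellin, ← indicator_smul_apply (Ioi (1 : ℝ)) fun t : ℝ => (t : ℂ) ^ (s - 1)]
  rw [setIntegral_indicator measurableSet_Ioi, inter_eq_right.2 (Ioi_subset_Ioi zero_le_one)]

lemma hasDerivAt_mellin_indicator_Ioi_one (hmeas : AEStronglyMeasurable f) {C : ℝ}
    (hbound : ∀ t, ‖f t‖ ≤ C) {s : ℂ} (hs : s.re < 0) :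
    MellinConvergent (fun t => Real.log t • (Ioi 1).indicator f t) s ∧
      HasDerivAt (mellin ((Ioi 1).indicator f))
        (mellin (fun t => Real.log t • (Ioi 1).indicator f t) s) s := by
  have hbound' (t : ℝ) : ‖(Ioi 1).indicator f t‖ ≤ C :=
    (norm_indicator_le_norm_self f t).trans (hbound t)
  have hloc : LocallyIntegrable ((Ioi 1).indicator f) :=
    (locallyIntegrable_const C).mono (hmeas.indicator measurableSet_Ioi)
      (Eventually.of_forall fun t => (hbound' t).trans (le_abs_self C))
  refine mellin_hasDerivAt_of_isBigO_rpow (a := 0) (b := s.re - 1)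
    (hloc.locallyIntegrableOn _) ?_ hs ?_ (by linarith)
  · exact .of_bound C (Eventually.of_forall fun t => by simpa using hbound' t)
  · refine .of_bound 0 ?_
    filter_upwards [mem_nhdsWithin_of_mem_nhds (Iio_mem_nhds one_pos)] with t ht
    rw [indicator_of_notMem (notMem_Ioi.2 (mem_Iio.1 ht).le), norm_zero, zero_mul]

lemma hasDerivAt_integral_Ioi_one_cpow_smul (hmeas : AEStronglyMeasurable f) {C : ℝ}
    (hbound : ∀ t, ‖f t‖ ≤ C) {z : ℂ} (hz : z.re < -1) :
    IntegrableOn (fun t : ℝ => (t : ℂ) ^ z • Real.log t • f t) (Ioi 1) ∧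
      HasDerivAt (fun w => ∫ t in Ioi (1 : ℝ), (t : ℂ) ^ w • f t)
        (∫ t in Ioi (1 : ℝ), (t : ℂ) ^ z • Real.log t • f t) z := by
  obtain ⟨hconv, hderiv⟩ := hasDerivAt_mellin_indicator_Ioi_one hmeas hbound
    (s := z + 1) (by simpa using by linarith)
  constructor
  · refine (hconv.mono_set (Ioi_subset_Ioi zero_le_one)).congr_fun (fun t ht => ?_)
      measurableSet_Ioi
    simp only [indicator_of_mem ht, add_sub_cancel_right]
  · simp only [← indicator_smul_apply (Ioi (1 : ℝ)) Real.log] at hderiv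
    simpa only [mellin_indicator_Ioi_one, add_sub_cancel_right] using hderiv.comp_add_const z 1

end ParametricIntegral

section EulerMaclaurinCpow

lemma hasDerivAt_iteratedDeriv_ofReal_cpow_one (k : ℕ) (z : ℂ) :
    HasDerivAt (fun w : ℂ => iteratedDeriv k (fun t : ℝ => (t : ℂ) ^ w) 1)
      (iteratedDeriv k (fun t : ℝ => (Real.log t : ℂ) * (t : ℂ) ^ z) 1) z := by
  simp only [iteratedDeriv_ofReal_cpow _ _ one_pos, iteratedDeriv_log_mul_ofReal_cpow _ _ one_pos]
  simpa using (descPochhammer ℂ k).hasDerivAt z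

lemma hasDerivAt_integral_BBar_smul_iteratedDeriv_ofReal_cpow {m : ℕ} {z : ℂ}
    (hz : z.re < m - 1) :
    HasDerivAt
      (fun w : ℂ =>
        ∫ t in Ioi (1 : ℝ), BBar m t • iteratedDeriv m (fun t : ℝ => (t : ℂ) ^ w) t)
      (∫ t in Ioi (1 : ℝ),
        BBar m t • iteratedDeriv m (fun t : ℝ => (Real.log t : ℂ) * (t : ℂ) ^ z) t) z := by
  have hre : (z - m).re < -1 := by
    simp only [Complex.sub_re, Complex.natCast_re]
    linarith
  obtain ⟨C, hC⟩ := exists_norm_BBar_le m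
  obtain ⟨hint, hderiv⟩ := hasDerivAt_integral_Ioi_one_cpow_smul
    (f := fun t => (BBar m t : ℂ))
    (Complex.measurable_ofReal.comp (measurable_BBar m)).aestronglyMeasurable
    (fun t => (Complex.norm_real _).trans_le (hC t)) hre
  have hint' := integrableOn_BBar_smul m (integrableOn_Ioi_cpow_of_lt hre one_pos)
  have hprod := ((descPochhammer ℂ m).hasDerivAt z).mul (hderiv.comp_sub_const z (m : ℂ))
  refine (hprod.congr_of_eventuallyEq (.of_forall fun w => ?_)).congr_deriv ?_
  · simp only [Pi.mul_apply, ← integral_const_mul]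
    refine setIntegral_congr_fun measurableSet_Ioi fun t ht => ?_
    simp only [iteratedDeriv_ofReal_cpow w m (one_pos.trans ht), Complex.real_smul, smul_eq_mul]
    ring
  · rw [← integral_const_mul, ← integral_const_mul, ← integral_add]
    · refine setIntegral_congr_fun measurableSet_Ioi fun t ht => ?_
      simp only [iteratedDeriv_log_mul_ofReal_cpow z m (one_pos.trans ht), Complex.real_smul,
        smul_eq_mul]
      ring
    · refine .const_mul ?_ _
      simpa only [Complex.real_smul, smul_eq_mul, mul_comm] using! hint'
    · exact hint.const_mul _

lemma hasDerivAt_eulerMaclaurinConst_ofReal_cpow {m : ℕ} {z : ℂ} (hz : z.re < m - 1) :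
    HasDerivAt (fun w : ℂ => eulerMaclaurinConst m fun t : ℝ => (t : ℂ) ^ w)
      (eulerMaclaurinConst m fun t : ℝ => (Real.log t : ℂ) * (t : ℂ) ^ z) z := by
  refine .add (.neg (.fun_sum fun r _ => .const_smul _ ?_)) (.const_smul _ ?_)
  · exact hasDerivAt_iteratedDeriv_ofReal_cpow_one (r - 1) z
  · exact hasDerivAt_integral_BBar_smul_iteratedDeriv_ofReal_cpow hz

end EulerMaclaurinCpow

section Zeta

variable {m : ℕ} {s : ℂ}

lemma riemannZeta_eq_inv_add_eulerMaclaurinConst (hm : m ≠ 0) (hs : 1 < s.re) :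
    riemannZeta s = (s - 1)⁻¹ + eulerMaclaurinConst m fun t : ℝ => (t : ℂ) ^ (-s) := by
  have hre : (-s).re < -1 := by simpa using hs
  have hEM := tendsto_sum_range_integral_add_eulerMaclaurinConst (f := fun t : ℝ => (t : ℂ) ^ (-s))
    hm (fun k _ t ht => differentiableAt_iteratedDeriv_ofReal_cpow _ _ (one_pos.trans_le ht))
    (fun k _ => integrableOn_iteratedDeriv_ofReal_cpow (by linarith [k.cast_nonneg (α := ℝ)]))
  have hsum : Summable fun k : ℕ => ((k + 1 : ℕ) : ℂ) ^ (-s) := by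
    refine (summable_nat_add_iff (f := fun k : ℕ => (k : ℂ) ^ (-s)) 1).2 ?_
    simpa [Complex.cpow_neg] using Complex.summable_one_div_nat_cpow.2 hs
  have hzeta : riemannZeta s = ∑' k : ℕ, ((k + 1 : ℕ) : ℂ) ^ (-s) := by
    simp [zeta_eq_tsum_one_div_nat_add_one_cpow hs, Complex.cpow_neg]
  have hintegral : ∫ t in Ioi (1 : ℝ), (t : ℂ) ^ (-s) = (s - 1)⁻¹ := by
    rw [integral_Ioi_cpow_of_lt hre one_pos, Complex.ofReal_one, Complex.one_cpow,
      neg_add_eq_sub, neg_div, ← div_neg, neg_sub, one_div]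
  rw [← hintegral, hzeta]
  refine tendsto_nhds_unique hsum.hasSum.tendsto_sum_nat (hEM.congr fun N => ?_)
  push_cast
  rfl

lemma hasDerivAt_eulerMaclaurinConst_ofReal_cpow_neg (hs : 1 - (m : ℝ) < s.re) :
    HasDerivAt (fun s : ℂ => eulerMaclaurinConst m fun t : ℝ => (t : ℂ) ^ (-s))
      (-eulerMaclaurinConst m fun t : ℝ => (Real.log t : ℂ) * (t : ℂ) ^ (-s)) s := by
  have hre : (-s).re < m - 1 := by
    rw [Complex.neg_re]
    linarith
  simpa using! (hasDerivAt_eulerMaclaurinConst_ofReal_cpow hre).comp s (hasDerivAt_neg s)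

lemma riemannZeta₀_eqOn_eulerMaclaurinConst (hm : m ≠ 0) :
    EqOn riemannZeta₀ (fun s : ℂ => eulerMaclaurinConst m fun t : ℝ => (t : ℂ) ^ (-s))
      {s : ℂ | 1 - (m : ℝ) < s.re} := by
  have hopen (x : ℝ) : IsOpen {s : ℂ | x < s.re} := isOpen_lt continuous_const Complex.continuous_re
  have hdiff : DifferentiableOn ℂ
      (fun s : ℂ => eulerMaclaurinConst m fun t : ℝ => (t : ℂ) ^ (-s))
      {s : ℂ | 1 - (m : ℝ) < s.re} :=
    fun s hs =>
      (hasDerivAt_eulerMaclaurinConst_ofReal_cpow_neg hs).differentiableAt.differentiableWithinAt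
  refine (differentiable_riemannZeta₀.differentiableOn.analyticOnNhd
    (hopen _)).eqOn_of_preconnected_of_eventuallyEq (hdiff.analyticOnNhd (hopen _))
    (convex_halfSpace_re_gt _).isPreconnected (z₀ := 2) ?_ ?_
  · simpa using by linarith [m.cast_nonneg (α := ℝ)]
  · filter_upwards [(hopen 1).mem_nhds (by simp : (2 : ℂ) ∈ {s : ℂ | 1 < s.re})] with s hs
    have hs1 : s ≠ 1 := by
      rintro rfl
      simp at hs
    exact add_left_cancel
      ((riemannZeta_eq_inv_sub_add hs1).symm.trans
        (riemannZeta_eq_inv_add_eulerMaclaurinConst hm hs))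

lemma deriv_riemannZeta_eq_eulerMaclaurinConst_log (hm : m ≠ 0) (hs : 1 - (m : ℝ) < s.re)
    (hs1 : s ≠ 1) :
    deriv riemannZeta s = -((s - 1)⁻¹) ^ 2 -
      eulerMaclaurinConst m fun t : ℝ => (Real.log t : ℂ) * (t : ℂ) ^ (-s) := by
  have hnhds : {s : ℂ | 1 - (m : ℝ) < s.re} ∈ 𝓝 s :=
    (isOpen_lt continuous_const Complex.continuous_re).mem_nhds hs
  rw [deriv_riemannZeta_eq_neg_inv_sub_sq_add hs1,
    ((riemannZeta₀_eqOn_eulerMaclaurinConst hm).eventuallyEq_of_mem hnhds).deriv_eq,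
    (hasDerivAt_eulerMaclaurinConst_ofReal_cpow_neg hs).deriv, ← sub_eq_add_neg]

end Zeta

section Complexification

variable (f : ℝ → ℝ)

lemma deriv_ofReal_comp (t : ℝ) : deriv (fun x => (f x : ℂ)) t = ((deriv f t : ℝ) : ℂ) := by
  by_cases hf : DifferentiableAt ℝ f t
  · exact hf.hasDerivAt.ofReal_comp.deriv
  · have hf' : ¬DifferentiableAt ℝ (fun x => (f x : ℂ)) t := fun h =>
      hf (by simpa using! Complex.reCLM.differentiableAt.comp t h)
    rw [deriv_zero_of_not_differentiableAt hf, deriv_zero_of_not_differentiableAt hf',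
      Complex.ofReal_zero]

lemma iteratedDeriv_ofReal_comp (k : ℕ) :
    iteratedDeriv k (fun x => (f x : ℂ)) = fun t => ((iteratedDeriv k f t : ℝ) : ℂ) := by
  induction k with
  | zero => simp
  | succ k ih =>
    funext t
    rw [iteratedDeriv_succ, ih, deriv_ofReal_comp, iteratedDeriv_succ]

lemma eulerMaclaurinConst_ofReal_comp (m : ℕ) :
    eulerMaclaurinConst m (fun x => (f x : ℂ)) = ((eulerMaclaurinConst m f : ℝ) : ℂ) := by
  simp only [eulerMaclaurinConst, iteratedDeriv_ofReal_comp, Complex.real_smul, smul_eq_mul,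
    ← Complex.ofReal_mul, integral_complex_ofReal]
  push_cast
  rfl

end Complexification

lemma Cclassical_eq_eulerMaclaurinConst (n j : ℕ) :
    Cclassical n j = eulerMaclaurinConst (n + 1) fun t : ℝ => t ^ j * Real.log t := by
  simp [Cclassical, eulerMaclaurinConst, pow_succ]

/-- `C_j = −ζ'(−j) − 1/(j+1)²`; in particular `C_j` does not depend on the auxiliary
integer `n ≥ j+1` used in its definition. -/
theorem Cclassical_eq_neg_zeta_deriv (j n : ℕ) (hn : j + 1 ≤ n) :
    ((Cclassical n j : ℝ) : ℂ) =
      -deriv riemannZeta (-(j:ℂ)) - 1 / ((j:ℂ) + 1) ^ 2 := by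
  have hre : 1 - ((n + 1 : ℕ) : ℝ) < (-(j : ℂ)).re := by
    have : (j : ℝ) + 1 ≤ n := by exact_mod_cast hn
    simp only [Complex.neg_re, Complex.natCast_re]
    push_cast
    linarith
  have hj : -(j : ℂ) ≠ 1 := fun h => by
    have : -(j : ℝ) = 1 := by exact_mod_cast h
    linarith [j.cast_nonneg (α := ℝ)]
  have hsq : (-(j : ℂ) - 1) ^ 2 = (j + 1) ^ 2 := by ring
  have hC : ((Cclassical n j : ℝ) : ℂ) =
      eulerMaclaurinConst (n + 1) fun t : ℝ => (Real.log t : ℂ) * (t : ℂ) ^ (-(-(j : ℂ))) := by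
    simp only [Cclassical_eq_eulerMaclaurinConst, ← eulerMaclaurinConst_ofReal_comp, neg_neg,
      Complex.cpow_natCast, Complex.ofReal_mul, Complex.ofReal_pow, mul_comm]
  rw [hC, deriv_riemannZeta_eq_eulerMaclaurinConst_log n.succ_ne_zero hre hj, inv_pow, hsq]
  ring

end
end

section
/- For every integer j ≥ 0: exp(ζ'(−j)) = exp(P_j(1)) · ∏_{k=1}^{∞} (1 + 1/k)^{B_{j+1}(k+1)/(j+1)} · exp(P_j(k+1) − P_j(k)), and this infinite product converges absolutely. -/
open scoped BigOperators

noncomputable section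

/-- Bernoulli number `B_r` (with `B_1 = -1/2`), as a complex number. -/
def BC (r : ℕ) : ℂ := ((bernoulli r : ℚ) : ℂ)

/-- Bernoulli polynomial `B_m(x)` evaluated at a complex number. -/
def BPC (m : ℕ) (x : ℂ) : ℂ := Polynomial.aeval x (Polynomial.bernoulli m)

/-- `φ_{j,r} = (d/dt)^r [t^{j+1} log t/(j+1) − t^{j+1}/(j+1)²]` at `t = 1`. -/
def phiJR (j r : ℕ) : ℝ :=
  iteratedDeriv r (fun t : ℝ => t^(j+1) * Real.log t / (j+1) - t^(j+1) / ((j:ℝ)+1)^2) 1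

/-- The polynomial `P_j(x) = Σ_{r=0}^{j+1} (B_r/r!)·φ_{j,r}·x^{j+1−r}`. -/
def Pj (j : ℕ) (x : ℂ) : ℂ :=
  ∑ r ∈ Finset.range (j+2), BC r / r.factorial * ((phiJR j r : ℝ) : ℂ) * x^(j+1-r)

/-!
The operator `D / (e ^ D - 1)`, truncated after `j + 2` terms and applied to `x ^ a / a`, gives a
function `G a` with `G a (x + 1) - G a x = x ^ (a - 1) + O(x ^ (Re a - j - 3))`, by Euler–Maclaurin
summation on a unit interval. Summing the error over `x = 1, 2, 3, …` telescopes to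
`ζ (1 - a) + G a 1` when `Re a < 0`, and by analytic continuation this holds for all `a ≠ 0` with
`Re a < j + 2`. Now differentiate in `a` at `a = j + 1`. There `φ_{j,r}` is the derivative of
`a (a - 1) ⋯ (a - r + 1) / a`, so `∂G/∂a = P_j x + B_{j+1}(x) / (j + 1) * log x`, and the `k`-th
term of the differentiated series is minus the logarithm of the `k`-th factor of the product.
-/

section EulerMaclaurin

open Finset Nat Set

variable {E : Type*} [NormedAddCommGroup E] [NormedSpace ℝ E]

lemma hasDerivAt_bernoulliFun_one_sub_div_factorial (n : ℕ) (t : ℝ) :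
    HasDerivAt (fun u => bernoulliFun (n + 1) (1 - u) / (n + 1)!)
      (-(bernoulliFun n (1 - t) / n !)) t := by
  have h := ((hasDerivAt_bernoulliFun (n + 1) (1 - t)).comp_const_sub 1 t).div_const ((n + 1)! : ℝ)
  refine h.congr_deriv ?_
  rw [factorial_succ, add_tsub_cancel_right]
  push_cast
  field_simp

lemma hasDerivAt_sum_bernoulliFun_smul {F : ℕ → ℝ → E} {n : ℕ} {t : ℝ}
    (hF : ∀ r ≤ n, HasDerivAt (F r) (F (r + 1) t) t) :
    HasDerivAt (fun u => ∑ r ∈ range (n + 1), (bernoulliFun r (1 - u) / r !) • F r u)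
      ((bernoulliFun n (1 - t) / n !) • F (n + 1) t) t := by
  induction n with
  | zero => simpa using hF 0 le_rfl
  | succ n ih =>
    have h := (ih fun r hr => hF r (hr.trans n.le_succ)).add
      ((hasDerivAt_bernoulliFun_one_sub_div_factorial n t).smul (hF (n + 1) le_rfl))
    simp only [sum_range_succ _ (n + 1)]
    exact h.congr_deriv (by module)

lemma sum_bernoulliFun_smul_sub_sum_bernoulliFun_smul (F : ℕ → ℝ → E) (j : ℕ) :
    ∑ r ∈ range (j + 2), (bernoulliFun r 0 / r !) • F r 1
        - ∑ r ∈ range (j + 2), (bernoulliFun r 1 / r !) • F r 0 =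
      ∑ r ∈ range (j + 2), ((bernoulli r : ℝ) / r !) • (F r 1 - F r 0) - F 1 0 := by
  have jump : ∑ r ∈ range (j + 2), ((if r = 1 then 1 else 0 : ℝ) / r !) • F r 0 = F 1 0 := by
    rw [sum_eq_single_of_mem 1 (by simp) fun r _ hr => by simp [hr]]
    simp
  rw [← jump, ← sum_sub_distrib, ← sum_sub_distrib]
  refine sum_congr rfl fun r _ => ?_
  rw [bernoulliFun_eval_one, bernoulliFun_eval_zero, add_div]
  module

lemma exists_norm_sum_bernoulli_smul_sub_le (j : ℕ) :
    ∃ C ≥ 0, ∀ (F : ℕ → ℝ → E) (K : ℝ),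
      (∀ r ≤ j + 2, ∀ t ∈ Icc (0 : ℝ) 1, HasDerivAt (F r) (F (r + 1) t) t) →
      (∀ t ∈ Icc (0 : ℝ) 1, ‖F (j + 3) t‖ ≤ K) →
      ‖∑ r ∈ range (j + 2), ((bernoulli r : ℝ) / r !) • (F r 1 - F r 0) - F 1 0‖ ≤ C * K := by
  obtain ⟨C, hC⟩ := isCompact_Icc (a := (0 : ℝ)) (b := 1) |>.exists_bound_of_continuousOn
    (f := fun t => (bernoulliFun (j + 2) (1 - t) - bernoulli (j + 2)) / (j + 2)!) (by fun_prop)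
  have hC₀ : 0 ≤ C := (norm_nonneg _).trans (hC 0 (by simp))
  refine ⟨C, hC₀, fun F K hF hK => ?_⟩
  -- Subtracting the value at the endpoints from the last Bernoulli polynomial makes the last term
  -- vanish at both of them, which gains one derivative in the remainder.
  have hderiv (t : ℝ) (ht : t ∈ Icc (0 : ℝ) 1) : HasDerivAt
      (fun u => ∑ r ∈ range (j + 3), (bernoulliFun r (1 - u) / r !) • F r u
        - ((bernoulli (j + 2) : ℝ) / (j + 2)!) • F (j + 2) u)
      (((bernoulliFun (j + 2) (1 - t) - bernoulli (j + 2)) / (j + 2)!) • F (j + 3) t) t :=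
    ((hasDerivAt_sum_bernoulliFun_smul fun r hr => hF r hr t ht).sub
      ((hF (j + 2) le_rfl t ht).const_smul _)).congr_deriv (by module)
  have hbound := norm_image_sub_le_of_norm_deriv_le_segment_01'
    (fun t ht => (hderiv t ht).hasDerivWithinAt) (C := C * K) fun t ht => by
      have ht' := Ico_subset_Icc_self ht
      rw [norm_smul]
      exact mul_le_mul (hC t ht') (hK t ht') (norm_nonneg _) hC₀
  have hends : bernoulliFun (j + 2) 1 = bernoulliFun (j + 2) 0 :=
    bernoulliFun_endpoints_eq_of_ne_one (by omega)
  convert hbound using 2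
  rw [← sum_bernoulliFun_smul_sub_sum_bernoulliFun_smul]
  simp only [sum_range_succ _ (j + 2), sub_self, sub_zero, hends, bernoulliFun_eval_zero]
  abel

end EulerMaclaurin

section ComplexAnalysis

open Filter Topology Complex

lemma summable_norm_exp_sub_one {ι : Type*} {f : ι → ℂ} (hf : Summable f) :
    Summable fun i => ‖exp (f i) - 1‖ := by
  have hO : (fun z => exp z - 1) =O[𝓝 0] fun z => z := by
    simpa using (hasDerivAt_exp 0).isBigO_sub
  exact summable_of_isBigO hf.norm (hO.comp_tendsto hf.tendsto_cofinite_zero).norm_norm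

lemma one_add_one_div_ofReal_ne_zero {x : ℝ} (hx : 0 < x) : (1 + 1 / x : ℂ) ≠ 0 := by
  exact_mod_cast (by positivity : 1 + 1 / x ≠ 0)

lemma log_add_one_sub_log {x : ℝ} (hx : 0 < x) :
    log (x + 1) - log x = log (1 + 1 / x) := by
  have hx₀ : (x : ℂ) ≠ 0 := mod_cast hx.ne'
  rw [← ofReal_log hx.le, sub_eq_iff_eq_add',
    ← log_ofReal_mul hx (one_add_one_div_ofReal_ne_zero hx)]
  congr 1
  field_simp

lemma isPreconnected_slitPlane_inter_re_lt {σ : ℝ} (hσ : 1 < σ) :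
    IsPreconnected (slitPlane ∩ {a : ℂ | a.re < σ}) :=
  have hstar : StarConvex ℝ 1 (slitPlane ∩ {a : ℂ | a.re < σ}) :=
    starConvex_one_slitPlane.inter ((convex_halfSpace_re_lt σ).starConvex (by simpa))
  (hstar.isPathConnected ⟨one_mem_slitPlane, by simpa⟩).isConnected.isPreconnected

lemma differentiableAt_riemannZeta_one_sub {a : ℂ} (ha : a ≠ 0) :
    DifferentiableAt ℂ (fun b => riemannZeta (1 - b)) a :=
  (differentiableAt_riemannZeta (by simpa using ha)).comp a (by fun_prop)

lemma summable_natCast_add_one_rpow {p : ℝ} (hp : p < -1) :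
    Summable fun k : ℕ => ((k : ℝ) + 1) ^ p := by
  simpa using (summable_nat_add_iff 1).2 (Real.summable_nat_rpow.2 hp)

lemma hasSum_natCast_add_one_cpow_riemannZeta {s : ℂ} (hs : 1 < s.re) :
    HasSum (fun k : ℕ => ((k : ℂ) + 1) ^ (-s)) (riemannZeta s) := by
  have hsummable : Summable fun k : ℕ => 1 / ((k : ℂ) + 1) ^ s := by
    simpa using (summable_nat_add_iff 1).2 (summable_one_div_nat_cpow.2 hs)
  simpa only [zeta_eq_tsum_one_div_nat_add_one_cpow hs, cpow_neg, one_div] using hsummable.hasSum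

variable {ι E : Type*} [NormedAddCommGroup E] [NormedSpace ℂ E] [CompleteSpace E]
  {F : ι → ℂ → E} {u : ι → ℝ} {a : ℂ}

lemma differentiableAt_tsum_of_eventually_norm_le (hu : Summable u)
    (hF : ∀ᶠ z in 𝓝 a, ∀ i, DifferentiableAt ℂ (F i) z)
    (hle : ∀ᶠ z in 𝓝 a, ∀ i, ‖F i z‖ ≤ u i) :
    DifferentiableAt ℂ (fun z => ∑' i, F i z) a := by
  obtain ⟨U, hU, hopen, haU⟩ := eventually_nhds_iff.1 (hF.and hle)
  exact (differentiableOn_tsum_of_summable_norm hu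
    (fun i z hz => ((hU z hz).1 i).differentiableWithinAt) hopen
    fun i z hz => (hU z hz).2 i).differentiableAt (hopen.mem_nhds haU)

lemma hasSum_deriv_of_eventually_norm_le (hu : Summable u)
    (hF : ∀ᶠ z in 𝓝 a, ∀ i, DifferentiableAt ℂ (F i) z)
    (hle : ∀ᶠ z in 𝓝 a, ∀ i, ‖F i z‖ ≤ u i) :
    HasSum (fun i => deriv (F i) a) (deriv (fun z => ∑' i, F i z) a) := by
  obtain ⟨U, hU, hopen, haU⟩ := eventually_nhds_iff.1 (hF.and hle)
  exact hasSum_deriv_of_summable_norm hu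
    (fun i z hz => ((hU z hz).1 i).differentiableWithinAt) hopen
    (fun i z hz => (hU z hz).2 i) haU

end ComplexAnalysis

section CpowAntidiff

open Finset Nat Filter Topology Complex

/-- The `r`-th derivative in `x` of `x ^ a / a`, the building block of the Euler–Maclaurin
approximation `cpowAntidiff`; it takes the junk value `0` at `a = 0`. -/
def cpowDivDeriv (r : ℕ) (a x : ℂ) : ℂ :=
  (descPochhammer ℂ r).eval a / a * x ^ (a - r)

/-- The Euler–Maclaurin approximation to a solution `G` of `G (x + 1) - G x = x ^ (a - 1)`: the
first `j + 2` terms of the operator `D / (e ^ D - 1)`, `D = d/dx`, applied to `x ^ a / a`. -/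
def cpowAntidiff (j : ℕ) (a x : ℂ) : ℂ :=
  ∑ r ∈ range (j + 2), BC r / r ! * cpowDivDeriv r a x

/-- The error with which `cpowAntidiff j a` solves the difference equation
`G (x + 1) - G x = x ^ (a - 1)`. -/
def cpowAntidiffDefect (j : ℕ) (a x : ℂ) : ℂ :=
  x ^ (a - 1) - (cpowAntidiff j a (x + 1) - cpowAntidiff j a x)

lemma hasDerivAt_cpowDivDeriv_ofReal (r : ℕ) (a : ℂ) {t : ℝ} (ht : 0 < t) :
    HasDerivAt (fun u : ℝ => cpowDivDeriv r a u) (cpowDivDeriv (r + 1) a t) t := by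
  have h := (((hasDerivAt_id (t : ℂ)).cpow_const (c := a - r) (Or.inl (by simpa))).const_mul
    ((descPochhammer ℂ r).eval a / a)).comp_ofReal
  refine h.congr_deriv ?_
  simp only [cpowDivDeriv, id, descPochhammer_succ_eval, mul_one, cast_succ, sub_add_eq_sub_sub]
  ring

lemma norm_cpowDivDeriv_ofReal (r : ℕ) (a : ℂ) {x : ℝ} (hx : 0 < x) :
    ‖cpowDivDeriv r a x‖ = ‖(descPochhammer ℂ r).eval a / a‖ * x ^ (a.re - r) := by
  rw [cpowDivDeriv, norm_mul, norm_cpow_eq_rpow_re_of_pos hx, sub_re, natCast_re]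

lemma cpowDivDeriv_one {a : ℂ} (ha : a ≠ 0) (x : ℂ) : cpowDivDeriv 1 a x = x ^ (a - 1) := by
  simp [cpowDivDeriv, ha]

lemma exists_norm_cpowAntidiffDefect_le (j : ℕ) :
    ∃ C ≥ 0, ∀ a : ℂ, a ≠ 0 → a.re ≤ j + 3 → ∀ x : ℝ, 0 < x →
      ‖cpowAntidiffDefect j a x‖ ≤
        C * (‖(descPochhammer ℂ (j + 3)).eval a / a‖ * x ^ (a.re - (j + 3))) := by
  obtain ⟨C, hC₀, hC⟩ := exists_norm_sum_bernoulli_smul_sub_le (E := ℂ) j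
  refine ⟨C, hC₀, fun a ha hre x hx => ?_⟩
  have hpos {t : ℝ} (ht : t ∈ Set.Icc (0 : ℝ) 1) : 0 < x + t := by linarith [ht.1]
  have h := hC (fun r t => cpowDivDeriv r a (x + t : ℝ))
    (fun r _ t ht => (hasDerivAt_cpowDivDeriv_ofReal r a (hpos ht)).comp_const_add x t)
    (K := ‖(descPochhammer ℂ (j + 3)).eval a / a‖ * x ^ (a.re - (j + 3))) fun t ht => by
      rw [norm_cpowDivDeriv_ofReal _ _ (hpos ht)]
      push_cast
      gcongr ?_ * ?_
      exact Real.rpow_le_rpow_of_nonpos hx (by linarith [ht.1]) (by linarith)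
  convert h using 1
  rw [← norm_neg]
  simp [cpowAntidiffDefect, cpowAntidiff, cpowDivDeriv_one ha, BC, mul_sub]

lemma exists_summable_bound_cpowAntidiffDefect (j : ℕ) {a : ℂ} (ha : a ≠ 0)
    (hre : a.re < j + 2) :
    ∃ u : ℕ → ℝ, Summable u ∧
      ∀ᶠ b in 𝓝 a, ∀ k : ℕ, ‖cpowAntidiffDefect j b (k + 1)‖ ≤ u k := by
  obtain ⟨C, hC₀, hC⟩ := exists_norm_cpowAntidiffDefect_le j
  obtain ⟨σ, haσ, hσ⟩ := exists_between hre
  have hcoeff : ContinuousAt (fun b => ‖(descPochhammer ℂ (j + 3)).eval b / b‖) a :=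
    ((descPochhammer ℂ (j + 3)).continuousAt.div continuousAt_id ha).norm
  obtain ⟨K, hK⟩ := exists_gt ‖(descPochhammer ℂ (j + 3)).eval a / a‖
  have hK₀ : 0 ≤ K := (norm_nonneg _).trans hK.le
  refine ⟨fun k => C * (K * ((k : ℝ) + 1) ^ (σ - (j + 3))),
    ((summable_natCast_add_one_rpow (by linarith)).mul_left _).mul_left _, ?_⟩
  filter_upwards [eventually_ne_nhds ha, continuous_re.continuousAt.eventually_lt_const haσ,
    hcoeff.eventually_lt_const hK] with b hb hbσ hbK k
  have h := hC b hb (by linarith) (k + 1) (by positivity)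
  push_cast at h
  refine h.trans ?_
  gcongr
  linarith [k.cast_nonneg (α := ℝ)]

lemma summable_cpowAntidiffDefect (j : ℕ) {a : ℂ} (ha : a ≠ 0) (hre : a.re < j + 2) :
    Summable fun k : ℕ => cpowAntidiffDefect j a (k + 1) := by
  obtain ⟨u, hu, hbound⟩ := exists_summable_bound_cpowAntidiffDefect j ha hre
  exact .of_norm_bounded hu hbound.self_of_nhds

lemma differentiableAt_cpowDivDeriv (r : ℕ) {a x : ℂ} (ha : a ≠ 0) (hx : x ≠ 0) :
    DifferentiableAt ℂ (fun b => cpowDivDeriv r b x) a :=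
  ((descPochhammer ℂ r).differentiableAt.div differentiableAt_id ha).mul
    ((differentiableAt_id.sub_const _).const_cpow (.inl hx))

lemma differentiableAt_cpowAntidiff (j : ℕ) {a x : ℂ} (ha : a ≠ 0) (hx : x ≠ 0) :
    DifferentiableAt ℂ (fun b => cpowAntidiff j b x) a :=
  .fun_sum fun r _ => (differentiableAt_cpowDivDeriv r ha hx).const_mul _

lemma differentiableAt_cpowAntidiffDefect (j : ℕ) {a x : ℂ} (ha : a ≠ 0) (hx : x ≠ 0)
    (hx' : x + 1 ≠ 0) : DifferentiableAt ℂ (fun b => cpowAntidiffDefect j b x) a :=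
  ((differentiableAt_id.sub_const 1).const_cpow (.inl hx)).sub
    ((differentiableAt_cpowAntidiff j ha hx').sub (differentiableAt_cpowAntidiff j ha hx))

lemma eventually_differentiableAt_cpowAntidiffDefect (j : ℕ) {a : ℂ} (ha : a ≠ 0) :
    ∀ᶠ b in 𝓝 a, ∀ k : ℕ, DifferentiableAt ℂ (fun b => cpowAntidiffDefect j b (k + 1)) b := by
  filter_upwards [eventually_ne_nhds ha] with b hb k
  exact differentiableAt_cpowAntidiffDefect j hb k.cast_add_one_ne_zero
    (mod_cast (k + 1).succ_ne_zero)

lemma tendsto_cpowAntidiff_atTop_zero (j : ℕ) {a : ℂ} (ha : a.re < 0) :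
    Tendsto (fun n : ℕ => cpowAntidiff j a (n + 1)) atTop (𝓝 0) := by
  have hterm (r : ℕ) : Tendsto (fun n : ℕ => cpowDivDeriv r a (n + 1)) atTop (𝓝 0) := by
    have hpow : Tendsto (fun n : ℕ => ((n : ℝ) + 1) ^ (-(r - a.re))) atTop (𝓝 0) :=
      (tendsto_rpow_neg_atTop (by linarith [r.cast_nonneg (α := ℝ)])).comp
        (tendsto_atTop_add_const_right _ 1 tendsto_natCast_atTop_atTop)
    refine squeeze_zero_norm (fun n => le_of_eq ?_)
      (by simpa using hpow.const_mul ‖(descPochhammer ℂ r).eval a / a‖)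
    simpa using norm_cpowDivDeriv_ofReal r a (x := n + 1) (by positivity)
  simpa [cpowAntidiff] using tendsto_finsetSum (range (j + 2)) fun r _ =>
    (hterm r).const_mul (BC r / r !)

lemma hasSum_cpowAntidiffDefect_of_re_neg (j : ℕ) {a : ℂ} (ha : a.re < 0) :
    HasSum (fun k : ℕ => cpowAntidiffDefect j a (k + 1))
      (riemannZeta (1 - a) + cpowAntidiff j a 1) := by
  have ha₀ : a ≠ 0 := by
    rintro rfl
    simp at ha
  have hpartial (n : ℕ) : ∑ k ∈ range n, cpowAntidiffDefect j a (k + 1) =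
      ∑ k ∈ range n, ((k : ℂ) + 1) ^ (-(1 - a)) + cpowAntidiff j a 1
        - cpowAntidiff j a (n + 1) := by
    have htelescope := sum_range_sub (fun k : ℕ => cpowAntidiff j a (k + 1)) n
    push_cast at htelescope
    simp only [cpowAntidiffDefect, sum_sub_distrib, neg_sub] at htelescope ⊢
    rw [htelescope, zero_add]
    ring
  have hsummable := summable_cpowAntidiffDefect j ha₀ (ha.trans (by positivity))
  rw [hsummable.hasSum_iff_tendsto_nat]
  simp only [hpartial]
  have hzeta := hasSum_natCast_add_one_cpow_riemannZeta (s := 1 - a)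
    (by rw [sub_re, one_re]; linarith)
  simpa using (hzeta.tendsto_sum_nat.add_const _).sub (tendsto_cpowAntidiff_atTop_zero j ha)

lemma differentiableAt_tsum_cpowAntidiffDefect (j : ℕ) {a : ℂ} (ha : a ≠ 0)
    (hre : a.re < j + 2) :
    DifferentiableAt ℂ (fun b => ∑' k : ℕ, cpowAntidiffDefect j b (k + 1)) a := by
  obtain ⟨u, hu, hbound⟩ := exists_summable_bound_cpowAntidiffDefect j ha hre
  exact differentiableAt_tsum_of_eventually_norm_le hu
    (eventually_differentiableAt_cpowAntidiffDefect j ha) hbound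

lemma hasSum_deriv_cpowAntidiffDefect_deriv_tsum (j : ℕ) {a : ℂ} (ha : a ≠ 0)
    (hre : a.re < j + 2) :
    HasSum (fun k : ℕ => deriv (fun b => cpowAntidiffDefect j b (k + 1)) a)
      (deriv (fun b => ∑' k : ℕ, cpowAntidiffDefect j b (k + 1)) a) := by
  obtain ⟨u, hu, hbound⟩ := exists_summable_bound_cpowAntidiffDefect j ha hre
  exact hasSum_deriv_of_eventually_norm_le hu
    (eventually_differentiableAt_cpowAntidiffDefect j ha) hbound

lemma tsum_cpowAntidiffDefect (j : ℕ) {a : ℂ} (ha : a ≠ 0) (hre : a.re < j + 2) :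
    ∑' k : ℕ, cpowAntidiffDefect j a (k + 1) =
      riemannZeta (1 - a) + cpowAntidiff j a 1 := by
  obtain hneg | hnonneg := lt_or_ge a.re 0
  · exact (hasSum_cpowAntidiffDefect_of_re_neg j hneg).tsum_eq
  have haU : a ∈ slitPlane ∩ {b : ℂ | b.re < j + 2} := by
    refine ⟨mem_slitPlane_iff.2 (hnonneg.lt_or_eq.imp_right fun hzero him => ha ?_), hre⟩
    exact Complex.ext hzero.symm him
  have hopen : IsOpen (slitPlane ∩ {b : ℂ | b.re < j + 2}) :=
    isOpen_slitPlane.inter (isOpen_lt continuous_re continuous_const)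
  have hconn := isPreconnected_slitPlane_inter_re_lt (σ := j + 2)
    (by linarith [j.cast_nonneg (α := ℝ)])
  have hleft : AnalyticOnNhd ℂ (fun b => ∑' k : ℕ, cpowAntidiffDefect j b (k + 1)) _ :=
    DifferentiableOn.analyticOnNhd (fun b hb => (differentiableAt_tsum_cpowAntidiffDefect j
      (slitPlane_ne_zero hb.1) hb.2).differentiableWithinAt) hopen
  have hright : AnalyticOnNhd ℂ (fun b => riemannZeta (1 - b) + cpowAntidiff j b 1) _ :=
    DifferentiableOn.analyticOnNhd (fun b hb =>
      have hb₀ := slitPlane_ne_zero hb.1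
      ((differentiableAt_riemannZeta_one_sub hb₀).add
        (differentiableAt_cpowAntidiff j hb₀ one_ne_zero)).differentiableWithinAt) hopen
  have hre₀ : (-1 + I).re < 0 := by simp
  have hmem : -1 + I ∈ slitPlane ∩ {b : ℂ | b.re < j + 2} :=
    ⟨by simp [mem_slitPlane_iff], hre₀.trans (by positivity)⟩
  refine hleft.eqOn_of_preconnected_of_eventuallyEq hright hconn hmem ?_ haU
  filter_upwards [continuous_re.continuousAt.eventually_lt_const hre₀] with b hb
  exact (hasSum_cpowAntidiffDefect_of_re_neg j hb).tsum_eq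

theorem hasSum_deriv_cpowAntidiffDefect (j : ℕ) {a : ℂ} (ha : a ≠ 0) (hre : a.re < j + 2) :
    HasSum (fun k : ℕ => deriv (fun b => cpowAntidiffDefect j b (k + 1)) a)
      (deriv (fun b => cpowAntidiff j b 1) a - deriv riemannZeta (1 - a)) := by
  have hev : (fun b => ∑' k : ℕ, cpowAntidiffDefect j b (k + 1)) =ᶠ[𝓝 a]
      fun b => riemannZeta (1 - b) + cpowAntidiff j b 1 := by
    filter_upwards [eventually_ne_nhds ha, continuous_re.continuousAt.eventually_lt_const hre]
      with b hb hbre using tsum_cpowAntidiffDefect j hb hbre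
  convert hasSum_deriv_cpowAntidiffDefect_deriv_tsum j ha hre using 1
  rw [hev.deriv_eq, deriv_fun_add (differentiableAt_riemannZeta_one_sub ha)
    (differentiableAt_cpowAntidiff j ha one_ne_zero), deriv_comp_const_sub]
  ring

end CpowAntidiff

section NegNat

open Finset Nat Topology Complex Polynomial

lemma iteratedDeriv_rpow_mul_log (a b c : ℝ) (r : ℕ) {t : ℝ} (ht : 0 < t) :
    iteratedDeriv r (fun u : ℝ => u ^ a * (b * Real.log u + c)) t =
      t ^ (a - r) * ((descPochhammer ℝ r).eval a * (b * Real.log t + c)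
        + b * (derivative (descPochhammer ℝ r)).eval a) := by
  induction r generalizing t with
  | zero => simp
  | succ r ih =>
    have hev : iteratedDeriv r (fun u : ℝ => u ^ a * (b * Real.log u + c)) =ᶠ[𝓝 t] fun u =>
        u ^ (a - r) * ((descPochhammer ℝ r).eval a * (b * Real.log u + c)
          + b * (derivative (descPochhammer ℝ r)).eval a) := by
      filter_upwards [eventually_gt_nhds ht] with u hu using ih hu
    have hderiv := (Real.hasDerivAt_rpow_const (p := a - r) (.inl ht.ne')).mul
      (((((Real.hasDerivAt_log ht.ne').const_mul b).add_const c).const_mul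
        ((descPochhammer ℝ r).eval a)).add_const (b * (derivative (descPochhammer ℝ r)).eval a))
    rw [iteratedDeriv_succ, hev.deriv_eq]
    refine hderiv.deriv.trans ?_
    have hpow : t ^ (a - r) = t ^ (a - r - 1) * t := by
      rw [← Real.rpow_add_one ht.ne', sub_add_cancel]
    rw [hpow, descPochhammer_succ_right]
    simp only [cast_succ, sub_add_eq_sub_sub, derivative_mul, eval_mul, eval_add, eval_sub, eval_X,
      eval_natCast, derivative_sub, derivative_X, derivative_natCast, eval_zero, eval_one]
    field_simp
    ring

lemma phiJR_eq (j r : ℕ) :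
    phiJR j r = (derivative (descPochhammer ℝ r)).eval (j + 1 : ℝ) / (j + 1)
      - (descPochhammer ℝ r).eval (j + 1 : ℝ) / (j + 1) ^ 2 := by
  have hfun : (fun t : ℝ => t ^ (j + 1) * Real.log t / (j + 1) - t ^ (j + 1) / ((j : ℝ) + 1) ^ 2) =
      fun t => t ^ (j + 1 : ℝ) * (1 / (j + 1) * Real.log t + -(1 / ((j : ℝ) + 1) ^ 2)) := by
    funext t
    rw [← Real.rpow_natCast]
    push_cast
    ring
  rw [phiJR, hfun, iteratedDeriv_rpow_mul_log _ _ _ _ one_pos]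
  simp only [Real.one_rpow, Real.log_one]
  ring

lemma hasDerivAt_eval_descPochhammer_div (j r : ℕ) :
    HasDerivAt (fun a => (descPochhammer ℂ r).eval a / a) (phiJR j r : ℂ) (j + 1 : ℂ) := by
  have hj : (j + 1 : ℂ) ≠ 0 := j.cast_add_one_ne_zero
  have hcast (p : ℝ[X]) : ((p.eval (j + 1 : ℝ) : ℝ) : ℂ) = (p.map ofRealHom).eval (j + 1 : ℂ) := by
    exact_mod_cast (eval_natCast_map ofRealHom p (j + 1)).symm
  refine (((descPochhammer ℂ r).hasDerivAt (j + 1 : ℂ)).div (hasDerivAt_id _) hj).congr_deriv ?_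
  rw [phiJR_eq]
  push_cast [hcast, ← derivative_map, descPochhammer_map]
  simp only [id]
  field_simp

lemma BPC_add_one (m : ℕ) (x : ℂ) : BPC m (x + 1) = BPC m x + m * x ^ (m - 1) := by
  have h := congrArg (aeval x) (bernoulli_comp_one_add_X m)
  simpa [BPC, aeval_comp, add_comm] using h

lemma cpowDivDeriv_natCast_add_one {j r : ℕ} (hr : r ≤ j + 1) (x : ℂ) :
    cpowDivDeriv r (j + 1) x = (j + 1).descFactorial r / (j + 1) * x ^ (j + 1 - r) := by
  rw [cpowDivDeriv, ← cpow_natCast, Nat.cast_sub hr, ← descPochhammer_eval_eq_descFactorial]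
  push_cast
  rfl

lemma cpowAntidiff_natCast_add_one (j : ℕ) (x : ℂ) :
    cpowAntidiff j (j + 1) x = BPC (j + 1) x / (j + 1) := by
  rw [cpowAntidiff, BPC, Polynomial.bernoulli, map_sum, sum_div]
  refine sum_congr rfl fun r hr => ?_
  rw [cpowDivDeriv_natCast_add_one (by grind), descFactorial_eq_factorial_mul_choose,
    aeval_monomial]
  have hfact : (r ! : ℂ) ≠ 0 := mod_cast r.factorial_ne_zero
  simp only [BC, eq_ratCast]
  push_cast
  field_simp

lemma hasDerivAt_cpowAntidiff (j : ℕ) {x : ℂ} (hx : x ≠ 0) :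
    HasDerivAt (fun a => cpowAntidiff j a x)
      (Pj j x + BPC (j + 1) x / (j + 1) * log x) (j + 1 : ℂ) := by
  have hterm (r : ℕ) : HasDerivAt (fun a => BC r / r ! * cpowDivDeriv r a x)
      (BC r / r ! * (phiJR j r * x ^ ((j + 1 : ℂ) - r) + cpowDivDeriv r (j + 1) x * log x))
      (j + 1 : ℂ) := by
    refine (((hasDerivAt_eval_descPochhammer_div j r).mul
      (((hasDerivAt_id _).sub_const (r : ℂ)).const_cpow (.inl hx))).const_mul _).congr_deriv ?_
    simp [cpowDivDeriv, mul_assoc]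
  refine (HasDerivAt.fun_sum fun r _ => hterm r).congr_deriv ?_
  rw [← cpowAntidiff_natCast_add_one, cpowAntidiff, Pj, sum_mul, ← sum_add_distrib]
  refine sum_congr rfl fun r hr => ?_
  have hpow : x ^ ((j + 1 : ℂ) - r) = x ^ (j + 1 - r) := by
    rw [← cpow_natCast, Nat.cast_sub (by grind)]
    push_cast
    rfl
  rw [hpow]
  ring

lemma hasDerivAt_cpowAntidiffDefect (j : ℕ) {x : ℂ} (hx : x ≠ 0) (hx' : x + 1 ≠ 0) :
    HasDerivAt (fun a => cpowAntidiffDefect j a x)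
      (-(BPC (j + 1) (x + 1) / (j + 1) * (log (x + 1) - log x) + (Pj j (x + 1) - Pj j x)))
      (j + 1 : ℂ) := by
  have hj : (j + 1 : ℂ) ≠ 0 := j.cast_add_one_ne_zero
  refine ((((hasDerivAt_id _).sub_const (1 : ℂ)).const_cpow (.inl hx)).sub
    ((hasDerivAt_cpowAntidiff j hx').sub (hasDerivAt_cpowAntidiff j hx))).congr_deriv ?_
  simp only [id, add_sub_cancel_right, cpow_natCast, BPC_add_one, cast_succ, add_tsub_cancel_right]
  field_simp
  ring

end NegNat

section ZetaDerivative

open Complex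

theorem hasSum_log_factor_deriv_riemannZeta_neg_nat (j : ℕ) :
    HasSum (fun k : ℕ => BPC (j + 1) (k + 2) / (j + 1) * log (1 + 1 / (k + 1))
        + (Pj j (k + 2) - Pj j (k + 1)))
      (deriv riemannZeta (-j) - Pj j 1) := by
  have hterm (k : ℕ) := (hasDerivAt_cpowAntidiffDefect j (x := k + 1) k.cast_add_one_ne_zero
    (mod_cast (k + 1).succ_ne_zero)).deriv
  have hlog (k : ℕ) : log (k + 2) - log (k + 1) = log (1 + 1 / (k + 1)) := by
    simpa [add_assoc, one_add_one_eq_two] using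
      log_add_one_sub_log (x := k + 1) (by positivity)
  have h := (hasSum_deriv_cpowAntidiffDefect j (a := j + 1) j.cast_add_one_ne_zero
    (by simp)).neg
  simpa [hterm, (hasDerivAt_cpowAntidiff j one_ne_zero).deriv, add_assoc, one_add_one_eq_two,
    hlog] using h

end ZetaDerivative

/-- The infinite product representation
`exp(ζ'(−j)) = exp(P_j(1)) ∏_{k≥1} (1+1/k)^{B_{j+1}(k+1)/(j+1)} exp(P_j(k+1)−P_j(k))`,
the product converging absolutely. -/
theorem exp_zeta_deriv_neg_nat_product (j : ℕ) :
    Complex.exp (deriv riemannZeta (-(j:ℂ))) =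
      Complex.exp (Pj j 1) *
        ∏' k : ℕ, ((1 + 1/((k:ℂ)+1)) ^ (BPC (j+1) ((k:ℂ)+2) / ((j:ℂ)+1)) *
          Complex.exp (Pj j ((k:ℂ)+2) - Pj j ((k:ℂ)+1))) ∧
    Summable (fun k : ℕ =>
      ‖(1 + 1/((k:ℂ)+1)) ^ (BPC (j+1) ((k:ℂ)+2) / ((j:ℂ)+1)) *
          Complex.exp (Pj j ((k:ℂ)+2) - Pj j ((k:ℂ)+1)) - 1‖) := by
  have hfactor (k : ℕ) :
      (1 + 1 / ((k : ℂ) + 1)) ^ (BPC (j + 1) (k + 2) / (j + 1)) *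
          Complex.exp (Pj j (k + 2) - Pj j (k + 1)) =
        Complex.exp (BPC (j + 1) (k + 2) / (j + 1) * Complex.log (1 + 1 / (k + 1))
          + (Pj j (k + 2) - Pj j (k + 1))) := by
    have hne : 1 + 1 / ((k : ℂ) + 1) ≠ 0 := by
      simpa using one_add_one_div_ofReal_ne_zero (x := k + 1) (by positivity)
    rw [Complex.cpow_def_of_ne_zero hne, Complex.exp_add, mul_comm (Complex.log _)]
  have hsum := hasSum_log_factor_deriv_riemannZeta_neg_nat j
  simp only [hfactor]
  refine ⟨?_, summable_norm_exp_sub_one hsum.summable⟩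
  have hprod := hsum.cexp.tprod_eq
  rw [Function.comp_def] at hprod
  rw [hprod, ← Complex.exp_add, add_sub_cancel]

end
end

section
/- Let j ≥ 0 be an integer. For every z ∈ ℂ with Re z > −1: K_j(z) = Q_j(z) + Σ_{r=0}^{j−1} C(j,r)·z^{j−r}·ζ'(−r) − (z^{j+1}/(j+1))·γ + Σ_{k=1}^{∞} [ −(z+k)^{j}·log(1 + z/k) + Σ_{r=0}^{j} C(j,r)·z^{j−r}·Σ_{l=1}^{r+1} ((−1)^{l−1} z^{l}/l)·k^{r−l} ], and the infinite series on the right-hand side converges absolutely. -/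
open scoped BigOperators

noncomputable section

/-- `ζ'`, the derivative of the Riemann zeta function. -/
def zetaD (s : ℂ) : ℂ := deriv riemannZeta s

/-- The polynomial `Q_j(z)`. -/
def Qj (j : ℕ) (z : ℂ) : ℂ :=
  Pj j (z+1) - (∑ r ∈ Finset.range (j+1), (j.choose r : ℂ) * z^r * Pj (j-r) 1)
  + (1/((j:ℂ)+1)) * ∑ r ∈ Finset.Icc 1 (j+1), ((j+1).choose r : ℂ) * BPC (j+1-r) z *
      ∑ l ∈ Finset.Icc 1 r, (-1:ℂ)^(l-1) * z^l / l

/-- `K_j(z) = (B_{j+1}(z+1)/(j+1))·log(z+1) − ζ'(−j) + P_j(z+1)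
+ Σ_{k≥1} [P_j(z+k+1) − P_j(z+k) + (B_{j+1}(z+k+1)/(j+1))·log((z+k+1)/(z+k))]`. -/
def Kj (j : ℕ) (z : ℂ) : ℂ :=
  BPC (j+1) (z+1) / ((j:ℂ)+1) * Complex.log (z+1) - zetaD (-(j:ℂ)) + Pj j (z+1)
  + ∑' k : ℕ, (Pj j (z+(k:ℂ)+2) - Pj j (z+(k:ℂ)+1)
      + BPC (j+1) (z+(k:ℂ)+2) / ((j:ℂ)+1) * Complex.log ((z+(k:ℂ)+2)/(z+(k:ℂ)+1)))

/-!
For `Re x > 0`, Euler–Maclaurin summation continues the Hurwitz zeta function `ζ(s, x)` past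
`s = -j`. Differentiating the continuation in `s` at `-j` yields `K_j(z) + ζ'(-j)` when `x = z + 1`
and `ζ'(-j)` when `x = 1`, and exhibits both as limits of
`P_j(x + N) + B_{j+1}(x + N) log (x + N) / (j + 1) - ∑ k < N, (x + k) ^ j log (x + k)`.

Expanding `(z + 1 + k) ^ j` in powers of `1 + k` and subtracting the matching binomial combination
of the limits at `x = 1`, the logarithms combine into `log (1 + z / (1 + k))`. The partial sums of
the asserted series, the harmonic sums behind `γ`, and a Taylor error of
`B_{j+1}(z + 1 + N) log (1 + z / (1 + N)) / (j + 1)` that vanishes as `N → ∞` account for all of it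
except a polynomial in `N`. This polynomial converges as `N → ∞`, so it is constant, equal to its
value `Q_j(z)` at `N = 0`.
-/

section EulerMaclaurin

open Set
open scoped Nat

variable {E : Type*} [NormedAddCommGroup E]

lemma iteratedDerivWithin_eqOn_of_hasDerivWithinAt {𝕜 : Type*} [NontriviallyNormedField 𝕜]
    [NormedSpace 𝕜 E] {s : Set 𝕜} (hs : UniqueDiffOn 𝕜 s) {F : ℕ → 𝕜 → E}
    (hF : ∀ i, ∀ t ∈ s, HasDerivWithinAt (F i) (F (i + 1) t) s t) (n : ℕ) :
    EqOn (iteratedDerivWithin n (F 0) s) (F n) s := by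
  induction n with
  | zero => exact fun t _ => by rw [iteratedDerivWithin_zero]
  | succ n ih =>
    intro t ht
    rw [iteratedDerivWithin_succ, derivWithin_congr ih (ih ht), (hF n t ht).derivWithin (hs t ht)]

variable [NormedSpace ℝ E] {F : ℕ → ℝ → E} {C : ℝ}

lemma norm_sub_sum_taylor_le
    (hF : ∀ i, ∀ t ∈ Icc (0 : ℝ) 1, HasDerivWithinAt (F i) (F (i + 1) t) (Icc 0 1) t) (n : ℕ)
    (hC : ∀ t ∈ Icc (0 : ℝ) 1, ‖F (n + 1) t‖ ≤ C) :
    ‖F 0 1 - ∑ i ∈ Finset.range (n + 1), (i ! : ℝ)⁻¹ • F i 0‖ ≤ C := by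
  have hderiv := iteratedDerivWithin_eqOn_of_hasDerivWithinAt uniqueDiffOn_Icc_zero_one hF
  have hsmooth : ContDiffOn ℝ (n + 1) (F 0) (Icc 0 1) := by
    refine contDiffOn_of_differentiableOn_deriv fun m _ t ht => ?_
    exact (hF m t ht).differentiableWithinAt.congr (fun u hu => hderiv m hu) (hderiv m ht)
  have htaylor : taylorWithinEval (F 0) n (Icc 0 1) 0 1
      = ∑ i ∈ Finset.range (n + 1), (i ! : ℝ)⁻¹ • F i 0 := by
    rw [taylor_within_apply]
    refine Finset.sum_congr rfl fun i _ => ?_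
    rw [hderiv i (left_mem_Icc.2 zero_le_one), sub_zero, one_pow, mul_one]
  rw [← htaylor]
  refine (taylor_mean_remainder_bound zero_le_one hsmooth (right_mem_Icc.2 zero_le_one)
    fun t ht => (hderiv (n + 1) ht).symm ▸ hC t ht).trans ?_
  rw [sub_zero, one_pow, mul_one]
  exact div_le_self ((norm_nonneg _).trans (hC 0 (left_mem_Icc.2 zero_le_one)))
    (by exact_mod_cast n.factorial_pos)

lemma sum_bernoulli_div_factorial {K : Type*} [Field K] [CharZero K] (n : ℕ) :
    ∑ r ∈ Finset.range (n + 1), (bernoulli r : K) / (r ! : K) * ((n - r + 1)! : K)⁻¹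
      = if n = 0 then 1 else 0 := by
  have hchoose : ∀ r ∈ Finset.range (n + 1),
      (bernoulli r : K) / (r ! : K) * ((n - r + 1)! : K)⁻¹
        = ((n + 1).choose r * bernoulli r : ℚ) / ((n + 1)! : K) := by
    intro r hr
    have hrn := Finset.mem_range_succ_iff.1 hr
    have hfac : ((n + 1)! : K) ≠ 0 := by exact_mod_cast (n + 1).factorial_ne_zero
    push_cast
    rw [Nat.cast_choose K (Nat.le_succ_of_le hrn), Nat.succ_sub hrn]
    field_simp
  rw [Finset.sum_congr rfl hchoose, ← Finset.sum_div, ← Rat.cast_sum, sum_bernoulli]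
  rcases eq_or_ne n 0 with rfl | hn <;> simp [*]

lemma sum_bernoulli_smul_sum_taylor (f : ℕ → E) (n : ℕ) :
    ∑ r ∈ Finset.range (n + 1), ((bernoulli r : ℝ) / (r ! : ℝ)) •
      ∑ i ∈ Finset.range (n + 1 - r), ((i + 1)! : ℝ)⁻¹ • f (r + i + 1) = f 1 := by
  simp_rw [Finset.smul_sum, smul_smul]
  rw [← Finset.sum_range_diag_flip (n + 1)
    fun r i => ((bernoulli r : ℝ) / (r ! : ℝ) * ((i + 1)! : ℝ)⁻¹) • f (r + i + 1)]
  have hdiag : ∀ m ∈ Finset.range (n + 1), ∑ r ∈ Finset.range (m + 1),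
      ((bernoulli r : ℝ) / (r ! : ℝ) * ((m - r + 1)! : ℝ)⁻¹) • f (r + (m - r) + 1)
        = if m = 0 then f 1 else 0 := by
    intro m _
    have hindex : ∀ r ∈ Finset.range (m + 1), f (r + (m - r) + 1) = f (m + 1) := fun r hr => by
      rw [Nat.add_sub_cancel' (Finset.mem_range_succ_iff.1 hr)]
    rw [Finset.sum_congr rfl fun r hr => congrArg _ (hindex r hr), ← Finset.sum_smul,
      sum_bernoulli_div_factorial]
    rcases eq_or_ne m 0 with rfl | hm <;> simp [*]
  rw [Finset.sum_congr rfl hdiag]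
  simp

-- Taylor expand `F r 1` at `0` to order `n + 2 - r`: the Bernoulli recursion cancels every
-- derivative except `F 1 0`, so only the Taylor remainders survive.
lemma norm_eulerMaclaurin_le
    (hF : ∀ i, ∀ t ∈ Icc (0 : ℝ) 1, HasDerivWithinAt (F i) (F (i + 1) t) (Icc 0 1) t) (n : ℕ)
    (hC : ∀ t ∈ Icc (0 : ℝ) 1, ‖F (n + 2) t‖ ≤ C) :
    ‖∑ r ∈ Finset.range (n + 1), ((bernoulli r : ℝ) / (r ! : ℝ)) • (F r 1 - F r 0) - F 1 0‖
      ≤ (∑ r ∈ Finset.range (n + 1), ‖(bernoulli r : ℝ) / (r ! : ℝ)‖) * C := by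
  rw [← sum_bernoulli_smul_sum_taylor (fun i => F i 0) n, ← Finset.sum_sub_distrib,
    Finset.sum_mul]
  refine (norm_sum_le _ _).trans (Finset.sum_le_sum fun r hr => ?_)
  have hrn := Finset.mem_range_succ_iff.1 hr
  rw [← smul_sub, norm_smul]
  gcongr
  have htaylor := norm_sub_sum_taylor_le (F := fun i => F (r + i)) (C := C)
    (fun i => hF (r + i)) (n + 1 - r) fun t ht => by
      rw [← add_assoc, Nat.add_sub_cancel' (Nat.le_succ_of_le hrn)]
      exact hC t ht
  rw [Finset.sum_range_succ'] at htaylor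
  simpa [sub_sub, add_comm, add_assoc] using htaylor

end EulerMaclaurin

section PowPrimitive

/-- The coefficient `(1 - s)(-s)⋯(2 - s - r) / (1 - s)` in the `r`-th derivative of
`w ^ (1 - s) / (1 - s)`; it takes the junk value `0` at `s = 1`. -/
def powCoeff (r : ℕ) (s : ℂ) : ℂ := (descPochhammer ℂ r).eval (1 - s) / (1 - s)

/-- The `r`-th derivative in `w` of the primitive `w ^ (1 - s) / (1 - s)` of `w ^ (-s)`. -/
def powPrimitive (r : ℕ) (s w : ℂ) : ℂ := powCoeff r s * w ^ (1 - s - r)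

lemma powCoeff_succ (r : ℕ) (s : ℂ) : powCoeff (r + 1) s = powCoeff r s * (1 - s - r) := by
  rw [powCoeff, powCoeff, descPochhammer_succ_eval, mul_div_right_comm]

lemma powCoeff_succ_eq_eval (r : ℕ) {s : ℂ} (hs : s ≠ 1) :
    powCoeff (r + 1) s = (descPochhammer ℂ r).eval (-s) := by
  have hs' : 1 - s ≠ 0 := sub_ne_zero.2 hs.symm
  simp [powCoeff, descPochhammer_succ_left, mul_div_cancel_left₀ _ hs']

lemma powCoeff_neg_natCast (r j : ℕ) :
    powCoeff r (-(j : ℂ)) = ((j + 1).descFactorial r : ℂ) / ((j : ℂ) + 1) := by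
  have harg : 1 - -(j : ℂ) = ((j + 1 : ℕ) : ℂ) := by push_cast; ring
  rw [powCoeff, harg, descPochhammer_eval_eq_descFactorial, Nat.cast_succ]

lemma differentiableAt_powCoeff (r : ℕ) {s : ℂ} (hs : s ≠ 1) :
    DifferentiableAt ℂ (powCoeff r) s := by
  have hs' : 1 - s ≠ 0 := sub_ne_zero.2 hs.symm
  have hpoly : DifferentiableAt ℂ (fun s : ℂ => (descPochhammer ℂ r).eval (1 - s)) s :=
    (descPochhammer ℂ r).differentiable.differentiableAt.comp s (by fun_prop)
  exact hpoly.fun_div (by fun_prop) hs'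

lemma exists_norm_powCoeff_le (r : ℕ) (R : ℝ) :
    ∃ C, ∀ s : ℂ, s ≠ 1 → ‖s‖ < R → ‖powCoeff (r + 1) s‖ ≤ C := by
  have hcont : Continuous fun s : ℂ => (descPochhammer ℂ r).eval (-s) :=
    (descPochhammer ℂ r).continuous.comp continuous_neg
  obtain ⟨C, hC⟩ := (isCompact_closedBall (0 : ℂ) R).exists_bound_of_continuousOn hcont.continuousOn
  refine ⟨C, fun s hs hsR => ?_⟩
  rw [powCoeff_succ_eq_eval r hs]
  exact hC s (by simpa using hsR.le)

lemma hasDerivAt_powPrimitive (r : ℕ) (s : ℂ) {w : ℂ} (hw : w ∈ Complex.slitPlane) :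
    HasDerivAt (powPrimitive r s) (powPrimitive (r + 1) s w) w := by
  convert! ((hasDerivAt_id w).cpow_const (c := 1 - s - r) hw).const_mul (powCoeff r s) using 1
  rw [powPrimitive, powCoeff_succ, Nat.cast_succ, sub_sub (1 - s), id]
  ring

lemma powPrimitive_one {s : ℂ} (hs : s ≠ 1) (w : ℂ) : powPrimitive 1 s w = w ^ (-s) := by
  simp [powPrimitive, powCoeff_succ_eq_eval 0 hs]

lemma differentiableAt_powPrimitive (r : ℕ) {s w : ℂ} (hs : s ≠ 1) (hw : w ≠ 0) :
    DifferentiableAt ℂ (fun s => powPrimitive r s w) s :=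
  (differentiableAt_powCoeff r hs).fun_mul (DifferentiableAt.const_cpow (by fun_prop) (Or.inl hw))

lemma norm_cpow_le_rpow_mul_exp (w e : ℂ) :
    ‖w ^ e‖ ≤ ‖w‖ ^ e.re * Real.exp (Real.pi * |e.im|) := by
  refine (Complex.norm_cpow_le w e).trans ?_
  rw [div_eq_mul_inv, ← Real.exp_neg]
  gcongr
  refine (neg_le_abs _).trans ?_
  rw [abs_mul]
  gcongr
  exact Complex.abs_arg_le_pi w

lemma rpow_le_rpow_neg_mul_rpow {d x e M τ : ℝ} (hd : 0 < d) (hd1 : d ≤ 1) (hdx : d ≤ x)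
    (he : e ≤ -τ) (hM : -M ≤ e + τ) : x ^ e ≤ d ^ (-M) * x ^ (-τ) := by
  have hx : 0 < x := hd.trans_le hdx
  calc x ^ e = x ^ (e + τ) * x ^ (-τ) := by rw [← Real.rpow_add hx, add_neg_cancel_right]
    _ ≤ d ^ (e + τ) * x ^ (-τ) := by
      gcongr ?_ * _
      exact Real.rpow_le_rpow_of_nonpos hd hdx (by linarith)
    _ ≤ d ^ (-M) * x ^ (-τ) := by
      gcongr 1
      exact Real.rpow_le_rpow_of_exponent_ge hd hd1 hM

lemma exists_norm_powPrimitive_le (r : ℕ) (σ R : ℝ) {d : ℝ} (hd : 0 < d) :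
    ∃ C, ∀ s : ℂ, s ≠ 1 → σ < s.re → ‖s‖ < R → ∀ w : ℂ, d ≤ ‖w‖ →
      ‖powPrimitive (r + 1) s w‖ ≤ C * ‖w‖ ^ (-(σ + r)) := by
  obtain ⟨C, hC⟩ := exists_norm_powCoeff_le r R
  refine ⟨C * (min d 1 ^ (-(R - σ)) * Real.exp (Real.pi * R)), fun s hs hσ hR w hdw => ?_⟩
  set e : ℂ := 1 - s - (r + 1 : ℕ) with he
  have he_re : e.re = -s.re - r := by
    rw [he, Complex.sub_re, Complex.sub_re, Complex.one_re, Complex.natCast_re]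
    push_cast
    ring
  have he_im : |e.im| ≤ R := by simpa [he] using (Complex.abs_im_le_norm s).trans hR.le
  have hs_re : s.re ≤ R := (Complex.re_le_norm s).trans hR.le
  have hC0 : 0 ≤ C := (norm_nonneg _).trans (hC s hs hR)
  have hbase : ‖w‖ ^ e.re ≤ min d 1 ^ (-(R - σ)) * ‖w‖ ^ (-(σ + r)) :=
    rpow_le_rpow_neg_mul_rpow (lt_min hd one_pos) (min_le_right _ _) ((min_le_left _ _).trans hdw)
      (by linarith) (by linarith)
  calc ‖powPrimitive (r + 1) s w‖ = ‖powCoeff (r + 1) s‖ * ‖w ^ e‖ := norm_mul _ _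
    _ ≤ C * (‖w‖ ^ e.re * Real.exp (Real.pi * |e.im|)) := by
      gcongr
      exacts [hC s hs hR, norm_cpow_le_rpow_mul_exp w e]
    _ ≤ C * (min d 1 ^ (-(R - σ)) * ‖w‖ ^ (-(σ + r)) * Real.exp (Real.pi * R)) := by gcongr
    _ = _ := by ring

end PowPrimitive

section HurwitzZeta

open Set Filter Topology
open scoped Nat

/-- The Euler–Maclaurin primitive of `w ↦ w ^ (-s)` with Bernoulli corrections up to `B_n`: its
unit differences are `w ^ (-s)` up to `eulerMaclaurinRemainder`. -/
def eulerMaclaurinSum (n : ℕ) (s w : ℂ) : ℂ :=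
  ∑ r ∈ Finset.range (n + 1), BC r / r ! * powPrimitive r s w

/-- The error of `eulerMaclaurinSum` on the interval from `w` to `w + 1`. -/
def eulerMaclaurinRemainder (n : ℕ) (s w : ℂ) : ℂ :=
  eulerMaclaurinSum n s (w + 1) - eulerMaclaurinSum n s w - w ^ (-s)

/-- The Hurwitz zeta function `ζ(s, x)`, continued to `s.re > -n`, `s ≠ 1` by Euler–Maclaurin
summation of order `n`. -/
def hurwitzZetaEM (n : ℕ) (x s : ℂ) : ℂ :=
  -eulerMaclaurinSum n s x - ∑' k : ℕ, eulerMaclaurinRemainder n s (x + k)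

variable {n : ℕ} {s w x : ℂ}

lemma add_natCast_ne_zero_of_re_pos (hx : 0 < x.re) (k : ℕ) : x + k ≠ 0 := by
  refine fun h => (add_pos_of_pos_of_nonneg hx k.cast_nonneg).ne' ?_
  simpa using congrArg Complex.re h

lemma differentiableAt_eulerMaclaurinSum (hs : s ≠ 1) (hw : w ≠ 0) :
    DifferentiableAt ℂ (fun s => eulerMaclaurinSum n s w) s :=
  DifferentiableAt.fun_sum fun r _ => (differentiableAt_powPrimitive r hs hw).const_mul _

lemma differentiableAt_eulerMaclaurinRemainder (hs : s ≠ 1) (hw : w ≠ 0) (hw' : w + 1 ≠ 0) :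
    DifferentiableAt ℂ (fun s => eulerMaclaurinRemainder n s w) s :=
  ((differentiableAt_eulerMaclaurinSum hs hw').fun_sub
    (differentiableAt_eulerMaclaurinSum hs hw)).fun_sub
    (DifferentiableAt.const_cpow (by fun_prop) (Or.inl hw))

lemma norm_eulerMaclaurinRemainder_le {C : ℝ} (hs : s ≠ 1) (hw : 0 < w.re)
    (hC : ∀ t ∈ Icc (0 : ℝ) 1, ‖powPrimitive (n + 2) s (w + t)‖ ≤ C) :
    ‖eulerMaclaurinRemainder n s w‖
      ≤ (∑ r ∈ Finset.range (n + 1), ‖(bernoulli r : ℝ) / (r ! : ℝ)‖) * C := by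
  have hderiv : ∀ i, ∀ t ∈ Icc (0 : ℝ) 1, HasDerivWithinAt
      (fun t : ℝ => powPrimitive i s (w + t)) (powPrimitive (i + 1) s (w + t)) (Icc 0 1) t := by
    intro i t ht
    have hslit : w + t ∈ Complex.slitPlane := Or.inl (by simpa using by linarith [ht.1])
    have hcomp := (hasDerivAt_powPrimitive i s hslit).comp_const_add w (t : ℂ)
    exact hcomp.comp_ofReal.hasDerivWithinAt
  have hremainder : eulerMaclaurinRemainder n s w
      = ∑ r ∈ Finset.range (n + 1), ((bernoulli r : ℝ) / (r ! : ℝ)) •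
          (powPrimitive r s (w + (1 : ℝ)) - powPrimitive r s (w + (0 : ℝ)))
        - powPrimitive 1 s (w + (0 : ℝ)) := by
    simp only [eulerMaclaurinRemainder, eulerMaclaurinSum, BC, powPrimitive_one hs,
      Complex.real_smul, mul_sub, Finset.sum_sub_distrib, Complex.ofReal_one, Complex.ofReal_zero,
      add_zero, Complex.ofReal_div, Complex.ofReal_ratCast, Complex.ofReal_natCast]
  rw [hremainder]
  exact norm_eulerMaclaurin_le hderiv n hC

lemma exists_summable_norm_eulerMaclaurinRemainder_le {σ : ℝ} (hσ : -n < σ) (R : ℝ)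
    (hx : 0 < x.re) :
    ∃ u : ℕ → ℝ, Summable u ∧ ∀ (k : ℕ) (s : ℂ), s ≠ 1 → σ < s.re → ‖s‖ < R →
      ‖eulerMaclaurinRemainder n s (x + k)‖ ≤ u k := by
  obtain ⟨C, hC⟩ := exists_norm_powPrimitive_le (n + 1) σ R hx
  set τ : ℝ := σ + (n + 1 : ℕ) with hτ
  have hτ1 : 1 < τ := by rw [hτ]; push_cast; linarith
  have hsum := (Real.summable_one_div_nat_add_rpow x.re τ).2 hτ1
  refine ⟨_, (hsum.mul_left C).mul_left
    (∑ r ∈ Finset.range (n + 1), ‖(bernoulli r : ℝ) / (r ! : ℝ)‖), fun k s hs hσs hR => ?_⟩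
  have : (0 : ℝ) ≤ k := k.cast_nonneg
  refine norm_eulerMaclaurinRemainder_le hs (by simpa using by linarith) fun t ht => ?_
  have hnorm : k + x.re ≤ ‖x + k + t‖ := by
    have hre := Complex.re_le_norm (x + k + t)
    simp only [Complex.add_re, Complex.natCast_re, Complex.ofReal_re] at hre
    linarith [ht.1]
  have hbound := hC s hs hσs hR (x + k + t) (by linarith)
  have hC0 : 0 ≤ C := nonneg_of_mul_nonneg_left ((norm_nonneg _).trans hbound)
    (Real.rpow_pos_of_pos (by linarith) _)
  refine hbound.trans ?_
  rw [abs_of_pos (by linarith), one_div, ← Real.rpow_neg (by linarith)]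
  gcongr ?_ * ?_
  exact Real.rpow_le_rpow_of_nonpos (by linarith) hnorm (by linarith)

/-- A convex region on which the series of remainders converges uniformly. The half-plane
`s.re - s.im < 1` has the pole `1` on its boundary, and contains both the nonpositive reals and
points of the half-plane of convergence of `∑ k ^ (-s)`. -/
def eulerMaclaurinRegion (σ R : ℝ) : Set ℂ := {s | σ < s.re ∧ ‖s‖ < R ∧ s.re - s.im < 1}

variable {σ R : ℝ}

lemma isOpen_eulerMaclaurinRegion : IsOpen (eulerMaclaurinRegion σ R) :=
  (isOpen_lt continuous_const Complex.continuous_re).inter <|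
    (isOpen_lt continuous_norm continuous_const).inter <|
      isOpen_lt (Complex.continuous_re.sub Complex.continuous_im) continuous_const

lemma convex_eulerMaclaurinRegion : Convex ℝ (eulerMaclaurinRegion σ R) := by
  have hball : Convex ℝ {s : ℂ | ‖s‖ < R} := by
    simpa [Metric.ball] using convex_ball (0 : ℂ) R
  have hlinear : IsLinearMap ℝ fun s : ℂ => s.re - s.im :=
    (Complex.reLm - Complex.imLm).isLinear
  exact (convex_halfSpace_re_gt σ).inter (hball.inter (convex_halfSpace_lt hlinear 1))

lemma ne_one_of_mem_eulerMaclaurinRegion (hs : s ∈ eulerMaclaurinRegion σ R) : s ≠ 1 := by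
  rintro rfl
  simpa using hs.2.2

lemma summable_eulerMaclaurinRemainder (hσ : -n < σ) (hx : 0 < x.re)
    (hs : s ∈ eulerMaclaurinRegion σ R) :
    Summable fun k : ℕ => eulerMaclaurinRemainder n s (x + k) := by
  obtain ⟨u, hu, hbound⟩ := exists_summable_norm_eulerMaclaurinRemainder_le hσ R hx
  exact hu.of_norm_bounded fun k =>
    hbound k s (ne_one_of_mem_eulerMaclaurinRegion hs) hs.1 hs.2.1

lemma differentiableOn_eulerMaclaurinRemainder_add_natCast (hx : 0 < x.re) (k : ℕ) :
    DifferentiableOn ℂ (fun s => eulerMaclaurinRemainder n s (x + k))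
      (eulerMaclaurinRegion σ R) := by
  have hx_succ : x + k + 1 ≠ 0 := by
    simpa [add_assoc] using add_natCast_ne_zero_of_re_pos hx (k + 1)
  exact fun s hs => (differentiableAt_eulerMaclaurinRemainder
    (ne_one_of_mem_eulerMaclaurinRegion hs) (add_natCast_ne_zero_of_re_pos hx k)
    hx_succ).differentiableWithinAt

lemma differentiableOn_tsum_eulerMaclaurinRemainder (hσ : -n < σ) (hx : 0 < x.re) :
    DifferentiableOn ℂ (fun s => ∑' k : ℕ, eulerMaclaurinRemainder n s (x + k))
      (eulerMaclaurinRegion σ R) := by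
  obtain ⟨u, hu, hbound⟩ := exists_summable_norm_eulerMaclaurinRemainder_le hσ R hx
  exact Complex.differentiableOn_tsum_of_summable_norm hu
    (differentiableOn_eulerMaclaurinRemainder_add_natCast hx) isOpen_eulerMaclaurinRegion
    fun k s hs => hbound k s (ne_one_of_mem_eulerMaclaurinRegion hs) hs.1 hs.2.1

lemma hasSum_deriv_eulerMaclaurinRemainder (hσ : -n < σ) (hx : 0 < x.re)
    (hs : s ∈ eulerMaclaurinRegion σ R) :
    HasSum (fun k : ℕ => deriv (fun s => eulerMaclaurinRemainder n s (x + k)) s)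
      (deriv (fun s => ∑' k : ℕ, eulerMaclaurinRemainder n s (x + k)) s) := by
  obtain ⟨u, hu, hbound⟩ := exists_summable_norm_eulerMaclaurinRemainder_le hσ R hx
  exact Complex.hasSum_deriv_of_summable_norm hu
    (differentiableOn_eulerMaclaurinRemainder_add_natCast hx) isOpen_eulerMaclaurinRegion
    (fun k s hs => hbound k s (ne_one_of_mem_eulerMaclaurinRegion hs) hs.1 hs.2.1) hs

lemma differentiableOn_hurwitzZetaEM (hσ : -n < σ) (hx : 0 < x.re) :
    DifferentiableOn ℂ (hurwitzZetaEM n x) (eulerMaclaurinRegion σ R) := by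
  have hx0 : x ≠ 0 := by simpa using add_natCast_ne_zero_of_re_pos hx 0
  have hsum : DifferentiableOn ℂ (fun s => eulerMaclaurinSum n s x)
      (eulerMaclaurinRegion σ R) := fun s hs =>
    (differentiableAt_eulerMaclaurinSum (ne_one_of_mem_eulerMaclaurinRegion hs)
      hx0).differentiableWithinAt
  exact hsum.fun_neg.fun_sub (differentiableOn_tsum_eulerMaclaurinRemainder hσ hx)

lemma tendsto_powPrimitive_one_add_natCast (r : ℕ) (hs : 1 < s.re) :
    Tendsto (fun N : ℕ => powPrimitive r s (1 + N)) atTop (𝓝 0) := by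
  rw [← mul_zero (powCoeff r s)]
  refine Tendsto.const_mul _ (tendsto_zero_iff_norm_tendsto_zero.2 ?_)
  have hnorm : ∀ N : ℕ, ‖(1 + (N : ℂ)) ^ (1 - s - (r : ℂ))‖ = (1 + N : ℝ) ^ (-(s.re - 1 + r)) := by
    intro N
    rw [← Complex.ofReal_natCast N, ← Complex.ofReal_one, ← Complex.ofReal_add,
      Complex.norm_cpow_eq_rpow_re_of_pos (by positivity)]
    congr 1
    simp only [Complex.sub_re, Complex.ofReal_one, Complex.one_re, Complex.natCast_re]
    ring
  simp_rw [hnorm]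
  have hexponent : 0 < s.re - 1 + r := add_pos_of_pos_of_nonneg (sub_pos.2 hs) r.cast_nonneg
  exact (tendsto_rpow_neg_atTop hexponent).comp
    (tendsto_atTop_add_const_left _ _ tendsto_natCast_atTop_atTop)

lemma tendsto_eulerMaclaurinSum_one_add_natCast (n : ℕ) (hs : 1 < s.re) :
    Tendsto (fun N : ℕ => eulerMaclaurinSum n s (1 + N)) atTop (𝓝 0) := by
  simpa [eulerMaclaurinSum] using tendsto_finsetSum (Finset.range (n + 1)) fun r _ =>
    (tendsto_powPrimitive_one_add_natCast r hs).const_mul (BC r / r !)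

lemma eulerMaclaurinSum_add_natCast (n : ℕ) (s x : ℂ) (N : ℕ) :
    eulerMaclaurinSum n s (x + N) = eulerMaclaurinSum n s x
      + ∑ k ∈ Finset.range N, eulerMaclaurinRemainder n s (x + k)
      + ∑ k ∈ Finset.range N, (x + k) ^ (-s) := by
  induction N with
  | zero => simp
  | succ N ih =>
    rw [Finset.sum_range_succ, Finset.sum_range_succ, eulerMaclaurinRemainder, ih, Nat.cast_succ,
      ← add_assoc]
    ring

lemma riemannZeta_eq_hurwitzZetaEM_of_one_lt_re (hσ : -n < σ)
    (hs : s ∈ eulerMaclaurinRegion σ R) (hs1 : 1 < s.re) :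
    riemannZeta s = hurwitzZetaEM n 1 s := by
  have hdirichlet : Tendsto (fun N : ℕ => ∑ k ∈ Finset.range N, (1 + (k : ℂ)) ^ (-s)) atTop
      (𝓝 (riemannZeta s)) := by
    have hsummable := (summable_nat_add_iff 1).2 (Complex.summable_one_div_nat_cpow.2 hs1)
    rw [zeta_eq_tsum_one_div_nat_add_one_cpow hs1]
    simpa [Complex.cpow_neg, add_comm] using hsummable.hasSum.tendsto_sum_nat
  have hremainder := (summable_eulerMaclaurinRemainder hσ (x := 1) (by simp)
    hs).hasSum.tendsto_sum_nat
  have hlimit := ((tendsto_eulerMaclaurinSum_one_add_natCast n hs1).sub_const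
    (eulerMaclaurinSum n s 1)).sub hremainder
  rw [zero_sub] at hlimit
  refine tendsto_nhds_unique hdirichlet (hlimit.congr fun N => ?_)
  rw [eulerMaclaurinSum_add_natCast]
  ring

lemma eqOn_riemannZeta_hurwitzZetaEM (hσ : -n < σ) (hσ2 : σ < 2) (hR : 4 < R) :
    EqOn riemannZeta (hurwitzZetaEM n 1) (eulerMaclaurinRegion σ R) := by
  have hmem : 2 + 2 * Complex.I ∈ eulerMaclaurinRegion σ R := by
    refine ⟨by simpa using hσ2, (norm_add_le _ _).trans_lt ?_, by simp⟩
    simpa using by linarith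
  have hzeta : DifferentiableOn ℂ riemannZeta (eulerMaclaurinRegion σ R) := fun s hs =>
    (differentiableAt_riemannZeta
      (ne_one_of_mem_eulerMaclaurinRegion hs)).differentiableWithinAt
  have hone_lt : ∀ᶠ s : ℂ in 𝓝 (2 + 2 * Complex.I), 1 < s.re :=
    (isOpen_lt continuous_const Complex.continuous_re).mem_nhds (by simp)
  refine (hzeta.analyticOnNhd isOpen_eulerMaclaurinRegion).eqOn_of_preconnected_of_eventuallyEq
    ((differentiableOn_hurwitzZetaEM hσ (by simp)).analyticOnNhd isOpen_eulerMaclaurinRegion)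
    convex_eulerMaclaurinRegion.isPreconnected hmem ?_
  filter_upwards [isOpen_eulerMaclaurinRegion.mem_nhds hmem, hone_lt] with s hs hs1
  exact riemannZeta_eq_hurwitzZetaEM_of_one_lt_re hσ hs hs1

end HurwitzZeta

section PowLog

open Topology

/-- The primitive `t ^ (j + 1) log t / (j + 1) - t ^ (j + 1) / (j + 1) ^ 2` of `t ^ j log t`, whose
derivatives at `1` are the numbers `φ_{j,r}`. -/
def powLog (j : ℕ) (t : ℝ) : ℝ :=
  t ^ (j + 1) * Real.log t / (j + 1) - t ^ (j + 1) / ((j : ℝ) + 1) ^ 2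

lemma phiJR_eq_iteratedDeriv_powLog (j r : ℕ) : phiJR j r = iteratedDeriv r (powLog j) 1 := rfl

lemma hasDerivAt_zpow_mul_log (e : ℤ) (a b : ℝ) {t : ℝ} (ht : t ≠ 0) :
    HasDerivAt (fun t => t ^ e * (a * Real.log t + b))
      (t ^ (e - 1) * (e * (a * Real.log t + b) + a)) t := by
  convert! (hasDerivAt_zpow e t (Or.inl ht)).fun_mul
    (((Real.hasDerivAt_log ht).const_mul a).add_const b) using 1
  rw [zpow_sub_one₀ ht]
  ring

lemma iteratedDeriv_succ_eq_zpow_mul_log {f : ℝ → ℝ} {r : ℕ} {e : ℤ} {a b : ℝ}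
    (hf : ∀ t, 0 < t → iteratedDeriv r f t = t ^ e * (a * Real.log t + b)) {t : ℝ} (ht : 0 < t) :
    iteratedDeriv (r + 1) f t = t ^ (e - 1) * (e * (a * Real.log t + b) + a) := by
  have hlocal : iteratedDeriv r f =ᶠ[𝓝 t] fun t => t ^ e * (a * Real.log t + b) := by
    filter_upwards [lt_mem_nhds ht] with u hu using hf u hu
  rw [iteratedDeriv_succ, hlocal.deriv_eq, (hasDerivAt_zpow_mul_log e a b ht.ne').deriv]

lemma cast_descFactorial_succ {R : Type*} [Ring R] (n r : ℕ) :
    (n.descFactorial (r + 1) : R) = n.descFactorial r * ((n : R) - r) := by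
  simp only [← descPochhammer_eval_eq_descFactorial, descPochhammer_succ_eval]

lemma iteratedDeriv_powLog (j r : ℕ) {t : ℝ} (ht : 0 < t) :
    iteratedDeriv r (powLog j) t = t ^ ((j : ℤ) + 1 - r)
      * (((j + 1).descFactorial r : ℝ) / (j + 1) * Real.log t + phiJR j r) := by
  induction r generalizing t with
  | zero =>
    have hpow : t ^ ((j : ℤ) + 1) = t ^ (j + 1) := zpow_natCast t (j + 1)
    simp only [phiJR_eq_iteratedDeriv_powLog, iteratedDeriv_zero, powLog, Nat.cast_zero, sub_zero,
      hpow, Nat.descFactorial_zero, Nat.cast_one, one_pow, Real.log_one]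
    ring
  | succ r ih =>
    have hstep := fun {t : ℝ} (ht : 0 < t) =>
      iteratedDeriv_succ_eq_zpow_mul_log (fun t ht => ih (t := t) ht) ht
    have hphi : phiJR j (r + 1) = _ := hstep one_pos
    rw [hstep ht, hphi, cast_descFactorial_succ, Real.log_one, one_zpow, Nat.cast_succ r, ← sub_sub]
    push_cast
    ring

lemma phiJR_succ (j r : ℕ) :
    phiJR j (r + 1) = ((j : ℝ) + 1 - r) * phiJR j r + ((j + 1).descFactorial r : ℝ) / (j + 1) := by
  rw [phiJR_eq_iteratedDeriv_powLog,
    iteratedDeriv_succ_eq_zpow_mul_log (fun t ht => iteratedDeriv_powLog j r ht) one_pos]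
  simp

lemma hasDerivAt_powCoeff_neg_natCast (j r : ℕ) :
    HasDerivAt (powCoeff r) (-(phiJR j r : ℂ)) (-(j : ℂ)) := by
  have hlinear : HasDerivAt (fun s : ℂ => 1 - s) (-1) (-(j : ℂ)) := (hasDerivAt_id _).const_sub 1
  induction r with
  | zero =>
    have hj : 1 - -(j : ℂ) ≠ 0 := by simpa [add_comm] using j.cast_add_one_ne_zero (R := ℂ)
    convert! hlinear.inv hj using 1
    · ext s
      simp [powCoeff]
    · simp [phiJR_eq_iteratedDeriv_powLog, powLog, add_comm]
  | succ r ih =>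
    convert! ih.fun_mul (hlinear.sub_const (r : ℂ)) using 1
    · ext s
      rw [powCoeff_succ]
    · rw [powCoeff_neg_natCast, phiJR_succ]
      push_cast
      ring

end PowLog

section LogPowerSum

open Filter Topology
open scoped Nat

variable {w x z : ℂ}

lemma BPC_eq_sum (n : ℕ) (w : ℂ) :
    BPC n w = ∑ r ∈ Finset.range (n + 1), BC r * (n.choose r : ℂ) * w ^ (n - r) := by
  simp [BPC, BC, Polynomial.bernoulli, Polynomial.aeval_monomial]

lemma BPC_succ_add_one (n : ℕ) (w : ℂ) :
    BPC (n + 1) (w + 1) = BPC (n + 1) w + ((n : ℂ) + 1) * w ^ n := by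
  have h := congrArg (Polynomial.aeval w) (Polynomial.bernoulli_comp_one_add_X (n + 1))
  simpa [BPC, Polynomial.aeval_comp, add_comm] using h

/-- The Euler–Maclaurin approximation of `∑ k < N, (x + k) ^ j * log (x + k)` as a function of
`w = x + N`, up to a constant. -/
def logPowerSumApprox (j : ℕ) (w : ℂ) : ℂ :=
  Pj j w + BPC (j + 1) w / ((j : ℂ) + 1) * Complex.log w

lemma logPowerSumApprox_eq_sum (j : ℕ) (w : ℂ) :
    logPowerSumApprox j w = ∑ r ∈ Finset.range (j + 2), BC r / r ! * (w ^ (j + 1 - r)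
      * (powCoeff r (-(j : ℂ)) * Complex.log w + (phiJR j r : ℂ))) := by
  rw [logPowerSumApprox, Pj, BPC_eq_sum, Finset.sum_div, Finset.sum_mul, ← Finset.sum_add_distrib]
  refine Finset.sum_congr rfl fun r _ => ?_
  have hr : (r ! : ℂ) ≠ 0 := by exact_mod_cast r.factorial_ne_zero
  rw [powCoeff_neg_natCast, Nat.descFactorial_eq_factorial_mul_choose, Nat.cast_mul]
  field_simp
  ring

lemma hasDerivAt_powPrimitive_neg_natCast {j r : ℕ} (hr : r ≤ j + 1) (hw : w ≠ 0) :
    HasDerivAt (fun s => powPrimitive r s w)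
      (-(w ^ (j + 1 - r) * (powCoeff r (-(j : ℂ)) * Complex.log w + (phiJR j r : ℂ))))
      (-(j : ℂ)) := by
  have hexponent : HasDerivAt (fun s : ℂ => 1 - s - (r : ℂ)) (-1) (-(j : ℂ)) :=
    ((hasDerivAt_id _).const_sub 1).sub_const _
  have hpow : w ^ (1 - -(j : ℂ) - r) = w ^ (j + 1 - r) := by
    rw [← Complex.cpow_natCast, Nat.cast_sub hr, Nat.cast_succ, sub_neg_eq_add, add_comm 1]
  convert! (hasDerivAt_powCoeff_neg_natCast j r).fun_mul
    (hexponent.const_cpow (c := w) (Or.inl hw)) using 1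
  rw [hpow]
  ring

lemma hasDerivAt_eulerMaclaurinSum_neg_natCast (j : ℕ) (hw : w ≠ 0) :
    HasDerivAt (fun s => eulerMaclaurinSum (j + 1) s w) (-logPowerSumApprox j w) (-(j : ℂ)) := by
  rw [logPowerSumApprox_eq_sum, ← Finset.sum_neg_distrib]
  refine HasDerivAt.fun_sum fun r hr => ?_
  rw [← mul_neg]
  exact (hasDerivAt_powPrimitive_neg_natCast (Finset.mem_range_succ_iff.1 hr) hw).const_mul _

lemma hasDerivAt_eulerMaclaurinRemainder_neg_natCast (j : ℕ) (hw : w ≠ 0) (hw' : w + 1 ≠ 0) :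
    HasDerivAt (fun s => eulerMaclaurinRemainder (j + 1) s w)
      (-(logPowerSumApprox j (w + 1) - logPowerSumApprox j w - w ^ j * Complex.log w))
      (-(j : ℂ)) := by
  convert! ((hasDerivAt_eulerMaclaurinSum_neg_natCast j hw').fun_sub
    (hasDerivAt_eulerMaclaurinSum_neg_natCast j hw)).fun_sub
    ((hasDerivAt_neg (-(j : ℂ))).const_cpow (c := w) (Or.inl hw)) using 1
  rw [neg_neg, Complex.cpow_natCast]
  ring

lemma neg_natCast_mem_eulerMaclaurinRegion (j : ℕ) :
    -(j : ℂ) ∈ eulerMaclaurinRegion (-j - 1 / 2) (j + 5) := by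
  refine ⟨by simp, by simp, ?_⟩
  simpa using by linarith [j.cast_nonneg (α := ℝ)]

lemma neg_succ_lt_neg_sub_half (j : ℕ) : -((j + 1 : ℕ) : ℝ) < -j - 1 / 2 := by
  push_cast
  linarith

lemma hasSum_logPowerSumApprox_sub (j : ℕ) (hx : 0 < x.re) :
    HasSum (fun k : ℕ => logPowerSumApprox j (x + k + 1) - logPowerSumApprox j (x + k)
        - (x + k) ^ j * Complex.log (x + k))
      (deriv (hurwitzZetaEM (j + 1) x) (-(j : ℂ)) - logPowerSumApprox j x) := by
  have hne := add_natCast_ne_zero_of_re_pos hx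
  have hne_succ : ∀ k : ℕ, x + k + 1 ≠ 0 := fun k => by simpa [add_assoc] using hne (k + 1)
  have hmem := neg_natCast_mem_eulerMaclaurinRegion j
  have hσ := neg_succ_lt_neg_sub_half j
  have htsum := ((differentiableOn_tsum_eulerMaclaurinRemainder hσ hx).differentiableAt
    (isOpen_eulerMaclaurinRegion.mem_nhds hmem)).hasDerivAt
  have hzeta : deriv (hurwitzZetaEM (j + 1) x) (-(j : ℂ)) = _ :=
    ((hasDerivAt_eulerMaclaurinSum_neg_natCast j (by simpa using hne 0)).fun_neg.fun_sub
      htsum).deriv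
  convert! (hasSum_deriv_eulerMaclaurinRemainder hσ hx hmem).neg using 1
  · ext k
    rw [(hasDerivAt_eulerMaclaurinRemainder_neg_natCast j (hne k) (hne_succ k)).deriv, neg_neg]
  · rw [hzeta]
    ring

lemma tendsto_logPowerSumApprox_sub_sum (j : ℕ) (hx : 0 < x.re) :
    Tendsto (fun N : ℕ => logPowerSumApprox j (x + N)
        - ∑ k ∈ Finset.range N, (x + k) ^ j * Complex.log (x + k))
      atTop (𝓝 (deriv (hurwitzZetaEM (j + 1) x) (-(j : ℂ)))) := by
  have hlimit := (hasSum_logPowerSumApprox_sub j hx).tendsto_sum_nat.add_const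
    (logPowerSumApprox j x)
  rw [sub_add_cancel] at hlimit
  refine hlimit.congr fun N => ?_
  have htelescope := Finset.sum_range_sub (fun k : ℕ => logPowerSumApprox j (x + k)) N
  simp only [Nat.cast_zero, add_zero, Nat.cast_succ, ← add_assoc] at htelescope
  rw [Finset.sum_sub_distrib, htelescope]
  ring

lemma deriv_hurwitzZetaEM_one (j : ℕ) :
    deriv (hurwitzZetaEM (j + 1) 1) (-(j : ℂ)) = zetaD (-(j : ℂ)) := by
  have heq := eqOn_riemannZeta_hurwitzZetaEM (R := j + 5) (neg_succ_lt_neg_sub_half j)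
    (by linarith [j.cast_nonneg (α := ℝ)]) (by linarith [j.cast_nonneg (α := ℝ)])
  exact (heq.eventuallyEq_of_mem (isOpen_eulerMaclaurinRegion.mem_nhds
    (neg_natCast_mem_eulerMaclaurinRegion j))).deriv_eq.symm

lemma log_div_of_re_pos {a b : ℂ} (ha : 0 < a.re) (hb : 0 < b.re) :
    Complex.log (a / b) = Complex.log a - Complex.log b := by
  have ha0 : a ≠ 0 := fun h => by simp [h] at ha
  have hb0 : b ≠ 0 := fun h => by simp [h] at hb
  have harga := abs_lt.1 (Complex.abs_arg_lt_pi_div_two_iff.2 (Or.inl ha))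
  have hargb := abs_lt.1 (Complex.abs_arg_lt_pi_div_two_iff.2 (Or.inl hb))
  have hargb_ne : b.arg ≠ Real.pi := by linarith [Real.pi_pos]
  have harg : a.arg + b⁻¹.arg ∈ Set.Ioc (-Real.pi) Real.pi := by
    rw [Complex.arg_inv, if_neg hargb_ne]
    constructor <;> linarith
  rw [div_eq_mul_inv, Complex.log_mul ha0 (inv_ne_zero hb0) harg, Complex.log_inv _ hargb_ne,
    sub_eq_add_neg]

lemma Kj_eq_deriv_hurwitzZetaEM_sub (j : ℕ) (hz : -1 < z.re) :
    Kj j z = deriv (hurwitzZetaEM (j + 1) (z + 1)) (-(j : ℂ)) - zetaD (-(j : ℂ)) := by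
  have hx : 0 < (z + 1).re := by simpa using by linarith
  have hj : (j : ℂ) + 1 ≠ 0 := j.cast_add_one_ne_zero
  have hterm : ∀ k : ℕ, Pj j (z + k + 2) - Pj j (z + k + 1)
      + BPC (j + 1) (z + k + 2) / ((j : ℂ) + 1) * Complex.log ((z + k + 2) / (z + k + 1))
      = logPowerSumApprox j (z + 1 + k + 1) - logPowerSumApprox j (z + 1 + k)
        - (z + 1 + k) ^ j * Complex.log (z + 1 + k) := by
    intro k
    have hk : 0 < (z + 1 + k).re := by simpa using by linarith [k.cast_nonneg (α := ℝ)]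
    have hk_succ : 0 < (z + 1 + k + 1).re := by
      rw [Complex.add_re, Complex.one_re]
      exact add_pos hk one_pos
    rw [show z + k + 1 = z + 1 + k by ring, show z + k + 2 = z + 1 + k + 1 by ring,
      log_div_of_re_pos hk_succ hk, logPowerSumApprox, logPowerSumApprox, BPC_succ_add_one]
    field_simp
    ring
  rw [Kj, tsum_congr hterm, (hasSum_logPowerSumApprox_sub j hx).tsum_eq, logPowerSumApprox]
  ring

end LogPowerSum

section BernoulliAddition

open Polynomial

lemma hasseDeriv_bernoulli {n r : ℕ} (hr : r ≤ n) :
    hasseDeriv r (Polynomial.bernoulli n) = C (n.choose r : ℚ) * Polynomial.bernoulli (n - r) := by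
  ext i
  rw [hasseDeriv_coeff, coeff_C_mul, coeff_bernoulli, coeff_bernoulli]
  by_cases hi : i + r ≤ n
  · have hchoose : (n.choose (i + r) * (i + r).choose r : ℚ) = n.choose r * (n - r).choose i := by
      have h := Nat.choose_mul (n := n) (k := i + r) (s := r) (Nat.le_add_left r i)
      rw [Nat.add_sub_cancel] at h
      exact_mod_cast h
    rw [if_pos hi, if_pos (Nat.le_sub_of_add_le hi), Nat.sub_sub, add_comm r i]
    linear_combination _root_.bernoulli (n - (i + r)) * hchoose
  · rw [if_neg hi, if_neg (by omega), mul_zero, mul_zero]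

lemma natDegree_bernoulli_le (n : ℕ) : (Polynomial.bernoulli n).natDegree ≤ n :=
  natDegree_le_iff_coeff_eq_zero.2 fun i hi => by rw [coeff_bernoulli, if_neg hi.not_ge]

lemma aeval_add_eq_sum_hasseDeriv {R A : Type*} [CommRing R] [CommRing A] [Algebra R A]
    {p : R[X]} {n : ℕ} (hp : p.natDegree ≤ n) (x y : A) :
    aeval (x + y) p = ∑ r ∈ Finset.range (n + 1), aeval x (hasseDeriv r p) * y ^ r := by
  have hmap : ∀ r, hasseDeriv r (p.map (algebraMap R A)) = (hasseDeriv r p).map (algebraMap R A) :=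
    fun r => by ext i; simp [hasseDeriv_coeff]
  have hdegree : (taylor x (p.map (algebraMap R A))).natDegree < n + 1 := by
    rw [natDegree_taylor]
    exact Nat.lt_succ_of_le (natDegree_map_le.trans hp)
  simp only [← eval_map_algebraMap, ← hmap, ← taylor_coeff]
  rw [add_comm, ← taylor_eval, eval_eq_sum_range' hdegree]

lemma BPC_add (n : ℕ) (x y : ℂ) :
    BPC n (x + y) = ∑ r ∈ Finset.range (n + 1), (n.choose r : ℂ) * BPC (n - r) x * y ^ r := by
  rw [BPC, aeval_add_eq_sum_hasseDeriv (natDegree_bernoulli_le n)]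
  refine Finset.sum_congr rfl fun r hr => ?_
  rw [hasseDeriv_bernoulli (Finset.mem_range_succ_iff.1 hr)]
  simp [BPC]

end BernoulliAddition

section BinomialTransform

/-- The binomial transform `a ↦ ∑ r ≤ j, C(j, r) z ^ (j - r) a r`, which sends the moments
`r ↦ w ^ r` to `(w + z) ^ j`. -/
def binomialTransform (j : ℕ) (z : ℂ) : (ℕ → ℂ) →ₗ[ℂ] ℂ :=
  ∑ r ∈ Finset.range (j + 1), ((j.choose r : ℂ) * z ^ (j - r)) • LinearMap.proj r

lemma binomialTransform_apply (j : ℕ) (z : ℂ) (a : ℕ → ℂ) :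
    binomialTransform j z a
      = ∑ r ∈ Finset.range (j + 1), (j.choose r : ℂ) * z ^ (j - r) * a r := by
  simp [binomialTransform]

lemma binomialTransform_mul_const (j : ℕ) (z : ℂ) (a : ℕ → ℂ) (c : ℂ) :
    binomialTransform j z (fun r => a r * c) = binomialTransform j z a * c := by
  simp only [binomialTransform_apply, Finset.sum_mul, mul_assoc]

lemma binomialTransform_pow (j : ℕ) (z w : ℂ) :
    binomialTransform j z (fun r => w ^ r) = (w + z) ^ j := by
  rw [binomialTransform_apply, add_pow]
  exact Finset.sum_congr rfl fun r _ => by ring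

lemma binomialTransform_BPC (j : ℕ) (z x : ℂ) :
    binomialTransform j z (fun r => BPC r x) = BPC j (x + z) := by
  rw [binomialTransform_apply, BPC_add, ← Finset.sum_flip]
  refine Finset.sum_congr rfl fun r hr => ?_
  have hrj := Finset.mem_range_succ_iff.1 hr
  rw [Nat.choose_symm hrj, Nat.sub_sub_self hrj]
  ring

lemma binomialTransform_succ_div (j : ℕ) (z : ℂ) (a : ℕ → ℂ) :
    binomialTransform j z (fun r => a (r + 1) / ((r : ℂ) + 1))
      = (binomialTransform (j + 1) z a - z ^ (j + 1) * a 0) / ((j : ℂ) + 1) := by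
  have hj : (j : ℂ) + 1 ≠ 0 := j.cast_add_one_ne_zero
  rw [binomialTransform_apply, binomialTransform_apply, Finset.sum_range_succ' _ (j + 1),
    eq_div_iff hj, Finset.sum_mul, Nat.choose_zero_right, Nat.cast_one, one_mul, Nat.sub_zero,
    add_sub_cancel_right]
  refine Finset.sum_congr rfl fun r _ => ?_
  have hr : (r : ℂ) + 1 ≠ 0 := r.cast_add_one_ne_zero
  have hchoose : ((j : ℂ) + 1) * j.choose r = (j + 1).choose (r + 1) * ((r : ℂ) + 1) := by
    exact_mod_cast Nat.add_one_mul_choose_eq j r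
  rw [Nat.add_sub_add_right]
  field_simp
  linear_combination z ^ (j - r) * a (r + 1) * hchoose

lemma tendsto_binomialTransform {ι : Type*} {l : Filter ι} {a : ι → ℕ → ℂ} {b : ℕ → ℂ} (j : ℕ)
    (z : ℂ) (h : ∀ r, Filter.Tendsto (fun i => a i r) l (nhds (b r))) :
    Filter.Tendsto (fun i => binomialTransform j z (a i)) l (nhds (binomialTransform j z b)) := by
  simp only [binomialTransform_apply]
  exact tendsto_finsetSum _ fun r _ => (h r).const_mul _

end BinomialTransform

section Polynomials

open Polynomial Filter Topology

lemma exists_polynomial_eval_eq_sum_range {K : Type*} [Field K] [CharZero K] (p : K[X]) :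
    ∃ q : K[X], ∀ N : ℕ, ∑ k ∈ Finset.range N, p.eval (k : K) = q.eval (N : K) := by
  induction p using Polynomial.induction_on' with
  | add p q hp hq =>
    obtain ⟨p', hp'⟩ := hp
    obtain ⟨q', hq'⟩ := hq
    exact ⟨p' + q', fun N => by simp only [eval_add, Finset.sum_add_distrib, hp', hq']⟩
  | monomial m a =>
    refine ⟨C (a / (m + 1)) * ((Polynomial.bernoulli (m + 1)).map (algebraMap ℚ K)
      - C (_root_.bernoulli (m + 1) : K)), fun N => ?_⟩
    have hm : (m : K) + 1 ≠ 0 := m.cast_add_one_ne_zero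
    have hfaulhaber := congrArg (algebraMap ℚ K) (sum_range_pow_eq_bernoulli_sub N m)
    simp only [map_mul, map_sum, map_pow, map_sub, map_add, map_one, map_natCast,
      eq_ratCast (algebraMap ℚ K) (_root_.bernoulli _)] at hfaulhaber
    have heval : ((Polynomial.bernoulli (m + 1)).map (algebraMap ℚ K)).eval (N : K)
        = algebraMap ℚ K ((Polynomial.bernoulli (m + 1)).eval (N : ℚ)) := by
      rw [← map_natCast (algebraMap ℚ K) N, eval_map_apply]
    simp only [eval_monomial, ← Finset.mul_sum, eval_mul, eval_sub, eval_C, heval]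
    rw [← hfaulhaber]
    field_simp

lemma eq_C_of_tendsto_eval {α R : Type*} [NormedRing R] [IsAbsoluteValue (norm : R → ℝ)]
    {p : R[X]} {l : Filter α} [l.NeBot] {u : α → R} {a : R}
    (hu : Tendsto (fun i => ‖u i‖) l atTop) (hp : Tendsto (fun i => p.eval (u i)) l (𝓝 a)) :
    p = C a := by
  have hdegree : p.degree ≤ 0 := not_lt.1 fun h =>
    not_tendsto_nhds_of_tendsto_atTop (p.tendsto_norm_atTop h hu) _ hp.norm
  have hconst := eq_C_of_degree_le_zero hdegree
  rw [hconst] at hp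
  simp only [eval_C] at hp
  rw [hconst, tendsto_nhds_unique tendsto_const_nhds hp]

end Polynomials

section LogTaylor

open Polynomial Filter Topology Asymptotics

variable (z : ℂ)

/-- The Taylor polynomial of degree `r` of `u ↦ log (1 + u)` at `u = z / X`, multiplied by `X ^ r`
to clear denominators. -/
def logTaylorHom (r : ℕ) : ℂ[X] :=
  ∑ l ∈ Finset.Icc 1 r, C ((-1) ^ (l - 1) * z ^ l / l) * X ^ (r - l)

lemma logTaylor_succ_eq_sum_Icc (n : ℕ) (u : ℂ) :
    Complex.logTaylor (n + 1) u = ∑ l ∈ Finset.Icc 1 n, (-1) ^ (l - 1) * u ^ l / l := by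
  rw [Complex.logTaylor, Finset.sum_range_eq_add_Ico _ n.add_one_pos,
    Finset.Ico_add_one_right_eq_Icc]
  simp only [CharP.cast_eq_zero, div_zero, zero_add]
  refine Finset.sum_congr rfl fun l hl => ?_
  obtain ⟨m, rfl⟩ := Nat.exists_eq_add_of_le' (Finset.mem_Icc.1 hl).1
  simp [pow_add]

lemma sum_mul_zpow_eq_pow_mul_logTaylor (n r : ℕ) {w : ℂ} (hw : w ≠ 0) :
    ∑ l ∈ Finset.Icc 1 n, ((-1) ^ (l - 1) * z ^ l / l) * w ^ ((r : ℤ) - l)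
      = w ^ r * Complex.logTaylor (n + 1) (z / w) := by
  rw [logTaylor_succ_eq_sum_Icc, Finset.mul_sum]
  refine Finset.sum_congr rfl fun l _ => ?_
  rw [zpow_sub₀ hw, zpow_natCast, zpow_natCast, div_pow]
  ring

lemma eval_logTaylorHom (r : ℕ) {w : ℂ} (hw : w ≠ 0) :
    (logTaylorHom z r).eval w = w ^ r * Complex.logTaylor (r + 1) (z / w) := by
  rw [logTaylorHom, eval_finsetSum, ← sum_mul_zpow_eq_pow_mul_logTaylor z r r hw]
  refine Finset.sum_congr rfl fun l hl => ?_
  rw [← Nat.cast_sub (Finset.mem_Icc.1 hl).2, zpow_natCast]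
  simp

lemma isBigO_pow_mul_log_sub_logTaylor (r d : ℕ) :
    (fun k : ℕ => (1 + (k : ℂ)) ^ r *
        (Complex.log (1 + z / (1 + k)) - Complex.logTaylor (r + d + 1) (z / (1 + k))))
      =O[atTop] fun k : ℕ => ((k + 1 : ℝ) ^ (d + 1))⁻¹ := by
  have hsmall : Tendsto (fun k : ℕ => z / (1 + (k : ℂ))) atTop (𝓝 0) := by
    simpa [div_eq_mul_inv, add_comm] using
      (tendsto_one_div_add_atTop_nhds_zero_nat (𝕜 := ℂ)).const_mul z
  refine ((isBigO_refl (fun k : ℕ => (1 + (k : ℂ)) ^ r) atTop).mul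
    ((Complex.log_sub_logTaylor_isBigO (r + d)).comp_tendsto hsmall)).trans ?_
  refine IsBigO.of_bound (‖z‖ ^ (r + d + 1)) (Eventually.of_forall fun k => le_of_eq ?_)
  have hk : (0 : ℝ) < k + 1 := k.cast_add_one_pos
  have hnorm : ‖1 + (k : ℂ)‖ = k + 1 := by
    rw [add_comm, ← Nat.cast_succ, Complex.norm_natCast, Nat.cast_succ]
  simp only [Function.comp_apply, norm_mul, norm_pow, norm_div, norm_inv, hnorm, div_pow,
    Real.norm_eq_abs, abs_of_pos hk]
  field_simp
  ring

lemma summable_pow_mul_log_sub_logTaylor (r : ℕ) :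
    Summable fun k : ℕ => (1 + (k : ℂ)) ^ r *
      (Complex.log (1 + z / (1 + k)) - Complex.logTaylor (r + 2) (z / (1 + k))) := by
  have hsq := (summable_nat_add_iff 1).2 (Real.summable_nat_pow_inv.2 one_lt_two)
  refine summable_of_isBigO_nat hsq ?_
  simpa using isBigO_pow_mul_log_sub_logTaylor z r 1

lemma tendsto_pow_mul_log_sub_logTaylor (r : ℕ) :
    Tendsto (fun k : ℕ => (1 + (k : ℂ)) ^ r *
      (Complex.log (1 + z / (1 + k)) - Complex.logTaylor (r + 1) (z / (1 + k)))) atTop (𝓝 0) := by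
  refine (isBigO_pow_mul_log_sub_logTaylor z r 0).trans_tendsto ?_
  simpa using tendsto_one_div_add_atTop_nhds_zero_nat (𝕜 := ℝ)

variable {z}

lemma log_one_add_div_one_add_natCast (hz : -1 < z.re) (k : ℕ) :
    Complex.log (1 + z / (1 + k)) = Complex.log (z + 1 + k) - Complex.log (1 + k) := by
  have : (0 : ℝ) ≤ k := k.cast_nonneg
  have hne : 1 + (k : ℂ) ≠ 0 := add_natCast_ne_zero_of_re_pos (by simp) k
  rw [← log_div_of_re_pos (by simpa using by linarith) (by simpa using by linarith)]
  congr 1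
  field_simp
  ring

end LogTaylor

section GoodRepresentation

open Polynomial Filter Topology

variable (j : ℕ) (z : ℂ)

/-- The summand, for the index `k + 1`, of the series in the good representation. -/
def goodSummand (k : ℕ) : ℂ :=
  -((z + (k : ℂ) + 1) ^ j * Complex.log (1 + z / ((k : ℂ) + 1)))
    + ∑ r ∈ Finset.range (j + 1), (j.choose r : ℂ) * z ^ (j - r) *
        ∑ l ∈ Finset.Icc 1 (r + 1), ((-1 : ℂ) ^ (l - 1) * z ^ l / l) * ((k : ℂ) + 1) ^ ((r : ℤ) - l)

lemma goodSummand_eq_neg_binomialTransform (k : ℕ) :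
    goodSummand j z k = -binomialTransform j z fun r => (1 + (k : ℂ)) ^ r *
      (Complex.log (1 + z / (1 + k)) - Complex.logTaylor (r + 2) (z / (1 + k))) := by
  have hk : 1 + (k : ℂ) ≠ 0 := add_natCast_ne_zero_of_re_pos (by simp) k
  simp only [mul_sub]
  rw [← Pi.sub_def, map_sub, binomialTransform_mul_const, binomialTransform_pow, neg_sub,
    sub_eq_neg_add, goodSummand, binomialTransform_apply, add_comm (k : ℂ) 1]
  simp only [sum_mul_zpow_eq_pow_mul_logTaylor z _ _ hk]
  rw [show 1 + (k : ℂ) + z = z + k + 1 by ring]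

lemma summable_goodSummand : Summable (goodSummand j z) := by
  simp only [funext (goodSummand_eq_neg_binomialTransform j z), binomialTransform_apply]
  exact (summable_sum fun r _ => (summable_pow_mul_log_sub_logTaylor z r).mul_left _).neg

-- The transform of order `j + 1` of `r ↦ (-z) ^ r` vanishes, being `(-z + z) ^ (j + 1)`.
lemma binomialTransform_neg_pow_succ_div :
    binomialTransform j z (fun r => (-z) ^ (r + 1) / ((r : ℂ) + 1))
      = -(z ^ (j + 1) / ((j : ℂ) + 1)) := by
  rw [binomialTransform_succ_div j z fun r => (-z) ^ r, binomialTransform_pow]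
  simp [neg_div]

lemma pow_mul_logTaylor_add_two (r : ℕ) {w : ℂ} (hw : w ≠ 0) :
    w ^ r * Complex.logTaylor (r + 2) (z / w)
      = (logTaylorHom z r).eval w - (-z) ^ (r + 1) / ((r : ℂ) + 1) * w⁻¹ := by
  have hr : (r : ℂ) + 1 ≠ 0 := r.cast_add_one_ne_zero
  rw [eval_logTaylorHom z r hw, Complex.logTaylor_succ (r + 1), Pi.add_apply, div_pow, neg_pow z]
  push_cast
  field_simp
  ring

/-- The binomial transform of the homogenised Taylor polynomials of `log`. -/
def binomialLogTaylor : ℂ[X] :=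
  ∑ r ∈ Finset.range (j + 1), C ((j.choose r : ℂ) * z ^ (j - r)) * logTaylorHom z r

lemma eval_binomialLogTaylor (w : ℂ) :
    (binomialLogTaylor j z).eval w
      = binomialTransform j z fun r => (logTaylorHom z r).eval w := by
  simp [binomialLogTaylor, binomialTransform_apply, eval_finsetSum]

variable {z} in
lemma goodSummand_eq_add_binomialLogTaylor (hz : -1 < z.re) (k : ℕ) :
    goodSummand j z k = -((z + 1 + k) ^ j * Complex.log (z + 1 + k))
      + binomialTransform j z (fun r => (1 + (k : ℂ)) ^ r * Complex.log (1 + k))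
      + (binomialLogTaylor j z).eval (1 + (k : ℂ))
      + z ^ (j + 1) / ((j : ℂ) + 1) * ((k : ℂ) + 1)⁻¹ := by
  have hk : 1 + (k : ℂ) ≠ 0 := add_natCast_ne_zero_of_re_pos (by simp) k
  rw [goodSummand_eq_neg_binomialTransform, log_one_add_div_one_add_natCast hz]
  simp only [mul_sub, pow_mul_logTaylor_add_two z _ hk]
  simp only [← Pi.sub_def, map_sub, binomialTransform_mul_const, binomialTransform_pow,
    binomialTransform_neg_pow_succ_div, eval_binomialLogTaylor]
  ring

/-- The Taylor polynomials of `log` weighted as in the addition formula for `B_{j+1}`; its value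
at `1` is the last term of `Q_j(z)`. -/
def bernoulliLogTaylor : ℂ[X] :=
  C (1 / ((j : ℂ) + 1)) * ∑ r ∈ Finset.Icc 1 (j + 1),
    C (((j + 1).choose r : ℂ) * BPC (j + 1 - r) z) * logTaylorHom z r

lemma eval_bernoulliLogTaylor {w : ℂ} (hw : w ≠ 0) :
    (bernoulliLogTaylor j z).eval w = 1 / ((j : ℂ) + 1) * ∑ r ∈ Finset.range (j + 2),
      ((j + 1).choose r : ℂ) * BPC (j + 1 - r) z * (w ^ r * Complex.logTaylor (r + 1) (z / w)) := by
  rw [Finset.sum_range_eq_add_Ico _ (Nat.succ_pos _)]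
  simp [bernoulliLogTaylor, eval_finsetSum, eval_logTaylorHom z _ hw, Complex.logTaylor,
    Finset.Ico_add_one_right_eq_Icc]

lemma tendsto_BPC_mul_log_sub_bernoulliLogTaylor :
    Tendsto (fun N : ℕ => BPC (j + 1) (z + 1 + N) / ((j : ℂ) + 1) * Complex.log (1 + z / (1 + N))
      - (bernoulliLogTaylor j z).eval (1 + (N : ℂ))) atTop (𝓝 0) := by
  have hlimit := (tendsto_finsetSum (Finset.range (j + 2)) fun r _ =>
    (tendsto_pow_mul_log_sub_logTaylor z r).const_mul
      (((j + 1).choose r : ℂ) * BPC (j + 1 - r) z)).const_mul (1 / ((j : ℂ) + 1))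
  simp only [mul_zero, Finset.sum_const_zero] at hlimit
  refine hlimit.congr fun N => ?_
  have hN : 1 + (N : ℂ) ≠ 0 := add_natCast_ne_zero_of_re_pos (by simp) N
  rw [eval_bernoulliLogTaylor j z hN, add_assoc z, BPC_add, one_div_mul_eq_div,
    one_div_mul_eq_div, div_mul_eq_mul_div, ← sub_div, Finset.sum_mul, ← Finset.sum_sub_distrib]
  congr 1
  exact Finset.sum_congr rfl fun r _ => by ring

variable {z} in
lemma logPowerSumApprox_sub_binomialTransform (hz : -1 < z.re) (N : ℕ) :
    logPowerSumApprox j (z + 1 + N)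
        - binomialTransform j z (fun r => logPowerSumApprox r (1 + N))
      = Pj j (z + 1 + N) - binomialTransform j z (fun r => Pj r (1 + N))
        + BPC (j + 1) (z + 1 + N) / ((j : ℂ) + 1) * Complex.log (1 + z / (1 + N))
        + z ^ (j + 1) / ((j : ℂ) + 1) * Complex.log (1 + N) := by
  have hBPC : binomialTransform j z (fun r => BPC (r + 1) (1 + N) / ((r : ℂ) + 1))
      = (BPC (j + 1) (z + 1 + N) - z ^ (j + 1)) / ((j : ℂ) + 1) := by
    rw [binomialTransform_succ_div j z fun r => BPC r (1 + N), binomialTransform_BPC,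
      show 1 + (N : ℂ) + z = z + 1 + N by ring]
    simp [BPC]
  simp only [logPowerSumApprox]
  rw [← Pi.add_def, map_add, binomialTransform_mul_const, hBPC, log_one_add_div_one_add_natCast hz]
  ring

/-- What remains of the `N`-th approximation to the good representation once all logarithms have
been replaced by their Taylor polynomials: a polynomial in `N` starting at `Q_j(z)`. -/
def polynomialPart (N : ℕ) : ℂ :=
  Pj j (z + 1 + N) - binomialTransform j z (fun r => Pj r (1 + N))
    + (bernoulliLogTaylor j z).eval (1 + (N : ℂ))
    - ∑ k ∈ Finset.range N, (binomialLogTaylor j z).eval (1 + (k : ℂ))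

lemma polynomialPart_zero : polynomialPart j z 0 = Qj j z := by
  have hflip : binomialTransform j z (fun r => Pj r 1)
      = ∑ r ∈ Finset.range (j + 1), (j.choose r : ℂ) * z ^ r * Pj (j - r) 1 := by
    rw [binomialTransform_apply, ← Finset.sum_flip]
    refine Finset.sum_congr rfl fun r hr => ?_
    have hrj := Finset.mem_range_succ_iff.1 hr
    rw [Nat.choose_symm hrj, Nat.sub_sub_self hrj]
  simp [polynomialPart, Qj, hflip, bernoulliLogTaylor, logTaylorHom, eval_finsetSum]

/-- `P_j` as an element of `ℂ[X]`. -/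
def PjPolynomial : ℂ[X] :=
  ∑ r ∈ Finset.range (j + 2), C (BC r / r.factorial * (phiJR j r : ℂ)) * X ^ (j + 1 - r)

lemma eval_PjPolynomial (w : ℂ) : (PjPolynomial j).eval w = Pj j w := by
  simp [PjPolynomial, Pj, eval_finsetSum]

lemma exists_polynomial_eval_eq_polynomialPart :
    ∃ p : ℂ[X], ∀ N : ℕ, polynomialPart j z N = p.eval (N : ℂ) := by
  obtain ⟨q, hq⟩ := exists_polynomial_eval_eq_sum_range ((binomialLogTaylor j z).comp (1 + X))
  simp only [eval_comp, eval_add, eval_one, eval_X] at hq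
  refine ⟨(PjPolynomial j).comp (C (z + 1) + X)
    - ∑ r ∈ Finset.range (j + 1), C ((j.choose r : ℂ) * z ^ (j - r))
      * (PjPolynomial r).comp (1 + X)
    + (bernoulliLogTaylor j z).comp (1 + X) - q, fun N => ?_⟩
  simp only [polynomialPart, hq, binomialTransform_apply, ← eval_PjPolynomial, eval_add, eval_sub,
    eval_finsetSum, eval_mul, eval_comp, eval_C, eval_one, eval_X]

lemma tendsto_sum_inv_sub_log :
    Tendsto (fun N : ℕ => ∑ k ∈ Finset.range N, ((k : ℂ) + 1)⁻¹ - Complex.log (1 + N)) atTop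
      (𝓝 (Real.eulerMascheroniConstant : ℂ)) := by
  refine ((Complex.continuous_ofReal.tendsto _).comp
    Real.tendsto_harmonic_sub_log_add_one).congr fun N => ?_
  have hlog : Complex.log (1 + N) = (Real.log (N + 1) : ℂ) := by
    rw [Complex.ofReal_log (by positivity)]
    push_cast
    rw [add_comm]
  simp [harmonic, hlog]

variable {z} in
lemma polynomialPart_eq_sub_add (hz : -1 < z.re) (N : ℕ) :
    polynomialPart j z N =
      logPowerSumApprox j (z + 1 + N)
        - ∑ k ∈ Finset.range N, (z + 1 + k) ^ j * Complex.log (z + 1 + k)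
      - binomialTransform j z (fun r => logPowerSumApprox r (1 + N)
          - ∑ k ∈ Finset.range N, (1 + (k : ℂ)) ^ r * Complex.log (1 + k))
      - ∑ k ∈ Finset.range N, goodSummand j z k
      - (BPC (j + 1) (z + 1 + N) / ((j : ℂ) + 1) * Complex.log (1 + z / (1 + N))
          - (bernoulliLogTaylor j z).eval (1 + (N : ℂ)))
      + z ^ (j + 1) / ((j : ℂ) + 1)
          * (∑ k ∈ Finset.range N, ((k : ℂ) + 1)⁻¹ - Complex.log (1 + N)) := by
  have hsum : binomialTransform j z
        (fun r => ∑ k ∈ Finset.range N, (1 + (k : ℂ)) ^ r * Complex.log (1 + k))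
      = ∑ k ∈ Finset.range N,
          binomialTransform j z fun r => (1 + (k : ℂ)) ^ r * Complex.log (1 + k) := by
    rw [← map_sum]
    congr 1
    ext r
    simp
  have hgood := Finset.sum_congr rfl fun k (_ : k ∈ Finset.range N) =>
    goodSummand_eq_add_binomialLogTaylor j hz k
  simp only [Finset.sum_add_distrib, Finset.sum_neg_distrib, ← Finset.mul_sum, ← hsum] at hgood
  rw [← Pi.sub_def, map_sub, hgood, polynomialPart]
  linear_combination -logPowerSumApprox_sub_binomialTransform j hz N

variable {z} in
lemma tendsto_polynomialPart (hz : -1 < z.re) :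
    Tendsto (polynomialPart j z) atTop (𝓝 (Kj j z + zetaD (-(j : ℂ))
      - binomialTransform j z (fun r => zetaD (-(r : ℂ))) - ∑' k, goodSummand j z k
      + z ^ (j + 1) / ((j : ℂ) + 1) * (Real.eulerMascheroniConstant : ℂ))) := by
  have hK := tendsto_logPowerSumApprox_sub_sum j (x := z + 1) (by simpa using by linarith)
  have hzeta := tendsto_binomialTransform j z fun r =>
    tendsto_logPowerSumApprox_sub_sum r (x := 1) (by simp)
  simp only [deriv_hurwitzZetaEM_one] at hzeta
  have hlimit := (((hK.sub hzeta).sub (summable_goodSummand j z).hasSum.tendsto_sum_nat).sub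
    (tendsto_BPC_mul_log_sub_bernoulliLogTaylor j z)).add
    (tendsto_sum_inv_sub_log.const_mul (z ^ (j + 1) / ((j : ℂ) + 1)))
  rw [Kj_eq_deriv_hurwitzZetaEM_sub j hz, sub_add_cancel]
  simpa only [← polynomialPart_eq_sub_add j hz, sub_zero] using hlimit

variable {z} in
lemma Kj_add_zetaD_eq (hz : -1 < z.re) :
    Kj j z + zetaD (-(j : ℂ)) = Qj j z + binomialTransform j z (fun r => zetaD (-(r : ℂ)))
      - z ^ (j + 1) / ((j : ℂ) + 1) * (Real.eulerMascheroniConstant : ℂ)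
      + ∑' k, goodSummand j z k := by
  obtain ⟨p, hp⟩ := exists_polynomial_eval_eq_polynomialPart j z
  have hlimit := (tendsto_polynomialPart j hz).congr hp
  have hnorm : Tendsto (fun N : ℕ => ‖(N : ℂ)‖) atTop atTop := by
    simpa using tendsto_natCast_atTop_atTop (R := ℝ)
  rw [← polynomialPart_zero, hp, eq_C_of_tendsto_eval hnorm hlimit, eval_C]
  ring

end GoodRepresentation

/-- The "good" representation of `K_j(z)` for `Re z > −1`:
`K_j(z) = Q_j(z) + Σ_{r=0}^{j−1} C(j,r)·z^{j−r}·ζ'(−r) − (z^{j+1}/(j+1))·γ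
+ Σ_{k≥1} [−(z+k)^j·log(1+z/k) + Σ_{r=0}^{j} C(j,r)·z^{j−r}·Σ_{l=1}^{r+1}
((−1)^{l−1} z^l/l)·k^{r−l}]`, the series converging absolutely. -/
theorem Kj_good_representation (j : ℕ) (z : ℂ) (hz : -1 < z.re) :
    Kj j z =
      Qj j z + (∑ r ∈ Finset.range j, (j.choose r : ℂ) * z^(j-r) * zetaD (-(r:ℂ)))
      - z^(j+1) / ((j:ℂ)+1) * (Real.eulerMascheroniConstant : ℂ)
      + ∑' k : ℕ,
          (-((z+(k:ℂ)+1)^j * Complex.log (1 + z/((k:ℂ)+1)))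
            + ∑ r ∈ Finset.range (j+1), (j.choose r : ℂ) * z^(j-r) *
                ∑ l ∈ Finset.Icc 1 (r+1),
                  ((-1:ℂ)^(l-1) * z^l / l) * ((k:ℂ)+1)^((r:ℤ)-l)) ∧
    Summable (fun k : ℕ =>
      ‖-((z+(k:ℂ)+1)^j * Complex.log (1 + z/((k:ℂ)+1)))
        + ∑ r ∈ Finset.range (j+1), (j.choose r : ℂ) * z^(j-r) *
            ∑ l ∈ Finset.Icc 1 (r+1),
              ((-1:ℂ)^(l-1) * z^l / l) * ((k:ℂ)+1)^((r:ℤ)-l)‖) := by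
  change _ = _ + ∑' k, goodSummand j z k ∧ Summable fun k => ‖goodSummand j z k‖
  refine ⟨?_, (summable_goodSummand j z).norm⟩
  have hK := Kj_add_zetaD_eq j hz
  rw [binomialTransform_apply, Finset.sum_range_succ, Nat.choose_self, Nat.sub_self, pow_zero,
    Nat.cast_one, one_mul, one_mul] at hK
  linear_combination hK

end
end
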